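/- arXiv:2205.00128 — 9 statements merged into one kernel-verified Lean document; each statement's English description precedes it below -/
import Mathlib

section
/- For every integer n ≥ 2 and every real λ with −2/√(n+2) < λ < 0, there exist a real number x̂ with −λ < x̂ < (−λ + √(λ² + 4n))/2, a real ŝ > 0, and C¹ functions x, r, θ : [0, ŝ] → ℝ such that: x'(s) = cos θ(s) and r'(s) = sin θ(s) on [0, ŝ]; θ'(s) = ((n−1)/r(s) − r(s))·cos θ(s) + x(s)·sin θ(s) + λ on (0, ŝ]; x(0) = x̂, r(0) = 0, θ(0) = π/2; x(ŝ) = 0, θ(ŝ) = π; r(s) > 0 for s ∈ (0, ŝ]; x(s) > 0 for s ∈ [0, ŝ); θ is strictly increasing on [0, ŝ] (so π/2 ≤ θ(s) ≤ π and cos θ(s) < 0 on (0, ŝ]). -/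
open Real Set

lemma mono_tool {f f' : ℝ → ℝ} {a b : ℝ} (hc : ContinuousOn f (Icc a b))
    (hd : ∀ s ∈ Ioo a b, HasDerivAt f (f' s) s) (hn : ∀ s ∈ Ioo a b, 0 ≤ f' s) :
    MonotoneOn f (Icc a b) := by
  apply monotoneOn_of_deriv_nonneg (convex_Icc a b) hc
  · rw [interior_Icc]
    exact fun s hs => (hd s hs).differentiableAt.differentiableWithinAt
  · rw [interior_Icc]
    intro s hs
    rw [(hd s hs).deriv]
    exact hn s hs

lemma smono_tool {f f' : ℝ → ℝ} {a b : ℝ} (hc : ContinuousOn f (Icc a b))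
    (hd : ∀ s ∈ Ioo a b, HasDerivAt f (f' s) s) (hn : ∀ s ∈ Ioo a b, 0 < f' s) :
    StrictMonoOn f (Icc a b) := by
  apply strictMonoOn_of_deriv_pos (convex_Icc a b) hc
  rw [interior_Icc]
  intro s hs
  rw [(hd s hs).deriv]
  exact hn s hs

/-- A continuous function which is positive at the left end and cannot have a first zero is
positive. -/
lemma pos_of_first {f : ℝ → ℝ} {S : ℝ} (hc : ContinuousOn f (Icc 0 S)) (h0 : 0 < f 0)
    (h : ∀ t, 0 < t → t ≤ S → (∀ s, 0 ≤ s → s < t → 0 < f s) → 0 < f t) :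
    ∀ s ∈ Icc 0 S, 0 < f s := by
  by_contra! hcon
  obtain ⟨s₁, hs₁, hf₁⟩ := hcon
  have hcl : IsClosed (Icc 0 S ∩ f ⁻¹' Iic 0) := hc.preimage_isClosed_of_isClosed isClosed_Icc isClosed_Iic
  have hcomp : IsCompact (Icc 0 S ∩ f ⁻¹' Iic 0) :=
    isCompact_Icc.of_isClosed_subset hcl inter_subset_left
  obtain ⟨t, ht, hmin⟩ := hcomp.exists_isLeast ⟨s₁, hs₁, hf₁⟩
  have ht0 : 0 < t := by
    rcases ht.1.1.lt_or_eq with h1 | h1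
    · exact h1
    · exfalso
      have := ht.2
      rw [← h1] at this
      exact absurd h0 (not_lt.mpr this)
  have := h t ht0 ht.1.2 (fun s hs0 hst => by
    by_contra! hfs
    exact absurd (hmin ⟨⟨hs0, hst.le.trans ht.1.2⟩, hfs⟩) (not_le.mpr hst))
  exact absurd this (not_lt.mpr ht.2)

/-- Solutions of the profile system, with the auxiliary quantities
`c = - cos θ`, `σ = sin θ`, `μ = c / r`, `κ = θ'`. -/
structure PreCore (n : ℕ) (lam m S : ℝ) (x r θ c σ μ κ : ℝ → ℝ) : Prop where
  hS : 0 < S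
  cx : ContinuousOn x (Icc 0 S)
  cr : ContinuousOn r (Icc 0 S)
  cθ : ContinuousOn θ (Icc 0 S)
  cμ : ContinuousOn μ (Icc 0 S)
  dx : ∀ s ∈ Ioo 0 S, HasDerivAt x (-(c s)) s
  dr : ∀ s ∈ Ioo 0 S, HasDerivAt r (σ s) s
  dθ : ∀ s ∈ Ioo 0 S, HasDerivAt θ (κ s) s
  hc : ∀ s, c s = -Real.cos (θ s)
  hσ : ∀ s, σ s = Real.sin (θ s)
  hμ : ∀ s ∈ Icc 0 S, c s = r s * μ s
  hκ : ∀ s, κ s = x s * σ s + r s * c s + lam - ((n : ℝ) - 1) * μ s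
  x0 : x 0 = n * m - lam
  r0 : r 0 = 0
  θ0 : θ 0 = π / 2
  μ0 : μ 0 = m
  rpos : ∀ s ∈ Ioc 0 S, 0 < r s
  θle : ∀ s ∈ Icc 0 S, θ s ≤ π

namespace PreCore
variable {n : ℕ} {lam m S : ℝ} {x r θ c σ μ κ : ℝ → ℝ}

lemma restrict (h : PreCore n lam m S x r θ c σ μ κ) {t : ℝ} (ht0 : 0 < t) (ht : t ≤ S) :
    PreCore n lam m t x r θ c σ μ κ :=
  { hS := ht0
    cx := h.cx.mono (Icc_subset_Icc_right ht)
    cr := h.cr.mono (Icc_subset_Icc_right ht)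
    cθ := h.cθ.mono (Icc_subset_Icc_right ht)
    cμ := h.cμ.mono (Icc_subset_Icc_right ht)
    dx := fun s hs => h.dx s ⟨hs.1, hs.2.trans_le ht⟩
    dr := fun s hs => h.dr s ⟨hs.1, hs.2.trans_le ht⟩
    dθ := fun s hs => h.dθ s ⟨hs.1, hs.2.trans_le ht⟩
    hc := h.hc
    hσ := h.hσ
    hμ := fun s hs => h.hμ s ⟨hs.1, hs.2.trans ht⟩
    hκ := h.hκ
    x0 := h.x0
    r0 := h.r0
    θ0 := h.θ0
    μ0 := h.μ0
    rpos := fun s hs => h.rpos s ⟨hs.1, hs.2.trans ht⟩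
    θle := fun s hs => h.θle s ⟨hs.1, hs.2.trans ht⟩ }

lemma cc (h : PreCore n lam m S x r θ c σ μ κ) : ContinuousOn c (Icc 0 S) := by
  have : c = fun s => -Real.cos (θ s) := funext h.hc
  rw [this]
  exact (Real.continuous_cos.comp_continuousOn h.cθ).neg

lemma cσ (h : PreCore n lam m S x r θ c σ μ κ) : ContinuousOn σ (Icc 0 S) := by
  have : σ = fun s => Real.sin (θ s) := funext h.hσ
  rw [this]
  exact (Real.continuous_sin.comp_continuousOn h.cθ)

lemma cκ (h : PreCore n lam m S x r θ c σ μ κ) : ContinuousOn κ (Icc 0 S) := by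
  have : κ = fun s => x s * σ s + r s * c s + lam - ((n : ℝ) - 1) * μ s := funext h.hκ
  rw [this]
  exact (((h.cx.mul h.cσ).add (h.cr.mul h.cc)).add continuousOn_const).sub
    (continuousOn_const.mul h.cμ)

lemma dc (h : PreCore n lam m S x r θ c σ μ κ) {s : ℝ} (hs : s ∈ Ioo 0 S) :
    HasDerivAt c (σ s * κ s) s := by
  have : c = fun s => -Real.cos (θ s) := funext h.hc
  rw [this, h.hσ]
  exact (h.dθ s hs).cos.neg.congr_deriv (by ring)

lemma dσ (h : PreCore n lam m S x r θ c σ μ κ) {s : ℝ} (hs : s ∈ Ioo 0 S) :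
    HasDerivAt σ (-(c s) * κ s) s := by
  have : σ = fun s => Real.sin (θ s) := funext h.hσ
  rw [this, h.hc]
  exact (h.dθ s hs).sin.congr_deriv (by ring)

lemma sq (h : PreCore n lam m S x r θ c σ μ κ) (s : ℝ) : c s ^ 2 + σ s ^ 2 = 1 := by
  rw [h.hc, h.hσ]
  nlinarith [Real.sin_sq_add_cos_sq (θ s)]

lemma rnn (h : PreCore n lam m S x r θ c σ μ κ) {s : ℝ} (hs : s ∈ Icc 0 S) : 0 ≤ r s := by
  rcases hs.1.lt_or_eq with h1 | h1
  · exact (h.rpos s ⟨h1, hs.2⟩).le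
  · rw [← h1, h.r0]

lemma dμ (h : PreCore n lam m S x r θ c σ μ κ) {s : ℝ} (hs : s ∈ Ioo 0 S) :
    HasDerivAt μ (σ s / r s * (κ s - μ s)) s := by
  have hr := h.rpos s ⟨hs.1, hs.2.le⟩
  have h1 : HasDerivAt (fun s => c s / r s) _ s := (h.dc hs).div (h.dr s hs) hr.ne'
  have h2 : μ =ᶠ[nhds s] fun s => c s / r s := by
    filter_upwards [Ioo_mem_nhds hs.1 hs.2] with t ht
    rw [h.hμ t ⟨ht.1.le, ht.2.le⟩, mul_div_cancel_left₀ _ (h.rpos t ⟨ht.1, ht.2.le⟩).ne']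
  refine (h1.congr_of_eventuallyEq h2).congr_deriv ?_
  rw [h.hμ s ⟨hs.1.le, hs.2.le⟩]
  field_simp

lemma dκ (h : PreCore n lam m S x r θ c σ μ κ) {s : ℝ} (hs : s ∈ Ioo 0 S) :
    HasDerivAt κ (κ s * (r s * σ s - x s * c s)
      - ((n : ℝ) - 1) * (σ s / r s * (κ s - μ s))) s := by
  have : κ = fun s => x s * σ s + r s * c s + lam - ((n : ℝ) - 1) * μ s := funext h.hκ
  have h1 : HasDerivAt (fun s => x s * σ s + r s * c s + lam - ((n : ℝ) - 1) * μ s) _ s :=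
    ((((h.dx s hs).mul (h.dσ hs)).add ((h.dr s hs).mul (h.dc hs))).add_const lam).sub
    ((h.dμ hs).const_mul ((n : ℝ) - 1))
  rw [← this] at h1
  refine h1.congr_deriv ?_
  ring

lemma σ0 (h : PreCore n lam m S x r θ c σ μ κ) : σ 0 = 1 := by
  rw [h.hσ, h.θ0, Real.sin_pi_div_two]

lemma c0 (h : PreCore n lam m S x r θ c σ μ κ) : c 0 = 0 := by
  rw [h.hc, h.θ0, Real.cos_pi_div_two, neg_zero]

lemma κ0 (h : PreCore n lam m S x r θ c σ μ κ) : κ 0 = m := by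
  rw [h.hκ, h.x0, h.r0, h.μ0, h.σ0]
  ring

/-- Convexity is preserved. -/
lemma κpos (h : PreCore n lam m S x r θ c σ μ κ) (hn : 2 ≤ n) (hm : 0 < m) :
    ∀ s ∈ Icc 0 S, 0 < κ s := by
  have hn' : (1 : ℝ) ≤ n := by exact_mod_cast (by omega : 1 ≤ n)
  apply pos_of_first h.cκ (by rw [h.κ0]; exact hm)
  intro t ht0 htS hpos
  have hmono : StrictMonoOn θ (Icc 0 t) := by
    apply smono_tool (h.cθ.mono (Icc_subset_Icc_right htS))
      (fun s hs => h.dθ s ⟨hs.1, hs.2.trans_le htS⟩)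
    exact fun s hs => hpos s hs.1.le hs.2
  have hθ : ∀ s ∈ Ioc 0 t, π / 2 < θ s := by
    intro s hs
    rw [← h.θ0]
    exact hmono ⟨le_rfl, ht0.le⟩ ⟨hs.1.le, hs.2⟩ hs.1
  have hσ : ∀ s ∈ Ioc 0 t, 0 ≤ σ s := by
    intro s hs
    rw [h.hσ]
    apply Real.sin_nonneg_of_nonneg_of_le_pi
    · linarith [hθ s hs, Real.pi_pos]
    · exact h.θle s ⟨hs.1.le, hs.2.trans htS⟩
  have hc : ∀ s ∈ Ioc 0 t, 0 < c s := by
    intro s hs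
    rw [h.hc, neg_pos]
    apply Real.cos_neg_of_pi_div_two_lt_of_lt (hθ s hs)
    linarith [h.θle s ⟨hs.1.le, hs.2.trans htS⟩, Real.pi_pos]
  -- lower bound for the coefficient
  have hcg : ContinuousOn (fun s => r s * σ s - x s * c s - ((n : ℝ) - 1) * (σ s / r s))
      (Icc (t / 2) t) := by
    have hsub : Icc (t / 2) t ⊆ Icc 0 S := Icc_subset_Icc (by linarith) htS
    refine (((h.cr.mul h.cσ).sub (h.cx.mul h.cc)).mono hsub).sub
      (continuousOn_const.mul ((h.cσ.mono hsub).div (h.cr.mono hsub) ?_))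
    intro s hs
    exact (h.rpos s ⟨by linarith [hs.1], hs.2.trans htS⟩).ne'
  obtain ⟨G, hG⟩ := (isCompact_Icc.image_of_continuousOn hcg).bddBelow
  have hG' : ∀ s ∈ Icc (t / 2) t, G ≤ r s * σ s - x s * c s - ((n : ℝ) - 1) * (σ s / r s) :=
    fun s hs => hG ⟨s, hs, rfl⟩
  have hm2 : MonotoneOn (fun s => κ s * Real.exp (-G * s)) (Icc (t / 2) t) := by
    apply mono_tool (f' := fun s => (κ s * (r s * σ s - x s * c s)
      - ((n : ℝ) - 1) * (σ s / r s * (κ s - μ s))) * Real.exp (-G * s)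
        + κ s * (Real.exp (-G * s) * (-G * 1)))
    · exact (h.cκ.mono (Icc_subset_Icc (by linarith) htS)).mul (by fun_prop)
    · intro s hs
      exact (h.dκ ⟨by linarith [hs.1], hs.2.trans_le htS⟩).mul
        (((hasDerivAt_id s).const_mul (-G)).exp)
    · intro s hs
      have hs' : s ∈ Ioc 0 t := ⟨by linarith [hs.1], hs.2.le⟩
      have hr := h.rpos s ⟨hs'.1, hs'.2.trans htS⟩
      have hμ : 0 < μ s := by
        have := hc s hs'
        rw [h.hμ s ⟨hs'.1.le, hs'.2.trans htS⟩] at this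
        exact pos_of_mul_pos_right this hr.le
      have hk := hpos s hs'.1.le hs.2
      have e : (κ s * (r s * σ s - x s * c s)
        - ((n : ℝ) - 1) * (σ s / r s * (κ s - μ s))) * Real.exp (-G * s)
        + κ s * (Real.exp (-G * s) * (-G * 1)) = Real.exp (-G * s) *
         (κ s * ((r s * σ s - x s * c s - ((n : ℝ) - 1) * (σ s / r s)) - G)
          + ((n : ℝ) - 1) * (σ s / r s) * μ s) := by ring
      simp only [e]
      apply mul_nonneg (Real.exp_pos _).le
      apply add_nonneg
      · exact mul_nonneg hk.le (by linarith [hG' s ⟨hs.1.le, hs.2.le⟩])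
      · exact mul_nonneg (mul_nonneg (by linarith) (div_nonneg (hσ s hs') hr.le)) hμ.le
  have := hm2 ⟨le_rfl, by linarith⟩ ⟨by linarith, le_rfl⟩ (by linarith : t / 2 ≤ t)
  simp only at this
  have h2 : 0 < κ (t / 2) * Real.exp (-G * (t / 2)) :=
    mul_pos (hpos _ (by linarith) (by linarith)) (Real.exp_pos _)
  exact pos_of_mul_pos_left (h2.trans_le this) (Real.exp_pos _).le

lemma θsmono (h : PreCore n lam m S x r θ c σ μ κ) (hn : 2 ≤ n) (hm : 0 < m) :
    StrictMonoOn θ (Icc 0 S) :=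
  smono_tool h.cθ h.dθ (fun s hs => h.κpos hn hm s ⟨hs.1.le, hs.2.le⟩)

lemma θgt (h : PreCore n lam m S x r θ c σ μ κ) (hn : 2 ≤ n) (hm : 0 < m) :
    ∀ s ∈ Ioc 0 S, π / 2 < θ s := by
  intro s hs
  rw [← h.θ0]
  exact h.θsmono hn hm ⟨le_rfl, h.hS.le⟩ ⟨hs.1.le, hs.2⟩ hs.1

lemma cpos (h : PreCore n lam m S x r θ c σ μ κ) (hn : 2 ≤ n) (hm : 0 < m) :
    ∀ s ∈ Ioc 0 S, 0 < c s := by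
  intro s hs
  rw [h.hc, neg_pos]
  apply Real.cos_neg_of_pi_div_two_lt_of_lt (h.θgt hn hm s hs)
  linarith [h.θle s ⟨hs.1.le, hs.2⟩, Real.pi_pos]

lemma cnn (h : PreCore n lam m S x r θ c σ μ κ) (hn : 2 ≤ n) (hm : 0 < m) :
    ∀ s ∈ Icc 0 S, 0 ≤ c s := by
  intro s hs
  rcases hs.1.lt_or_eq with h1 | h1
  · exact (h.cpos hn hm s ⟨h1, hs.2⟩).le
  · rw [← h1, h.c0]

lemma σnn (h : PreCore n lam m S x r θ c σ μ κ) (hn : 2 ≤ n) (hm : 0 < m) :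
    ∀ s ∈ Icc 0 S, 0 ≤ σ s := by
  intro s hs
  rcases hs.1.lt_or_eq with h1 | h1
  · rw [h.hσ]
    apply Real.sin_nonneg_of_nonneg_of_le_pi
    · linarith [h.θgt hn hm s ⟨h1, hs.2⟩, Real.pi_pos]
    · exact h.θle s hs
  · rw [← h1, h.σ0]
    exact zero_le_one

lemma σpos (h : PreCore n lam m S x r θ c σ μ κ) (hn : 2 ≤ n) (hm : 0 < m) :
    ∀ s ∈ Ioo 0 S, 0 < σ s := by
  intro s hs
  rw [h.hσ]
  apply Real.sin_pos_of_pos_of_lt_pi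
  · linarith [h.θgt hn hm s ⟨hs.1, hs.2.le⟩, Real.pi_pos]
  · exact (h.θsmono hn hm ⟨hs.1.le, hs.2.le⟩ ⟨h.hS.le, le_rfl⟩ hs.2).trans_le
      (h.θle S ⟨h.hS.le, le_rfl⟩)

lemma μpos (h : PreCore n lam m S x r θ c σ μ κ) (hn : 2 ≤ n) (hm : 0 < m) :
    ∀ s ∈ Icc 0 S, 0 < μ s := by
  intro s hs
  rcases hs.1.lt_or_eq with h1 | h1
  · have := h.cpos hn hm s ⟨h1, hs.2⟩
    rw [h.hμ s hs] at this
    exact pos_of_mul_pos_right this (h.rnn hs)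
  · rw [← h1, h.μ0]
    exact hm

lemma rmono (h : PreCore n lam m S x r θ c σ μ κ) (hn : 2 ≤ n) (hm : 0 < m) :
    MonotoneOn r (Icc 0 S) :=
  mono_tool h.cr h.dr (fun s hs => h.σnn hn hm s ⟨hs.1.le, hs.2.le⟩)

lemma xanti (h : PreCore n lam m S x r θ c σ μ κ) (hn : 2 ≤ n) (hm : 0 < m) :
    StrictAntiOn x (Icc 0 S) := by
  have := smono_tool (f := fun s => -x s) (f' := fun s => c s) h.cx.neg
    (fun s hs => (h.dx s hs).neg.congr_deriv (neg_neg _))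
    (fun s hs => h.cpos hn hm s ⟨hs.1, hs.2.le⟩)
  intro a ha b hb hab
  have := this ha hb hab
  simp only at this
  linarith

lemma cmono (h : PreCore n lam m S x r θ c σ μ κ) (hn : 2 ≤ n) (hm : 0 < m) :
    MonotoneOn c (Icc 0 S) :=
  mono_tool h.cc (fun _ hs => h.dc hs) (fun s hs => mul_nonneg
    (h.σnn hn hm s ⟨hs.1.le, hs.2.le⟩) (h.κpos hn hm s ⟨hs.1.le, hs.2.le⟩).le)

/-- `q = σ - x μ`, with `r q = ⟨X, T⟩`. -/
lemma dq (h : PreCore n lam m S x r θ c σ μ κ) {s : ℝ} (hs : s ∈ Ioo 0 S) :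
    HasDerivAt (fun s => σ s - x s * μ s)
      (-((x s * σ s + r s * c s) * (κ s - μ s) / r s)) s := by
  have hr := h.rpos s ⟨hs.1, hs.2.le⟩
  refine ((h.dσ hs).sub ((h.dx s hs).mul (h.dμ hs))).congr_deriv ?_
  have e := h.hμ s ⟨hs.1.le, hs.2.le⟩
  rw [e]
  field_simp
  ring

lemma cq (h : PreCore n lam m S x r θ c σ μ κ) :
    ContinuousOn (fun s => σ s - x s * μ s) (Icc 0 S) := h.cσ.sub (h.cx.mul h.cμ)

lemma dD (h : PreCore n lam m S x r θ c σ μ κ) {s : ℝ} (hs : s ∈ Ioo 0 S) :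
    HasDerivAt (fun s => r s ^ n * (κ s - μ s))
      (r s ^ (n + 1) * κ s * (σ s - x s * μ s)) s := by
  have hr := h.rpos s ⟨hs.1, hs.2.le⟩
  refine (((h.dr s hs).pow n).mul ((h.dκ hs).sub (h.dμ hs))).congr_deriv ?_
  have e := h.hμ s ⟨hs.1.le, hs.2.le⟩
  rcases n with _ | k
  · simp only [pow_zero, Nat.cast_zero, zero_mul, zero_add, pow_one, Pi.sub_apply, Pi.one_apply]
    rw [e]
    field_simp
    ring
  · simp only [Nat.add_sub_cancel, Pi.sub_apply, Pi.pow_apply]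
    rw [e]
    push_cast
    field_simp
    ring

lemma cD (h : PreCore n lam m S x r θ c σ μ κ) :
    ContinuousOn (fun s => r s ^ n * (κ s - μ s)) (Icc 0 S) := (h.cr.pow n).mul (h.cκ.sub h.cμ)

/-- If `q ≥ 0` up to `S`, then `κ ≥ μ ≥ m`. -/
lemma dnn (h : PreCore n lam m S x r θ c σ μ κ) (hn : 2 ≤ n) (hm : 0 < m)
    (hq : ∀ s ∈ Ioo 0 S, 0 ≤ σ s - x s * μ s) :
    (∀ s ∈ Icc 0 S, μ s ≤ κ s) ∧ (∀ s ∈ Icc 0 S, m ≤ μ s) := by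
  have hD : MonotoneOn (fun s => r s ^ n * (κ s - μ s)) (Icc 0 S) := by
    apply mono_tool h.cD (fun _ hs => h.dD hs)
    intro s hs
    exact mul_nonneg (mul_nonneg (pow_nonneg (h.rnn ⟨hs.1.le, hs.2.le⟩) _)
      (h.κpos hn hm s ⟨hs.1.le, hs.2.le⟩).le) (hq s hs)
  have h1 : ∀ s ∈ Icc 0 S, μ s ≤ κ s := by
    intro s hs
    rcases hs.1.lt_or_eq with h1 | h1
    · have := hD ⟨le_rfl, h.hS.le⟩ hs hs.1
      simp only [h.r0, zero_pow (by omega : n ≠ 0), zero_mul] at this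
      have := nonneg_of_mul_nonneg_right this (pow_pos (h.rpos s ⟨h1, hs.2⟩) n)
      linarith
    · rw [← h1, h.κ0, h.μ0]
  refine ⟨h1, ?_⟩
  have hμ : MonotoneOn μ (Icc 0 S) := by
    apply mono_tool h.cμ (fun _ hs => h.dμ hs)
    intro s hs
    exact mul_nonneg (div_nonneg (h.σnn hn hm s ⟨hs.1.le, hs.2.le⟩) (h.rnn ⟨hs.1.le, hs.2.le⟩))
      (by linarith [h1 s ⟨hs.1.le, hs.2.le⟩])
  intro s hs
  rw [← h.μ0]
  exact hμ ⟨le_rfl, h.hS.le⟩ hs hs.1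

end PreCore

namespace PreCore
variable {n : ℕ} {lam m S : ℝ} {x r θ c σ μ κ : ℝ → ℝ}

lemma q_pos (h : PreCore n lam m S x r θ c σ μ κ) (hn : 2 ≤ n) (hm : 0 < m)
    (hx : ∀ s ∈ Icc 0 S, 0 ≤ x s) (h1 : m * (n * m - lam) < 1)
    (h2 : 1 / m + lam - ((n : ℝ) - 1) * m < ((n : ℝ) + 2) * m ^ 3) :
    ∀ s ∈ Icc 0 S, 0 < σ s - x s * μ s := by
  have hn' : (1 : ℝ) ≤ n := by exact_mod_cast (by omega : 1 ≤ n)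
  apply pos_of_first h.cq (by rw [h.σ0, h.x0, h.μ0]; linarith)
  intro t ht0 htS hpos
  have h' := h.restrict ht0 htS
  obtain ⟨hd, hmμ⟩ := h'.dnn hn hm (fun s hs => (hpos s hs.1.le hs.2).le)
  have hV : StrictMonoOn (fun s => m ^ 2 * r s ^ (n + 2) * (σ s - x s * μ s)
      - x s * (r s ^ n * (κ s - μ s))) (Icc 0 t) := by
    apply smono_tool (f' := fun s => (m ^ 2 * (((n + 2 : ℕ) : ℝ) * r s ^ (n + 1) * σ s))
        * (σ s - x s * μ s) + m ^ 2 * r s ^ (n + 2) *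
          (-((x s * σ s + r s * c s) * (κ s - μ s) / r s))
      - (-(c s) * (r s ^ n * (κ s - μ s)) +
         x s * (r s ^ (n + 1) * κ s * (σ s - x s * μ s))))
    · exact ((continuousOn_const.mul (h'.cr.pow _)).mul h'.cq).sub (h'.cx.mul h'.cD)
    · intro s hs
      exact ((((h'.dr s hs).pow (n + 2)).const_mul (m ^ 2)).mul (h'.dq hs)).sub
        ((h'.dx s hs).mul (h'.dD hs))
    · intro s hs
      have hs' : s ∈ Icc 0 t := ⟨hs.1.le, hs.2.le⟩
      have hq := hpos s hs.1.le hs.2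
      have hr := h'.rpos s ⟨hs.1, hs.2.le⟩
      have hxs : 0 < x s := (hx t ⟨ht0.le, htS⟩).trans_lt
        (h'.xanti hn hm hs' ⟨ht0.le, le_rfl⟩ hs.2)
      have hσ := h'.σnn hn hm s hs'
      have hcn := h'.cnn hn hm s hs'
      have hNn : 0 ≤ x s * σ s + r s * c s := by positivity
      have hNμ : (x s * σ s + r s * c s) * μ s ≤ 1 := by
        have e : (x s * σ s + r s * c s) * μ s = 1 - σ s * (σ s - x s * μ s) := by
          have := h'.sq s
          have e := h'.hμ s hs'
          calc (x s * σ s + r s * c s) * μ s = x s * σ s * μ s + c s * (r s * μ s) := by ring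
            _ = x s * σ s * μ s + c s ^ 2 := by rw [← e]; ring
            _ = _ := by rw [show c s ^ 2 = 1 - σ s ^ 2 by linarith]; ring
        rw [e]
        linarith [mul_nonneg hσ hq.le]
      have hμs := hmμ s hs'
      have hNm : (x s * σ s + r s * c s) * m ≤ 1 :=
        (mul_le_mul_of_nonneg_left hμs hNn).trans hNμ
      have hN : x s * σ s + r s * c s ≤ 1 / m := by rwa [le_div_iff₀ hm]
      have hκ : κ s < ((n : ℝ) + 2) * m ^ 3 := by
        rw [h'.hκ]
        nlinarith [mul_le_mul_of_nonneg_left hμs (by linarith : (0 : ℝ) ≤ n - 1)]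
      have e : (m ^ 2 * (((n + 2 : ℕ) : ℝ) * r s ^ (n + 1) * σ s))
        * (σ s - x s * μ s) + m ^ 2 * r s ^ (n + 2) *
          (-((x s * σ s + r s * c s) * (κ s - μ s) / r s))
        - (-(c s) * (r s ^ n * (κ s - μ s)) +
         x s * (r s ^ (n + 1) * κ s * (σ s - x s * μ s)))
         = (σ s - x s * μ s) * r s ^ (n + 1) * (m ^ 2 * (n + 2) * σ s - κ s * x s)
          + (r s ^ n * (κ s - μ s)) * (c s - r s * (m ^ 2 * (x s * σ s + r s * c s))) := by
        push_cast
        field_simp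
        ring
      simp only [e]
      apply add_pos_of_pos_of_nonneg
      · refine mul_pos (mul_pos hq (pow_pos hr _)) ?_
        have a1 : m ^ 2 * (n + 2) * (x s * μ s) ≤ m ^ 2 * (n + 2) * σ s :=
          mul_le_mul_of_nonneg_left (by linarith) (by positivity)
        have a2 : m ^ 2 * (n + 2) * (x s * m) ≤ m ^ 2 * (n + 2) * (x s * μ s) :=
          mul_le_mul_of_nonneg_left (mul_le_mul_of_nonneg_left hμs hxs.le) (by positivity)
        have a3 := mul_lt_mul_of_pos_right hκ hxs
        nlinarith
      · refine mul_nonneg (mul_nonneg (pow_nonneg hr.le _) (by linarith [hd s hs'])) ?_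
        rw [h'.hμ s hs']
        have : m ^ 2 * (x s * σ s + r s * (r s * μ s)) ≤ μ s := by
          rw [h'.hμ s hs'] at hNm
          nlinarith
        nlinarith
  have hVt := hV ⟨le_rfl, ht0.le⟩ ⟨ht0.le, le_rfl⟩ ht0
  simp only [h.r0, zero_pow (by omega : n + 2 ≠ 0), zero_pow (by omega : n ≠ 0), zero_mul,
    mul_zero, sub_zero] at hVt
  have hr := h.rpos t ⟨ht0, htS⟩
  have hD : 0 ≤ x t * (r t ^ n * (κ t - μ t)) :=
    mul_nonneg (hx t ⟨ht0.le, htS⟩) (mul_nonneg (pow_nonneg hr.le _)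
      (by linarith [hd t ⟨ht0.le, le_rfl⟩]))
  have : 0 < m ^ 2 * r t ^ (n + 2) * (σ t - x t * μ t) := by linarith
  exact pos_of_mul_pos_right this (by positivity)

set_option maxHeartbeats 1000000 in
lemma A_core (h : PreCore n lam m S x r θ c σ μ κ) (hn : 2 ≤ n) (hm : 0 < m)
    (hx : ∀ s ∈ Icc 0 S, 0 ≤ x s) {b X β r1 r3 η : ℝ} (hb : 0 < b) (hlam : lam = -b)
    (hX : n * m + b ≤ X) (hβ1 : 2 * b ≤ β) (hβ2 : 2 * π ≤ b * β)
    (hr1 : 2 * β + 1 + X + n ≤ r1) (hr3 : r3 = r1 + n * (2 * β * r1 * Real.exp (r1 ^ 2 / 2)))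
    (hη1 : n * m * r3 * Real.exp (r3 ^ 2 / 2) ≤ η) (hη2 : η ≤ 1 / 2) (hη3 : 8 * (η * r3) ≤ b)
    (hη4 : X * (n * m * Real.exp (r3 ^ 2 / 2)) ≤ 1 / 4) : 0 < x S := by
  have hn' : (2 : ℝ) ≤ n := by exact_mod_cast hn
  have hβ0 : 0 < β := by linarith
  have hnm : 0 < n * m := by positivity
  have hX0 : 0 < X := by linarith
  have hr1p : 1 ≤ r1 := by linarith
  have hr13 : r1 ≤ r3 := by
    rw [hr3]
    have : 0 ≤ n * (2 * β * r1 * Real.exp (r1 ^ 2 / 2)) := by positivity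
    linarith
  have hη0 : 0 ≤ η := by
    refine le_trans ?_ hη1
    have : 0 ≤ r3 := by linarith
    positivity
  have hx0 : x 0 = n * m + b := by rw [h.x0, hlam]; ring
  have hxle : ∀ s ∈ Icc 0 S, x s ≤ n * m + b := by
    intro s hs
    rw [← hx0]
    exact (h.xanti hn hm).antitoneOn ⟨le_rfl, h.hS.le⟩ hs hs.1
  have hσle : ∀ s, σ s ≤ 1 := fun s => by rw [h.hσ]; exact Real.sin_le_one _
  -- step 1
  have step1 : ∀ s ∈ Icc 0 S, c s ≤ n * m * r s * Real.exp (r s ^ 2 / 2) := by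
    have hmon : MonotoneOn (fun s => n * m * r s - c s * Real.exp (-(r s ^ 2 / 2))) (Icc 0 S) := by
      apply mono_tool (f' := fun s => n * m * σ s - (σ s * κ s * Real.exp (-(r s ^ 2 / 2))
        + c s * (Real.exp (-(r s ^ 2 / 2)) * (-(((2 : ℕ) : ℝ) * r s ^ (2 - 1) * σ s / 2)))))
      · refine (continuousOn_const.mul h.cr).sub (h.cc.mul ?_)
        exact Real.continuous_exp.comp_continuousOn ((h.cr.pow 2).div_const 2).neg
      · intro s hs
        exact ((h.dr s hs).const_mul (n * m)).sub
          ((h.dc hs).mul ((((h.dr s hs).pow 2).div_const 2).neg.exp))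
      · intro s hs
        have hs' : s ∈ Icc 0 S := ⟨hs.1.le, hs.2.le⟩
        have hk : κ s - r s * c s ≤ n * m := by
          rw [h.hκ, hlam]
          have a1 : x s * σ s ≤ x s * 1 := mul_le_mul_of_nonneg_left (hσle s) (hx s hs')
          have a2 := hxle s hs'
          have a3 : 0 ≤ ((n : ℝ) - 1) * μ s :=
            mul_nonneg (by linarith) (h.μpos hn hm s hs').le
          linarith
        have he1 : Real.exp (-(r s ^ 2 / 2)) ≤ 1 := Real.exp_le_one_iff.mpr (by
          have := sq_nonneg (r s); linarith)
        have he0 := Real.exp_pos (-(r s ^ 2 / 2))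
        have e : n * m * σ s - (σ s * κ s * Real.exp (-(r s ^ 2 / 2))
          + c s * (Real.exp (-(r s ^ 2 / 2)) * (-(((2 : ℕ) : ℝ) * r s ^ (2 - 1) * σ s / 2))))
          = σ s * (n * m - Real.exp (-(r s ^ 2 / 2)) * (κ s - r s * c s)) := by
          push_cast
          ring
        simp only [e]
        apply mul_nonneg (h.σnn hn hm s hs')
        have a1 := mul_le_mul_of_nonneg_left hk he0.le
        have a2 := mul_le_mul_of_nonneg_right he1 hnm.le
        linarith
    intro s hs
    have := hmon ⟨le_rfl, h.hS.le⟩ hs hs.1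
    simp only [h.r0, h.c0, mul_zero, zero_mul, sub_zero] at this
    have h2 : c s * Real.exp (-(r s ^ 2 / 2)) ≤ n * m * r s := by linarith
    rw [Real.exp_neg, ← div_eq_mul_inv, div_le_iff₀ (Real.exp_pos _)] at h2
    exact h2
  have step1' : ∀ s ∈ Icc 0 S, μ s ≤ n * m * Real.exp (r s ^ 2 / 2) := by
    intro s hs
    rcases hs.1.lt_or_eq with h1 | h1
    · have hr := h.rpos s ⟨h1, hs.2⟩
      have := step1 s hs
      rw [h.hμ s hs] at this
      refine le_of_mul_le_mul_left (this.trans_eq ?_) hr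
      ring
    · rw [← h1, h.μ0, h.r0]
      norm_num
      nlinarith
  have hexp : ∀ {u v : ℝ}, 0 ≤ u → u ≤ v → Real.exp (u ^ 2 / 2) ≤ Real.exp (v ^ 2 / 2) := by
    intro u v hu huv
    apply Real.exp_le_exp.mpr
    have := pow_le_pow_left₀ hu huv 2
    linarith
  have hσhalf : ∀ s ∈ Icc 0 S, c s ≤ 1 / 2 → 1 / 2 < σ s := by
    intro s hs hcs
    have a1 := h.sq s
    have a2 := h.cnn hn hm s hs
    have a3 := h.σnn hn hm s hs
    nlinarith
  have hcη : ∀ s ∈ Icc 0 S, r s ≤ r3 → c s ≤ η := by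
    intro s hs hrs
    refine (step1 s hs).trans (le_trans ?_ hη1)
    have := h.rnn hs
    have h3 : 0 ≤ r3 := by linarith
    apply mul_le_mul _ (hexp this hrs) (Real.exp_pos _).le (by positivity)
    exact mul_le_mul_of_nonneg_left hrs hnm.le
  -- region one
  have reg1 : ∀ s ∈ Icc 0 S, r s ≤ r3 → n * m + b - b / 4 ≤ x s := by
    intro s hs hrs
    have hmon : MonotoneOn (fun t => x t + 2 * η * r t) (Icc 0 s) := by
      apply mono_tool (f' := fun t => -(c t) + 2 * η * σ t)
      · exact (h.cx.add (continuousOn_const.mul h.cr)).mono (Icc_subset_Icc_right hs.2)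
      · intro t ht
        have ht' : t ∈ Ioo 0 S := ⟨ht.1, ht.2.trans_le hs.2⟩
        exact (h.dx t ht').add ((h.dr t ht').const_mul _)
      · intro t ht
        have ht' : t ∈ Icc 0 S := ⟨ht.1.le, ht.2.le.trans hs.2⟩
        have a1 := hcη t ht' ((h.rmono hn hm ht' hs ht.2.le).trans hrs)
        have a2 := hσhalf t ht' (a1.trans hη2)
        nlinarith
    have := hmon ⟨le_rfl, hs.1⟩ ⟨hs.1, le_rfl⟩ hs.1
    simp only [h.r0, hx0, mul_zero, add_zero] at this
    have a3 : 2 * η * r s ≤ 2 * η * r3 := mul_le_mul_of_nonneg_left hrs (by linarith)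
    linarith
  have hS0 : (0 : ℝ) ∈ Icc 0 S := ⟨le_rfl, h.hS.le⟩
  have hSS : S ∈ Icc 0 S := ⟨h.hS.le, le_rfl⟩
  rcases le_or_gt (r S) r3 with hrS | hrS
  · have := reg1 S hSS hrS
    linarith
  obtain ⟨s3, hs3, hrs3⟩ : r3 ∈ r '' Icc 0 S :=
    intermediate_value_Icc h.hS.le h.cr ⟨by rw [h.r0]; linarith, hrS.le⟩
  obtain ⟨s1, hs1, hrs1⟩ : r1 ∈ r '' Icc 0 s3 :=
    intermediate_value_Icc hs3.1 (h.cr.mono (Icc_subset_Icc_right hs3.2))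
      ⟨by rw [h.r0]; linarith, by rw [hrs3]; exact hr13⟩
  have hs1S : s1 ∈ Icc 0 S := ⟨hs1.1, hs1.2.trans hs3.2⟩
  have hs1p : 0 < s1 := by
    rcases hs1.1.lt_or_eq with h1 | h1
    · exact h1
    · rw [← h1, h.r0] at hrs1
      linarith
  have key : ∀ s ∈ Icc s3 S, β * c s ≤ κ s := by
    intro s hs
    have hsS : s ∈ Icc 0 S := ⟨hs3.1.trans hs.1, hs.2⟩
    have hsp : 0 < s := hs1p.trans_le (hs1.2.trans hs.1)
    have hrs : r3 ≤ r s := by rw [← hrs3]; exact h.rmono hn hm hs3 hsS hs.1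
    have hcs := h.cnn hn hm s hsS
    rcases le_or_gt b (β * c s) with hbc | hbc
    · rw [h.hκ, hlam]
      have hμc : μ s ≤ c s := by
        rw [h.hμ s hsS]
        have := (h.μpos hn hm s hsS).le
        nlinarith
      have a1 := mul_nonneg (hx s hsS) (h.σnn hn hm s hsS)
      have a2 : (2 * β + n) * c s ≤ r s * c s := mul_le_mul_of_nonneg_right (by linarith) hcs
      have a3 : ((n : ℝ) - 1) * μ s ≤ ((n : ℝ) - 1) * c s :=
        mul_le_mul_of_nonneg_left hμc (by linarith)
      nlinarith
    · have hchalf : c s ≤ 1 / 2 := by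
        by_contra! hcon
        nlinarith
      have h' := h.restrict hsp hs.2
      have hct : ∀ t ∈ Icc 0 s, c t ≤ 1 / 2 := fun t ht =>
        (h'.cmono hn hm ht ⟨hsp.le, le_rfl⟩ ht.2).trans hchalf
      obtain ⟨hd, hmμ⟩ := h'.dnn hn hm (by
        intro t ht
        have ht' : t ∈ Icc 0 S := ⟨ht.1.le, ht.2.le.trans hs.2⟩
        have hσt := hσhalf t ht' (hct t ⟨ht.1.le, ht.2.le⟩)
        have hxt := (hxle t ht').trans hX
        have hμt := h.μpos hn hm t ht'
        rcases le_or_gt (r t) r3 with hrt | hrt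
        · have a1 := (step1' t ht').trans
            (mul_le_mul_of_nonneg_left (hexp (h.rnn ht') hrt) hnm.le)
          have a2 : x t * μ t ≤ X * (n * m * Real.exp (r3 ^ 2 / 2)) :=
            mul_le_mul hxt a1 hμt.le hX0.le
          linarith
        · have a1 : x t * μ t ≤ r t * μ t :=
            mul_le_mul_of_nonneg_right (by linarith) hμt.le
          rw [← h.hμ t ht'] at a1
          linarith [hct t ⟨ht.1.le, ht.2.le⟩])
      have hs1s : s1 ≤ s := hs1.2.trans hs.1
      have hmon : MonotoneOn (fun t => κ t - 2 * β * c t - m * r t) (Icc s1 s) := by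
        have hsub : Icc s1 s ⊆ Icc 0 S := Icc_subset_Icc hs1.1 hs.2
        apply mono_tool (f' := fun t => (κ t * (r t * σ t - x t * c t)
          - ((n : ℝ) - 1) * (σ t / r t * (κ t - μ t))) - 2 * β * (σ t * κ t) - m * σ t)
        · exact ((h.cκ.sub (continuousOn_const.mul h.cc)).sub
            (continuousOn_const.mul h.cr)).mono hsub
        · intro t ht
          have ht' : t ∈ Ioo 0 S := ⟨hs1p.trans ht.1, ht.2.trans_le hs.2⟩
          exact ((h.dκ ht').sub ((h.dc ht').const_mul _)).sub ((h.dr t ht').const_mul _)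
        · intro t ht
          have ht' : t ∈ Icc 0 S := ⟨(hs1p.trans ht.1).le, ht.2.le.trans hs.2⟩
          have hts : t ∈ Icc 0 s := ⟨(hs1p.trans ht.1).le, ht.2.le⟩
          have hrt : r1 ≤ r t := by rw [← hrs1]; exact h.rmono hn hm hs1S ht' ht.1.le
          have hσt := hσhalf t ht' (hct t hts)
          have hκt := h.κpos hn hm t ht'
          have hμt := h.μpos hn hm t ht'
          have hdt := hd t hts
          have hmt := hmμ t hts
          have hxt := (hxle t ht').trans hX
          have a1 : x t * c t ≤ X * σ t :=
            mul_le_mul hxt (by linarith [hct t hts]) (h.cnn hn hm t ht') hX0.le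
          have a2 : σ t / r t * (κ t - μ t) ≤ σ t * κ t := by
            apply mul_le_mul _ (by linarith) (by linarith) (by linarith)
            exact div_le_self (by linarith) (by linarith)
          have a3 : ((n : ℝ) - 1) * (σ t / r t * (κ t - μ t)) ≤ ((n : ℝ) - 1) * (σ t * κ t) :=
            mul_le_mul_of_nonneg_left a2 (by linarith)
          have a4 : κ t * (X * σ t) ≥ κ t * (x t * c t) := mul_le_mul_of_nonneg_left a1 hκt.le
          have a5 : κ t * σ t * (2 * β + 1 + X + n) ≤ κ t * σ t * r t :=
            mul_le_mul_of_nonneg_left (by linarith) (mul_nonneg hκt.le (by linarith))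
          have a6 : m * σ t ≤ κ t * σ t := mul_le_mul_of_nonneg_right (by linarith) (by linarith)
          have a7 : 0 < κ t * σ t := mul_pos hκt (by linarith)
          generalize ((n : ℝ) - 1) * (σ t / r t * (κ t - μ t)) = W at a3 ⊢
          linarith
      have := hmon ⟨le_rfl, hs1s⟩ ⟨hs1s, le_rfl⟩ hs1s
      simp only [hrs1] at this
      have b1 := step1 s1 hs1S
      rw [hrs1] at b1
      have b2 : m * (r3 - r1) ≤ m * (r s - r1) :=
        mul_le_mul_of_nonneg_left (by linarith) hm.le
      have b3 : m * (r3 - r1) = 2 * β * (n * m * r1 * Real.exp (r1 ^ 2 / 2)) := by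
        rw [hr3]; ring
      have b4 : 2 * β * c s1 ≤ 2 * β * (n * m * r1 * Real.exp (r1 ^ 2 / 2)) :=
        mul_le_mul_of_nonneg_left b1 (by linarith)
      have b5 := h.κpos hn hm s1 hs1S
      have b6 : 0 ≤ β * c s := mul_nonneg hβ0.le hcs
      linarith
  have hmon : MonotoneOn (fun s => β * x s + θ s) (Icc s3 S) := by
    have hsub : Icc s3 S ⊆ Icc 0 S := Icc_subset_Icc_left hs3.1
    apply mono_tool (f' := fun s => β * (-(c s)) + κ s)
    · exact ((continuousOn_const.mul h.cx).add h.cθ).mono hsub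
    · intro t ht
      have ht' : t ∈ Ioo 0 S := ⟨hs3.1.trans_lt ht.1, ht.2⟩
      exact ((h.dx t ht').const_mul β).add (h.dθ t ht')
    · intro t ht
      have := key t ⟨ht.1.le, ht.2.le⟩
      linarith
  have h1 := hmon ⟨le_rfl, hs3.2⟩ ⟨hs3.2, le_rfl⟩ hs3.2
  simp only at h1
  have h2 := reg1 s3 hs3 hrs3.le
  have h3 := h.θle S hSS
  have h4 : π / 2 ≤ θ s3 := by
    rw [← h.θ0]
    exact (h.θsmono hn hm).monotoneOn hS0 hs3 hs3.1
  have h5 : β * (n * m + b - b / 4) ≤ β * x s3 := mul_le_mul_of_nonneg_left h2 hβ0.le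
  have h6 : 0 < β * (n * m) := by positivity
  have h7 : 0 < β * x S := by
    have := mul_pos hβ0 hb
    nlinarith
  exact pos_of_mul_pos_right h7 hβ0.le

end PreCore

/-- For small `m`, the curve turns around before reaching the `r`-axis. -/
lemma A_exists (n : ℕ) (hn : 2 ≤ n) (lam : ℝ) (hlam : lam < 0) (m₁ : ℝ) (hm₁ : 0 < m₁) :
    ∃ m, 0 < m ∧ m < m₁ ∧ ∀ (S : ℝ) (x r θ c σ μ κ : ℝ → ℝ),
      PreCore n lam m S x r θ c σ μ κ → (∀ s ∈ Icc 0 S, 0 ≤ x s) → 0 < x S := by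
  have hn' : (2 : ℝ) ≤ n := by exact_mod_cast hn
  obtain ⟨b, hb⟩ : ∃ b, b = -lam := ⟨_, rfl⟩
  have hb0 : 0 < b := by linarith
  obtain ⟨X, hX⟩ : ∃ X, X = n + b := ⟨_, rfl⟩
  obtain ⟨β, hβ⟩ : ∃ β, β = 2 * b + 2 * π / b := ⟨_, rfl⟩
  have hπb : 0 < 2 * π / b := by positivity
  obtain ⟨r1, hr1⟩ : ∃ r1, r1 = 2 * β + 1 + X + n := ⟨_, rfl⟩
  obtain ⟨r3, hr3⟩ : ∃ r3, r3 = r1 + n * (2 * β * r1 * Real.exp (r1 ^ 2 / 2)) := ⟨_, rfl⟩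
  have hr1p : 0 < r1 := by linarith
  have hβp : 0 < β := by linarith
  have hr3p : 0 < r3 := by rw [hr3]; positivity
  obtain ⟨η, hη⟩ : ∃ η, η = min (1 / 2) (b / (8 * r3)) := ⟨_, rfl⟩
  have hηp : 0 < η := by rw [hη]; positivity
  have hXp : 0 < X := by linarith
  have hE := Real.exp_pos (r3 ^ 2 / 2)
  obtain ⟨m, hm⟩ : ∃ m, m = min (min 1 (m₁ / 2)) (min (η / (n * r3 * Real.exp (r3 ^ 2 / 2)))
    (1 / (4 * (X * n * Real.exp (r3 ^ 2 / 2))))) := ⟨_, rfl⟩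
  have hmp : 0 < m := by rw [hm]; positivity
  have l1 : m ≤ 1 := by rw [hm]; exact (min_le_left _ _).trans (min_le_left _ _)
  have l2 : m ≤ m₁ / 2 := by rw [hm]; exact (min_le_left _ _).trans (min_le_right _ _)
  have l3 : m ≤ η / (n * r3 * Real.exp (r3 ^ 2 / 2)) := by
    rw [hm]; exact (min_le_right _ _).trans (min_le_left _ _)
  have l4 : m ≤ 1 / (4 * (X * n * Real.exp (r3 ^ 2 / 2))) := by
    rw [hm]; exact (min_le_right _ _).trans (min_le_right _ _)
  refine ⟨m, hmp, by linarith, ?_⟩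
  intro S x r θ c σ μ κ h hx
  rw [le_div_iff₀ (by positivity)] at l3 l4
  refine h.A_core hn hmp hx hb0 (by rw [hb]; ring) (X := X) (β := β) (r1 := r1) (r3 := r3)
    (η := η) ?_ (by linarith) ?_ hr1.ge hr3 (by linarith) ?_ ?_ (by linarith)
  · rw [hX]; nlinarith
  · rw [hβ, mul_add, mul_div_cancel₀ _ hb0.ne']
    nlinarith
  · rw [hη]; exact min_le_left _ _
  · have : η ≤ b / (8 * r3) := by rw [hη]; exact min_le_right _ _
    rw [le_div_iff₀ (by positivity)] at this
    linarith

/-- A good value of `m` close to the round sphere. -/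
lemma B_exists (n : ℕ) (hn : 2 ≤ n) (lam : ℝ)
    (hlam₁ : -2 / Real.sqrt ((n : ℝ) + 2) < lam) (hlam₂ : lam < 0) :
    ∃ m, 0 < m ∧ m * (n * m - lam) < 1 ∧
      1 / m + lam - ((n : ℝ) - 1) * m < ((n : ℝ) + 2) * m ^ 3 := by
  have hn' : (2 : ℝ) ≤ n := by exact_mod_cast hn
  obtain ⟨w, hw⟩ : ∃ w, w = Real.sqrt ((n : ℝ) + 2) := ⟨_, rfl⟩
  have hw0 : 0 < w := by rw [hw]; positivity
  have hw2 : w ^ 2 = n + 2 := by rw [hw]; exact Real.sq_sqrt (by linarith)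
  rw [← hw, div_lt_iff₀ hw0] at hlam₁
  -- the sphere value
  obtain ⟨R, hR⟩ : ∃ R, R = (-lam + Real.sqrt (lam ^ 2 + 4 * n)) / 2 := ⟨_, rfl⟩
  have hsq : Real.sqrt (lam ^ 2 + 4 * n) ^ 2 = lam ^ 2 + 4 * n := Real.sq_sqrt (by positivity)
  have hR2 : R ^ 2 + lam * R = n := by rw [hR]; nlinarith
  have hR0 : 0 < R := by rw [hR]; have := Real.sqrt_nonneg (lam ^ 2 + 4 * n); linarith
  have hRw : R < w := by
    by_contra! hcon
    have e1 : 0 < w * (w + lam) := by nlinarith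
    have e2 : 0 < w + lam := pos_of_mul_pos_right e1 hw0.le
    have e3 : w * (w + lam) ≤ R * (R + lam) :=
      mul_le_mul hcon (by linarith) e2.le hR0.le
    nlinarith
  have hR3 : R ^ 2 < n + 2 := by rw [← hw2]; exact pow_lt_pow_left₀ hRw hR0.le (by norm_num)
  -- openness
  let f : ℝ → ℝ := fun m => ((n : ℝ) + 2) * m ^ 3 - (1 / m + lam - ((n : ℝ) - 1) * m)
  have hf : ContinuousAt f (1 / R) := by
    have : (1 / R : ℝ) ≠ 0 := by positivity
    fun_prop (disch := assumption)
  have hfp : 0 < f (1 / R) := by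
    have e : f (1 / R) = (n + 2 - R ^ 2) / R ^ 3 := by
      have : (n : ℝ) = R ^ 2 + lam * R := hR2.symm
      simp only [f, this]
      field_simp
      ring
    rw [e]
    exact div_pos (by linarith) (by positivity)
  have hev : ∀ᶠ m in nhdsWithin (1 / R) (Iio (1 / R)), 0 < f m ∧ 0 < m ∧ m < 1 / R := by
    have h1 : ∀ᶠ m in nhds (1 / R), 0 < f m := hf.eventually (lt_mem_nhds hfp)
    have h2 : ∀ᶠ m in nhds (1 / R), 0 < m := lt_mem_nhds (by positivity)
    filter_upwards [nhdsWithin_le_nhds h1, nhdsWithin_le_nhds h2, self_mem_nhdsWithin] with m a b c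
    exact ⟨a, b, c⟩
  obtain ⟨m, h1, h2, h3⟩ := hev.exists
  refine ⟨m, h2, ?_, by simp only [f] at h1; linarith⟩
  rw [lt_div_iff₀ hR0] at h3
  have h4 : 0 < R * (R + lam) := by nlinarith
  have h5 : 0 < R + lam := pos_of_mul_pos_right h4 hR0.le
  have h6 : 0 < m * (R + lam) := mul_pos h2 h5
  have h7 : n * (m * m) = (m * R) * (m * R) + lam * (m * R) * m := by rw [← hR2]; ring
  have h8 : 0 < (1 - m * R) * (1 + m * (R + lam)) := mul_pos (by linarith) (by linarith)
  nlinarith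


/-- Bounded Lipschitz real functions. -/
def BL {α : Type} [PseudoMetricSpace α] (f : α → ℝ) : Prop :=
  ∃ K, 0 ≤ K ∧ (∀ u, |f u| ≤ K) ∧ ∀ u v, |f u - f v| ≤ K * dist u v

namespace BL
variable {α : Type} [PseudoMetricSpace α] {f g : α → ℝ}

lemma const (a : ℝ) : BL (fun _ : α => a) :=
  ⟨|a|, abs_nonneg _, fun _ => le_rfl, fun u v => by
    simp only [sub_self, abs_zero]; positivity⟩

lemma neg (hf : BL f) : BL (fun u => -f u) := by
  obtain ⟨K, hK, h1, h2⟩ := hf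
  refine ⟨K, hK, fun u => by rw [abs_neg]; exact h1 u, fun u v => ?_⟩
  rw [show -f u - -f v = -(f u - f v) by ring, abs_neg]
  exact h2 u v

lemma add (hf : BL f) (hg : BL g) : BL (fun u => f u + g u) := by
  obtain ⟨K, hK, h1, h2⟩ := hf
  obtain ⟨L, hL, g1, g2⟩ := hg
  refine ⟨K + L, by linarith, fun u => (abs_add_le _ _).trans (add_le_add (h1 u) (g1 u)),
    fun u v => ?_⟩
  rw [show f u + g u - (f v + g v) = (f u - f v) + (g u - g v) by ring, add_mul]
  exact (abs_add_le _ _).trans (add_le_add (h2 u v) (g2 u v))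

lemma sub (hf : BL f) (hg : BL g) : BL (fun u => f u - g u) := by
  simpa only [sub_eq_add_neg] using hf.add hg.neg

lemma mul (hf : BL f) (hg : BL g) : BL (fun u => f u * g u) := by
  obtain ⟨K, hK, h1, h2⟩ := hf
  obtain ⟨L, hL, g1, g2⟩ := hg
  have hKL : 0 ≤ K * L := mul_nonneg hK hL
  refine ⟨2 * (K * L), by linarith, fun u => ?_, fun u v => ?_⟩
  · rw [abs_mul]
    have := mul_le_mul (h1 u) (g1 u) (abs_nonneg _) hK
    linarith
  · rw [show f u * g u - f v * g v = f u * (g u - g v) + (f u - f v) * g v by ring]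
    refine (abs_add_le _ _).trans ?_
    rw [abs_mul, abs_mul]
    have e1 := mul_le_mul (h1 u) (g2 u v) (abs_nonneg _) hK
    have e2 := mul_le_mul (h2 u v) (g1 v) (abs_nonneg _) (mul_nonneg hK dist_nonneg)
    linarith

lemma inv (hf : BL f) {ε : ℝ} (hε : 0 < ε) (h : ∀ u, ε ≤ f u) : BL (fun u => (f u)⁻¹) := by
  obtain ⟨K, hK, h1, h2⟩ := hf
  refine ⟨ε⁻¹ + K * (ε⁻¹ * ε⁻¹), by positivity, fun u => ?_, fun u v => ?_⟩
  · have hu : 0 < f u := hε.trans_le (h u)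
    rw [abs_of_pos (inv_pos.mpr hu)]
    have : (f u)⁻¹ ≤ ε⁻¹ := inv_anti₀ hε (h u)
    have : 0 ≤ K * (ε⁻¹ * ε⁻¹) := by positivity
    linarith
  · have hu : 0 < f u := hε.trans_le (h u)
    have hv : 0 < f v := hε.trans_le (h v)
    have e : (f u)⁻¹ - (f v)⁻¹ = -((f u - f v) * ((f u)⁻¹ * (f v)⁻¹)) := by
      field_simp; ring
    rw [e, abs_neg, abs_mul, abs_of_pos (mul_pos (inv_pos.mpr hu) (inv_pos.mpr hv))]
    have e1 : (f u)⁻¹ * (f v)⁻¹ ≤ ε⁻¹ * ε⁻¹ :=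
      mul_le_mul (inv_anti₀ hε (h u)) (inv_anti₀ hε (h v)) (by positivity) (by positivity)
    have e2 := mul_le_mul (h2 u v) e1 (by positivity) (mul_nonneg hK dist_nonneg)
    have e3 : 0 ≤ ε⁻¹ * dist u v := by positivity
    linarith

lemma sqrt (hf : BL f) {ε : ℝ} (hε : 0 < ε) (h : ∀ u, ε ≤ f u) : BL (fun u => √(f u)) := by
  obtain ⟨K, hK, h1, h2⟩ := hf
  have hε' : 0 < √ε := Real.sqrt_pos.mpr hε
  refine ⟨√K + K * (√ε)⁻¹, by positivity, fun u => ?_, fun u v => ?_⟩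
  · rw [abs_of_nonneg (Real.sqrt_nonneg _)]
    have : √(f u) ≤ √K := Real.sqrt_le_sqrt ((le_abs_self _).trans (h1 u))
    have : 0 ≤ K * (√ε)⁻¹ := by positivity
    linarith
  · have hu : 0 < f u := hε.trans_le (h u)
    have hv : 0 < f v := hε.trans_le (h v)
    have hu' : √ε ≤ √(f u) := Real.sqrt_le_sqrt (h u)
    have hv' : 0 ≤ √(f v) := Real.sqrt_nonneg _
    have hs : 0 < √(f u) + √(f v) := by linarith
    have e : √(f u) - √(f v) = (f u - f v) * (√(f u) + √(f v))⁻¹ := by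
      rw [← div_eq_mul_inv, eq_div_iff hs.ne']
      nlinarith [Real.sq_sqrt hu.le, Real.sq_sqrt hv.le]
    rw [e, abs_mul, abs_of_pos (inv_pos.mpr hs)]
    have e1 : (√(f u) + √(f v))⁻¹ ≤ (√ε)⁻¹ := inv_anti₀ hε' (by linarith)
    have e2 := mul_le_mul (h2 u v) e1 (by positivity) (mul_nonneg hK dist_nonneg)
    have e3 : 0 ≤ √K * dist u v := by positivity
    linarith

lemma sin (hf : ∀ u v, |f u - f v| ≤ dist u v) : BL (fun u => Real.sin (f u)) := by
  refine ⟨1, zero_le_one, fun u => Real.abs_sin_le_one _, fun u v => ?_⟩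
  rw [one_mul]
  refine le_trans ?_ (hf u v)
  have := Convex.norm_image_sub_le_of_norm_deriv_le (f := Real.sin) (s := univ) (C := 1)
    (x := f v) (y := f u)
    (fun x _ => Real.differentiable_sin x) (fun x _ => by
      rw [Real.deriv_sin]; exact Real.abs_cos_le_one x) convex_univ trivial trivial
  simpa using this

lemma cos (hf : ∀ u v, |f u - f v| ≤ dist u v) : BL (fun u => Real.cos (f u)) := by
  refine ⟨1, zero_le_one, fun u => Real.abs_cos_le_one _, fun u v => ?_⟩
  rw [one_mul]
  refine le_trans ?_ (hf u v)
  have := Convex.norm_image_sub_le_of_norm_deriv_le (f := Real.cos) (s := univ) (C := 1)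
    (x := f v) (y := f u)
    (fun x _ => Real.differentiable_cos x) (fun x _ => by
      rw [Real.deriv_cos, norm_neg]; exact Real.abs_sin_le_one x) convex_univ trivial trivial
  simpa using this

lemma clamp (a b : ℝ) (hf : ∀ u v, |f u - f v| ≤ dist u v) :
    BL (fun u => max a (min b (f u))) := by
  refine ⟨|a| + |b| + 1, by positivity, fun u => ?_, fun u v => ?_⟩
  · have h1 := abs_nonneg a
    have h2 := abs_nonneg b
    rw [abs_le]
    constructor
    · exact le_trans (by linarith [neg_abs_le a]) (le_max_left _ _)
    · apply max_le
      · linarith [le_abs_self a]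
      · exact (min_le_left _ _).trans (by linarith [le_abs_self b])
  · have h1 : |max a (min b (f u)) - max a (min b (f v))| ≤ |f u - f v| := by
      refine (abs_max_sub_max_le_max _ _ _ _).trans ?_
      rw [sub_self, abs_zero, max_eq_right (abs_nonneg _)]
      refine (abs_min_sub_min_le_max _ _ _ _).trans ?_
      rw [sub_self, abs_zero, max_eq_right (abs_nonneg _)]
    refine h1.trans ((hf u v).trans ?_)
    have : 0 ≤ (|a| + |b|) * dist u v := by positivity
    linarith

lemma continuous (hf : BL f) : Continuous f := by
  obtain ⟨K, hK, h1, h2⟩ := hf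
  have : LipschitzWith ⟨K, hK⟩ f := LipschitzWith.of_dist_le_mul fun u v => h2 u v
  exact this.continuous

end BL

/-- Contraction argument for an integral equation with a regular singular point. -/
lemma sing_fix {E : Type} [NormedAddCommGroup E] [NormedSpace ℝ E] [CompleteSpace E]
    (G : ℝ → ℝ → E → E) (hG : Continuous fun p : ℝ × ℝ × E => G p.1 p.2.1 p.2.2)
    {L δ : ℝ} (hL : 0 ≤ L) (hδ : 0 < δ) (hδL : δ * L ≤ 1 / 2)
    (hlip : ∀ τ ∈ Icc (0 : ℝ) 1, ∀ t u v, ‖G τ t u - G τ t v‖ ≤ L * ‖u - v‖) :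
    ∃ U : E → ℝ → E, (∀ e, Continuous (U e)) ∧
      (∀ e, ∀ r ∈ Icc 0 δ, U e r = e + r • ∫ τ in (0 : ℝ)..1, G τ (r * τ) (U e (r * τ))) ∧
      ∀ e e' r, ‖U e r - U e' r‖ ≤ 2 * ‖e - e'‖ := by
  let ext : C(Icc (0 : ℝ) δ, E) → ℝ → E := fun w => IccExtend hδ.le w
  have hext : ∀ w, Continuous (ext w) := fun w => w.continuous.Icc_extend'
  have hint : ∀ w, Continuous fun r : ℝ => ∫ τ in (0 : ℝ)..1, G τ (r * τ) (ext w (r * τ)) := by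
    intro w
    apply intervalIntegral.continuous_parametric_intervalIntegral_of_continuous'
    have hw := hext w
    have : Continuous fun p : ℝ × ℝ => ((p.2, p.1 * p.2, ext w (p.1 * p.2)) : ℝ × ℝ × E) := by
      fun_prop
    exact hG.comp this
  have hci : ∀ w (r : ℝ), IntervalIntegrable (fun τ => G τ (r * τ) (ext w (r * τ)))
      MeasureTheory.volume 0 1 := by
    intro w r
    apply Continuous.intervalIntegrable
    have hw := hext w
    have : Continuous fun τ : ℝ => ((τ, r * τ, ext w (r * τ)) : ℝ × ℝ × E) := by
      fun_prop
    exact hG.comp this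
  let T : E → C(Icc (0 : ℝ) δ, E) → C(Icc (0 : ℝ) δ, E) := fun e w =>
    ⟨fun r => e + (r : ℝ) • ∫ τ in (0 : ℝ)..1, G τ (r * τ) (ext w (r * τ)), by
      have := hint w
      fun_prop⟩
  have hTl : ∀ e w w', dist (T e w) (T e w') ≤ (1 / 2) * dist w w' := by
    intro e w w'
    rw [ContinuousMap.dist_le (by positivity)]
    intro r
    change dist (e + (r : ℝ) • ∫ τ in (0 : ℝ)..1, G τ (r * τ) (ext w (r * τ)))
      (e + (r : ℝ) • ∫ τ in (0 : ℝ)..1, G τ (r * τ) (ext w' (r * τ))) ≤ _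
    rw [dist_add_left, dist_eq_norm, ← smul_sub, ← intervalIntegral.integral_sub (hci _ _) (hci _ _),
      norm_smul]
    have h1 : ‖∫ τ in (0 : ℝ)..1, (G τ (r * τ) (ext w (r * τ)) - G τ (r * τ) (ext w' (r * τ)))‖
        ≤ (L * dist w w') * |1 - 0| := by
      apply intervalIntegral.norm_integral_le_of_norm_le_const
      intro τ hτ
      rw [uIoc_of_le zero_le_one] at hτ
      refine (hlip τ ⟨hτ.1.le, hτ.2⟩ _ _ _).trans ?_
      apply mul_le_mul_of_nonneg_left _ hL
      rw [← dist_eq_norm]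
      exact ContinuousMap.dist_apply_le_dist _
    have h2 : ‖(r : ℝ)‖ ≤ δ := by
      rw [Real.norm_eq_abs, abs_of_nonneg r.2.1]; exact r.2.2
    rw [sub_zero, abs_one, mul_one] at h1
    have h3 := mul_le_mul h2 h1 (norm_nonneg _) hδ.le
    have h4 := mul_le_mul_of_nonneg_right hδL (dist_nonneg (x := w) (y := w'))
    linarith
  have hcon : ∀ e, ContractingWith (1 / 2 : NNReal) (T e) := by
    intro e
    refine ⟨by norm_num [← NNReal.coe_lt_coe], LipschitzWith.of_dist_le_mul fun w w' => ?_⟩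
    have := hTl e w w'
    push_cast
    exact this
  let W : E → C(Icc (0 : ℝ) δ, E) := fun e => ContractingWith.fixedPoint (T e) (hcon e)
  have hW : ∀ e, T e (W e) = W e := fun e => ContractingWith.fixedPoint_isFixedPt (hcon e)
  have hWd : ∀ e e', dist (W e) (W e') ≤ 2 * ‖e - e'‖ := by
    intro e e'
    have h1 : dist (T e (W e')) (T e' (W e')) ≤ ‖e - e'‖ := by
      rw [ContinuousMap.dist_le (norm_nonneg _)]
      intro r
      change dist (e + (r : ℝ) • ∫ τ in (0 : ℝ)..1, G τ (r * τ) (ext (W e') (r * τ)))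
        (e' + (r : ℝ) • ∫ τ in (0 : ℝ)..1, G τ (r * τ) (ext (W e') (r * τ))) ≤ _
      rw [dist_add_right, dist_eq_norm]
    have h2 := hTl e (W e) (W e')
    have h3 := dist_triangle (T e (W e)) (T e (W e')) (T e' (W e'))
    rw [hW e, hW e'] at h3
    rw [hW e] at h2
    rw [hW e'] at h1
    linarith
  refine ⟨fun e => ext (W e), fun e => hext _, ?_, ?_⟩
  · intro e r hr
    have : ext (W e) r = W e ⟨r, hr⟩ := IccExtend_of_mem _ _ hr
    calc ext (W e) r = W e ⟨r, hr⟩ := this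
      _ = T e (W e) ⟨r, hr⟩ := by rw [hW e]
      _ = _ := rfl
  · intro e e' r
    refine le_trans ?_ (hWd e e')
    rw [← dist_eq_norm]
    exact ContinuousMap.dist_apply_le_dist _


lemma hasDerivAt_id_mul_zero {g : ℝ → ℝ} (hg : Continuous g) :
    HasDerivAt (fun r => r * g r) (g 0) 0 := by
  rw [hasDerivAt_iff_tendsto_slope]
  have h1 : Filter.Tendsto g (nhdsWithin 0 {0}ᶜ) (nhds (g 0)) :=
    hg.continuousAt.tendsto.mono_left nhdsWithin_le_nhds
  refine h1.congr' ?_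
  filter_upwards [self_mem_nhdsWithin] with r hr
  have hr' : r ≠ 0 := hr
  rw [slope_def_field]
  field_simp
  ring

lemma clamp_eq {a b t : ℝ} (h1 : a ≤ t) (h2 : t ≤ b) : max a (min b t) = t := by
  rw [min_eq_right h2, max_eq_right h1]

lemma one_sub_clamp (t : ℝ) :
    (3 / 4 : ℝ) ≤ 1 - max (-(1 / 2)) (min (1 / 2) t) * max (-(1 / 2)) (min (1 / 2) t) := by
  have h1 : -(1 / 2) ≤ max (-(1 / 2)) (min (1 / 2) t) := le_max_left _ _
  have h2 : max (-(1 / 2)) (min (1 / 2) t) ≤ 1 / 2 := max_le (by norm_num) (min_le_left _ _)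
  nlinarith

/-- Local solutions near the axis, parametrized by `r`. -/
lemma radial (j : ℕ) (lam Y ε : ℝ) (hε : 0 < ε) :
    ∃ δ, 0 < δ ∧ ∃ X C M : ℝ → ℝ → ℝ, ∀ y ∈ Icc 0 Y,
      Continuous (M y) ∧ (∀ r, C y r = r * M y r) ∧ X y 0 = y ∧ M y 0 = (y + lam) / (j + 2) ∧
      (∀ r ∈ Icc 0 δ, |C y r| ≤ 1 / 2) ∧
      (∀ r ∈ Icc 0 δ, HasDerivAt (X y) (-(C y r) / √(1 - C y r * C y r)) r) ∧
      (∀ r ∈ Icc 0 δ, HasDerivAt (C y)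
        (X y r * √(1 - C y r * C y r) + r * C y r + lam - ((j : ℝ) + 1) * M y r) r) ∧
      |X y δ - y| ≤ ε ∧
      (∀ y' ∈ Icc 0 Y, |X y δ - X y' δ| ≤ 2 * |y - y'| ∧ |C y δ - C y' δ| ≤ 2 * |y - y'|) := by
  let cb : ℝ × ℝ × ℝ → ℝ := fun p => max (-(1 / 2)) (min (1 / 2) p.2.2)
  let xb : ℝ × ℝ × ℝ → ℝ := fun p => max (-(Y + 1)) (min (Y + 1) p.2.1)
  let tb : ℝ × ℝ × ℝ → ℝ := fun p => max 0 (min 1 p.1)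
  have hcb : BL cb := BL.clamp _ _ fun u v => by
    rw [← Real.dist_eq]; exact (le_max_right _ _).trans (le_max_right _ _)
  have hxb : BL xb := BL.clamp _ _ fun u v => by
    rw [← Real.dist_eq]; exact (le_max_left _ _).trans (le_max_right _ _)
  have htb : BL tb := BL.clamp _ _ fun u v => by
    rw [← Real.dist_eq]; exact le_max_left _ _
  have h34 : ∀ p, (3 / 4 : ℝ) ≤ 1 - cb p * cb p := fun p => one_sub_clamp _
  let sb : ℝ × ℝ × ℝ → ℝ := fun p => √(1 - cb p * cb p)
  have hsb : BL sb := ((BL.const 1).sub (hcb.mul hcb)).sqrt (ε := 3 / 4) (by norm_num) h34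
  have hsb' : BL (fun p => (sb p)⁻¹) := hsb.inv (ε := √(3 / 4)) (by positivity)
    fun p => Real.sqrt_le_sqrt (h34 p)
  let F1 : ℝ × ℝ × ℝ → ℝ := fun p => -cb p * (sb p)⁻¹
  let F2 : ℝ × ℝ × ℝ → ℝ := fun p => xb p * sb p + tb p * cb p + lam
  have hF1 : BL F1 := hcb.neg.mul hsb'
  have hF2 : BL F2 := ((hxb.mul hsb).add (htb.mul hcb)).add (BL.const lam)
  have cF1 := hF1.continuous
  have cF2 := hF2.continuous
  obtain ⟨K1, hK1, hF1b, hF1l⟩ := hF1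
  obtain ⟨K2, hK2, hF2b, hF2l⟩ := hF2
  obtain ⟨K, hK⟩ : ∃ K, K = K1 + K2 + 1 + K1 / ε := ⟨_, rfl⟩
  have hKε : 0 ≤ K1 / ε := by positivity
  have hK0 : 1 ≤ K := by linarith
  obtain ⟨δ, hδ⟩ : ∃ δ, δ = 1 / (2 * K) := ⟨_, rfl⟩
  have hδ0 : 0 < δ := by rw [hδ]; positivity
  have hδK : δ * K = 1 / 2 := by rw [hδ]; field_simp
  have hδ1 : δ ≤ 1 := by nlinarith
  let G : ℝ → ℝ → ℝ × ℝ → ℝ × ℝ := fun τ t u => (F1 (t, u), τ ^ (j + 1) * F2 (t, u))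
  have hG : Continuous fun p : ℝ × ℝ × (ℝ × ℝ) => G p.1 p.2.1 p.2.2 := by
    simp only [G]
    fun_prop
  have hτ : ∀ τ ∈ Icc (0 : ℝ) 1, |τ ^ (j + 1)| ≤ 1 := by
    intro τ hτ
    rw [abs_of_nonneg (pow_nonneg hτ.1 _)]
    exact pow_le_one₀ hτ.1 hτ.2
  have hlip : ∀ τ ∈ Icc (0 : ℝ) 1, ∀ t u v, ‖G τ t u - G τ t v‖ ≤ K * ‖u - v‖ := by
    intro τ hτ' t u v
    have hd : dist ((t, u) : ℝ × ℝ × ℝ) (t, v) = ‖u - v‖ := by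
      rw [Prod.dist_eq, dist_self, max_eq_right dist_nonneg, dist_eq_norm]
    have h0 := norm_nonneg (u - v)
    rw [Prod.norm_def]
    apply max_le
    · have := hF1l (t, u) (t, v)
      rw [hd] at this
      refine le_trans this (mul_le_mul_of_nonneg_right (by linarith) h0)
    · have := hF2l (t, u) (t, v)
      rw [hd] at this
      change |τ ^ (j + 1) * F2 (t, u) - τ ^ (j + 1) * F2 (t, v)| ≤ _
      rw [← mul_sub, abs_mul]
      have h1 := mul_le_mul (hτ τ hτ') this (abs_nonneg _) zero_le_one
      refine le_trans h1 ?_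
      rw [one_mul]
      exact mul_le_mul_of_nonneg_right (by linarith) h0
  obtain ⟨U, cU, hU, hUd⟩ := sing_fix G hG (by linarith) hδ0 hδK.le hlip
  let V : ℝ → ℝ → ℝ × ℝ := fun y => U (y, 0)
  let I1 : ℝ → ℝ → ℝ := fun y r => ∫ τ in (0 : ℝ)..1, F1 (r * τ, V y (r * τ))
  let M : ℝ → ℝ → ℝ := fun y r => ∫ τ in (0 : ℝ)..1, τ ^ (j + 1) * F2 (r * τ, V y (r * τ))
  let X : ℝ → ℝ → ℝ := fun y r => y + r * I1 y r
  let C : ℝ → ℝ → ℝ := fun y r => r * M y r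
  have hV : ∀ y, ∀ r ∈ Icc 0 δ, V y r = (X y r, C y r) := by
    intro y r hr
    have h1 := hU (y, 0) r hr
    have hci : IntervalIntegrable (fun τ => G τ (r * τ) (V y (r * τ)))
        MeasureTheory.volume 0 1 := by
      apply Continuous.intervalIntegrable
      have hw := cU (y, 0)
      have : Continuous fun τ : ℝ => ((τ, r * τ, V y (r * τ)) : ℝ × ℝ × ℝ × ℝ) := by
        simp only [V]
        fun_prop
      exact hG.comp this
    have e1 := (ContinuousLinearMap.fst ℝ ℝ ℝ).intervalIntegral_comp_comm hci
    have e2 := (ContinuousLinearMap.snd ℝ ℝ ℝ).intervalIntegral_comp_comm hci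
    have e1' : I1 y r = (∫ τ in (0 : ℝ)..1, G τ (r * τ) (V y (r * τ))).1 := e1
    have e2' : M y r = (∫ τ in (0 : ℝ)..1, G τ (r * τ) (V y (r * τ))).2 := e2
    change U (y, 0) r = _
    rw [h1]
    change _ = (y + r * I1 y r, r * M y r)
    rw [e1', e2']
    ext
    · rfl
    · exact zero_add _
  have cV : ∀ y, Continuous (V y) := fun y => cU _
  have hI1b : ∀ y r, |I1 y r| ≤ K1 := by
    intro y r
    have := intervalIntegral.norm_integral_le_of_norm_le_const (a := 0) (b := 1) (C := K1)
      (f := fun τ => F1 (r * τ, V y (r * τ))) (fun τ _ => hF1b _)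
    simpa using this
  have hMb : ∀ y r, |M y r| ≤ K := by
    intro y r
    have := intervalIntegral.norm_integral_le_of_norm_le_const (a := 0) (b := 1) (C := K)
      (f := fun τ => τ ^ (j + 1) * F2 (r * τ, V y (r * τ))) (fun τ hτ' => by
        rw [uIoc_of_le zero_le_one] at hτ'
        rw [norm_mul]
        have := mul_le_mul (hτ τ ⟨hτ'.1.le, hτ'.2⟩) (hF2b (r * τ, V y (r * τ)))
          (abs_nonneg _) zero_le_one
        exact this.trans (by linarith))
    simpa using this
  have hCb : ∀ y, ∀ r ∈ Icc 0 δ, |C y r| ≤ 1 / 2 := by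
    intro y r hr
    simp only [C]
    rw [abs_mul, abs_of_nonneg hr.1, ← hδK]
    exact mul_le_mul hr.2 (hMb y r) (abs_nonneg _) hδ0.le
  have hXb : ∀ y, ∀ r ∈ Icc 0 δ, |X y r - y| ≤ 1 / 2 := by
    intro y r hr
    simp only [X, add_sub_cancel_left]
    rw [abs_mul, abs_of_nonneg hr.1, ← hδK]
    exact mul_le_mul hr.2 ((hI1b y r).trans (by linarith)) (abs_nonneg _) hδ0.le
  have hXε : ∀ y, |X y δ - y| ≤ ε := by
    intro y
    simp only [X, add_sub_cancel_left]
    rw [abs_mul, abs_of_pos hδ0]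
    have h1 := mul_le_mul_of_nonneg_left (hI1b y δ) hδ0.le
    have h2 : K1 = K1 / ε * ε := by field_simp
    have h3 : K1 / ε * ε ≤ K * ε := mul_le_mul_of_nonneg_right (by linarith) hε.le
    have h4 := mul_le_mul_of_nonneg_left h3 hδ0.le
    rw [← h2, ← mul_assoc, hδK] at h4
    linarith
  have hF1V : ∀ y, ∀ r ∈ Icc 0 δ, F1 (r, V y r) = -(C y r) / √(1 - C y r * C y r) := by
    intro y r hr
    have hc := abs_le.mp (hCb y r hr)
    rw [hV y r hr]
    have : cb (r, X y r, C y r) = C y r := clamp_eq hc.1 hc.2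
    simp only [F1, sb, this]
    rw [div_eq_mul_inv]
  have hF2V : ∀ y ∈ Icc 0 Y, ∀ r ∈ Icc 0 δ, F2 (r, V y r) =
      X y r * √(1 - C y r * C y r) + r * C y r + lam := by
    intro y hy r hr
    have hc := abs_le.mp (hCb y r hr)
    have hx := abs_le.mp (hXb y r hr)
    rw [hV y r hr]
    have h1 : cb (r, X y r, C y r) = C y r := clamp_eq hc.1 hc.2
    have h2 : xb (r, X y r, C y r) = X y r :=
      clamp_eq (by linarith [hx.1, hy.1, hy.2]) (by linarith [hx.2, hy.2])
    have h3 : tb (r, X y r, C y r) = r := clamp_eq hr.1 (hr.2.trans hδ1)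
    simp only [F2, sb, h1, h2, h3]
  have cM : ∀ y, Continuous (M y) := by
    intro y
    apply intervalIntegral.continuous_parametric_intervalIntegral_of_continuous'
    have hw := cV y
    simp only [Function.uncurry_def]
    fun_prop
  have hM0 : ∀ y, M y 0 = F2 (0, V y 0) / (j + 2) := by
    intro y
    simp only [M, zero_mul]
    rw [intervalIntegral.integral_mul_const, integral_pow]
    push_cast
    field_simp
    ring
  refine ⟨δ, hδ0, X, C, M, fun y hy => ⟨cM y, fun r => rfl, by simp [X], ?_, hCb y, ?_, ?_, hXε y, ?_⟩⟩
  · have h0 : (0 : ℝ) ∈ Icc 0 δ := ⟨le_rfl, hδ0.le⟩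
    rw [hM0, hF2V y hy 0 h0]
    simp [C, X]
  · intro r hr
    rw [← hF1V y r hr]
    have e : X y = fun r => y + ∫ t in (0 : ℝ)..r, F1 (t, V y t) := by
      funext r
      have := intervalIntegral.mul_integral_comp_mul_left (a := 0) (b := 1)
        (f := fun t => F1 (t, V y t)) r
      simp only [mul_zero, mul_one] at this
      rw [← this]
    rw [e]
    have hw := cV y
    have hc : Continuous fun t => F1 (t, V y t) := by fun_prop
    exact ((hc.integral_hasStrictDerivAt 0 r).hasDerivAt).const_add y
  · intro r hr
    rw [← hF2V y hy r hr]
    rcases hr.1.lt_or_eq with hr0 | hr0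
    · have e : C y =ᶠ[nhds r] fun r => (∫ t in (0 : ℝ)..r, t ^ (j + 1) * F2 (t, V y t)) / r ^ (j + 1) := by
        filter_upwards [lt_mem_nhds hr0] with r hr
        have := intervalIntegral.mul_integral_comp_mul_left (a := 0) (b := 1)
          (f := fun t => t ^ (j + 1) * F2 (t, V y t)) r
        simp only [mul_zero, mul_one] at this
        rw [← this]
        simp only [C, M, mul_pow, mul_assoc]
        rw [intervalIntegral.integral_const_mul]
        field_simp
      have hw := cV y
      have hc : Continuous fun t => t ^ (j + 1) * F2 (t, V y t) := by fun_prop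
      have h1 := ((hc.integral_hasStrictDerivAt 0 r).hasDerivAt).div (hasDerivAt_pow (j + 1) r)
        (pow_ne_zero _ hr0.ne')
      refine (h1.congr_of_eventuallyEq e).congr_deriv ?_
      have h2 := e.eq_of_nhds
      rw [eq_div_iff (pow_ne_zero _ hr0.ne')] at h2
      rw [← h2]
      simp only [C]
      push_cast
      have hr' := hr0.ne'
      rw [pow_succ]
      field_simp
      try ring
    · rw [← hr0]
      refine (hasDerivAt_id_mul_zero (cM y)).congr_deriv ?_
      have := hM0 y
      rw [eq_div_iff (by positivity)] at this
      linarith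
  · intro y' hy'
    have hδδ : δ ∈ Icc 0 δ := ⟨hδ0.le, le_rfl⟩
    have h1 := hUd (y, 0) (y', 0) δ
    change ‖V y δ - V y' δ‖ ≤ _ at h1
    rw [hV y δ hδδ, hV y' δ hδδ] at h1
    have h2 : ‖((y, 0) : ℝ × ℝ) - (y', 0)‖ = |y - y'| := by
      simp [Prod.norm_def]
    rw [h2] at h1
    exact ⟨(le_max_left _ _).trans h1, (le_max_right _ _).trans h1⟩


/-- Inverse of a function with derivative bounded below by one. -/
lemma arc_inv {g : ℝ → ℝ} (hg : Continuous g) (h1 : ∀ t, 1 ≤ g t) :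
    ∃ ρ : ℝ → ℝ, StrictMono ρ ∧ ρ 0 = 0 ∧ Function.Surjective ρ ∧
      ∀ s, HasDerivAt ρ (g (ρ s))⁻¹ s := by
  let S : ℝ → ℝ := fun r => ∫ t in (0 : ℝ)..r, g t
  have hS : ∀ r, HasDerivAt S (g r) r := fun r => (hg.integral_hasStrictDerivAt 0 r).hasDerivAt
  have hS0 : S 0 = 0 := by simp [S]
  have hmono : StrictMono S := by
    apply strictMono_of_deriv_pos
    intro r
    rw [(hS r).deriv]
    linarith [h1 r]
  have hcont : Continuous S := continuous_iff_continuousAt.mpr fun r => (hS r).continuousAt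
  have hmono1 : Monotone fun r => S r - r := by
    apply monotone_of_deriv_nonneg
    · exact fun r => ((hS r).sub (hasDerivAt_id r)).differentiableAt
    · intro r
      have : deriv (fun r => S r - r) r = g r - 1 := ((hS r).sub (hasDerivAt_id r)).deriv
      rw [this]
      linarith [h1 r]
  have hsurj : Function.Surjective S := by
    apply hcont.surjective
    · apply Filter.tendsto_atTop_mono' _ _ Filter.tendsto_id
      filter_upwards [Filter.eventually_ge_atTop 0] with r hr
      have := hmono1 hr
      simp only [hS0] at this
      simp only [id]
      linarith
    · apply Filter.tendsto_atBot_mono' _ _ Filter.tendsto_id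
      filter_upwards [Filter.eventually_le_atBot 0] with r hr
      have := hmono1 hr
      simp only [hS0] at this
      simp only [id]
      linarith
  let e : ℝ ≃o ℝ := hmono.orderIsoOfSurjective S hsurj
  have he : ∀ s, S (e.symm s) = s := fun s => e.apply_symm_apply s
  refine ⟨e.symm, e.symm.strictMono, ?_, e.symm.surjective, ?_⟩
  · apply hmono.injective
    rw [he, hS0]
  · intro s
    have hc : ContinuousAt e.symm s := e.symm.continuous.continuousAt
    exact HasDerivAt.of_local_left_inverse hc (hS (e.symm s)) (by linarith [h1 (e.symm s)])
      (Filter.Eventually.of_forall he)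

lemma arc_one (j : ℕ) (lam y δ : ℝ) (hδ : 0 < δ) (X C M : ℝ → ℝ)
    (hM : Continuous M) (hC : ∀ r, C r = r * M r) (hX0 : X 0 = y)
    (hM0 : M 0 = (y + lam) / (j + 2)) (hCb : ∀ r ∈ Icc 0 δ, |C r| ≤ 1 / 2)
    (hX : ∀ r ∈ Icc 0 δ, HasDerivAt X (-(C r) / √(1 - C r * C r)) r)
    (hC' : ∀ r ∈ Icc 0 δ, HasDerivAt C
        (X r * √(1 - C r * C r) + r * C r + lam - ((j : ℝ) + 1) * M r) r) :
    ∃ (s1 : ℝ) (x r θ μ : ℝ → ℝ), 0 < s1 ∧ Continuous μ ∧ x 0 = y ∧ r 0 = 0 ∧ θ 0 = π / 2 ∧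
      μ 0 = (y + lam) / (j + 2) ∧ r s1 = δ ∧ x s1 = X δ ∧ θ s1 = π / 2 + Real.arcsin (C δ) ∧
      (∀ s ∈ Icc 0 s1, HasDerivAt x (Real.cos (θ s)) s ∧ HasDerivAt r (Real.sin (θ s)) s ∧
        HasDerivAt θ (x s * Real.sin (θ s) + r s * (-Real.cos (θ s)) + lam
          - ((j : ℝ) + 1) * μ s) s ∧ -Real.cos (θ s) = r s * μ s ∧ θ s < π) ∧
      (∀ s ∈ Ioc 0 s1, 0 < r s) := by
  have cC : Continuous C := by
    rw [show C = fun r => r * M r from funext hC]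
    fun_prop
  let g : ℝ → ℝ := fun t => (√(1 - max (-(1 / 2)) (min (1 / 2) (C t)) *
    max (-(1 / 2)) (min (1 / 2) (C t))))⁻¹
  have hpos : ∀ t, 0 < √(1 - max (-(1 / 2)) (min (1 / 2) (C t)) *
    max (-(1 / 2)) (min (1 / 2) (C t))) := fun t =>
      Real.sqrt_pos.mpr (by linarith [one_sub_clamp (C t)])
  have cg : Continuous g := by
    apply Continuous.inv₀
    · fun_prop
    · exact fun t => (hpos t).ne'
  have g1 : ∀ t, 1 ≤ g t := by
    intro t
    apply (one_le_inv₀ (hpos t)).mpr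
    apply Real.sqrt_le_one.mpr
    nlinarith [mul_self_nonneg (max (-(1 / 2)) (min (1 / 2) (C t)))]
  have hgC : ∀ t ∈ Icc 0 δ, (g t)⁻¹ = √(1 - C t * C t) := by
    intro t ht
    have := abs_le.mp (hCb t ht)
    simp only [g, inv_inv, clamp_eq this.1 this.2]
  obtain ⟨ρ, hρm, hρ0, hρs, hρ⟩ := arc_inv cg g1
  obtain ⟨s1, hs1⟩ := hρs δ
  have hs1p : 0 < s1 := hρm.lt_iff_lt.mp (by rw [hρ0, hs1]; exact hδ)
  have hmem : ∀ s ∈ Icc 0 s1, ρ s ∈ Icc 0 δ := by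
    intro s hs
    rw [← hρ0, ← hs1]
    exact ⟨hρm.monotone hs.1, hρm.monotone hs.2⟩
  have cρ : Continuous ρ := continuous_iff_continuousAt.mpr fun s => (hρ s).continuousAt
  refine ⟨s1, fun s => X (ρ s), ρ, fun s => π / 2 + Real.arcsin (C (ρ s)), fun s => M (ρ s),
    hs1p, hM.comp cρ, by simp [hρ0, hX0], hρ0, by simp [hρ0, hC], by simp [hρ0, hM0], hs1,
    by simp [hs1], by simp [hs1], ?_, ?_⟩
  · intro s hs
    have hr := hmem s hs
    have hc := abs_le.mp (hCb _ hr)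
    have hsq : 0 < 1 - C (ρ s) * C (ρ s) := by nlinarith
    have hsq' := Real.sqrt_pos.mpr hsq
    have e1 : Real.cos (π / 2 + Real.arcsin (C (ρ s))) = -C (ρ s) := by
      rw [add_comm, Real.cos_add_pi_div_two, Real.sin_arcsin (by linarith) (by linarith)]
    have e2 : Real.sin (π / 2 + Real.arcsin (C (ρ s))) = √(1 - C (ρ s) * C (ρ s)) := by
      rw [add_comm, Real.sin_add_pi_div_two, Real.cos_arcsin, sq]
    have hd := hρ s
    rw [hgC _ hr] at hd
    simp only [e1, e2]
    refine ⟨?_, hd, ?_, ?_, ?_⟩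
    · refine ((hX _ hr).comp s hd).congr_deriv ?_
      rw [div_mul_cancel₀ _ hsq'.ne']
    · have h1 := (((Real.hasDerivAt_arcsin (x := C (ρ s)) (by linarith) (by linarith)).comp s
        ((hC' _ hr).comp s hd))).const_add (π / 2)
      refine h1.congr_deriv ?_
      rw [sq, one_div, mul_comm _ √(1 - C (ρ s) * C (ρ s)), inv_mul_cancel_left₀ hsq'.ne']
      ring
    · rw [neg_neg, hC]
    · have : Real.arcsin (C (ρ s)) < π / 2 := Real.arcsin_lt_pi_div_two.mpr (by linarith)
      linarith
  · intro s hs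
    rw [← hρ0]
    exact hρm hs.1

/-- Local solutions near the axis, parametrized by arc length. -/
lemma arc_local (j : ℕ) (lam Y ε : ℝ) (hε : 0 < ε) :
    ∃ δ, 0 < δ ∧ ∃ (s1 : ℝ → ℝ) (x r θ μ : ℝ → ℝ → ℝ),
      ContinuousOn (fun y => x y (s1 y)) (Icc 0 Y) ∧
      ContinuousOn (fun y => θ y (s1 y)) (Icc 0 Y) ∧
      ∀ y ∈ Icc 0 Y, 0 < s1 y ∧ Continuous (μ y) ∧ x y 0 = y ∧ r y 0 = 0 ∧ θ y 0 = π / 2 ∧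
      μ y 0 = (y + lam) / (j + 2) ∧ r y (s1 y) = δ ∧
      |x y (s1 y) - y| ≤ ε ∧
      (∀ s ∈ Icc 0 (s1 y), HasDerivAt (x y) (Real.cos (θ y s)) s ∧
        HasDerivAt (r y) (Real.sin (θ y s)) s ∧
        HasDerivAt (θ y) (x y s * Real.sin (θ y s) + r y s * (-Real.cos (θ y s)) + lam
          - ((j : ℝ) + 1) * μ y s) s ∧ -Real.cos (θ y s) = r y s * μ y s ∧ θ y s < π) ∧
      (∀ s ∈ Ioc 0 (s1 y), 0 < r y s) := by
  obtain ⟨δ, hδ, X, C, M, h⟩ := radial j lam Y ε hε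
  have h2 : ∀ y, ∃ (s1 : ℝ) (x r θ μ : ℝ → ℝ), y ∈ Icc 0 Y →
      (0 < s1 ∧ Continuous μ ∧ x 0 = y ∧ r 0 = 0 ∧ θ 0 = π / 2 ∧
      μ 0 = (y + lam) / (j + 2) ∧ r s1 = δ ∧ x s1 = X y δ ∧ θ s1 = π / 2 + Real.arcsin (C y δ) ∧
      (∀ s ∈ Icc 0 s1, HasDerivAt x (Real.cos (θ s)) s ∧ HasDerivAt r (Real.sin (θ s)) s ∧
        HasDerivAt θ (x s * Real.sin (θ s) + r s * (-Real.cos (θ s)) + lam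
          - ((j : ℝ) + 1) * μ s) s ∧ -Real.cos (θ s) = r s * μ s ∧ θ s < π) ∧
      (∀ s ∈ Ioc 0 s1, 0 < r s)) := by
    intro y
    by_cases hy : y ∈ Icc 0 Y
    · obtain ⟨a1, a2, a3, a4, a5, a6, a7, a8⟩ := h y hy
      obtain ⟨s1, x, r, θ, μ, hh⟩ := arc_one j lam y δ hδ (X y) (C y) (M y) a1 a2 a3 a4 a5 a6 a7
      exact ⟨s1, x, r, θ, μ, fun _ => hh⟩
    · exact ⟨0, id, id, id, id, fun h => absurd h hy⟩
  choose s1 x r θ μ hh using h2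
  have cX : ContinuousOn (fun y => X y δ) (Icc 0 Y) := by
    have : LipschitzOnWith 2 (fun y => X y δ) (Icc 0 Y) := by
      apply LipschitzOnWith.of_dist_le_mul
      intro y hy y' hy'
      exact ((h y hy).2.2.2.2.2.2.2.2 y' hy').1
    exact this.continuousOn
  have cC : ContinuousOn (fun y => C y δ) (Icc 0 Y) := by
    have : LipschitzOnWith 2 (fun y => C y δ) (Icc 0 Y) := by
      apply LipschitzOnWith.of_dist_le_mul
      intro y hy y' hy'
      exact ((h y hy).2.2.2.2.2.2.2.2 y' hy').2
    exact this.continuousOn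
  refine ⟨δ, hδ, s1, x, r, θ, μ, ?_, ?_, ?_⟩
  · exact cX.congr fun y hy => (hh y hy).2.2.2.2.2.2.2.1
  · refine (continuousOn_const.add (Real.continuous_arcsin.comp_continuousOn cC)).congr
      fun y hy => (hh y hy).2.2.2.2.2.2.2.2.1
  · intro y hy
    obtain ⟨a1, a2, a3, a4, a5, a6, a7, a8, a9, a10, a11⟩ := hh y hy
    exact ⟨a1, a2, a3, a4, a5, a6, a7, by rw [a8]; exact (h y hy).2.2.2.2.2.2.2.1, a10, a11⟩


/-- Global flow of a bounded Lipschitz field. -/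
lemma flow_exists (f1 f2 f3 : ℝ × ℝ × ℝ → ℝ) (h1 : BL f1) (h2 : BL f2) (h3 : BL f3)
    (T : ℝ) (hT : 0 < T) :
    ∃ Φ : ℝ × ℝ × ℝ → ℝ → ℝ × ℝ × ℝ, (∀ p, Φ p 0 = p) ∧
      (∀ p, ∀ t ∈ Icc 0 T, HasDerivAt (fun t => (Φ p t).1) (f1 (Φ p t)) t ∧
        HasDerivAt (fun t => (Φ p t).2.1) (f2 (Φ p t)) t ∧
        HasDerivAt (fun t => (Φ p t).2.2) (f3 (Φ p t)) t) ∧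
      ContinuousOn (fun q : (ℝ × ℝ × ℝ) × ℝ => Φ q.1 q.2) (univ ×ˢ Icc 0 T) := by
  obtain ⟨K1, k1, b1, l1⟩ := h1
  obtain ⟨K2, k2, b2, l2⟩ := h2
  obtain ⟨K3, k3, b3, l3⟩ := h3
  obtain ⟨K, hK⟩ : ∃ K : NNReal, (K : ℝ) = K1 + K2 + K3 := ⟨⟨K1 + K2 + K3, by positivity⟩, rfl⟩
  let f : ℝ × ℝ × ℝ → ℝ × ℝ × ℝ := fun p => (f1 p, f2 p, f3 p)
  have hb : ∀ p, ‖f p‖ ≤ K := by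
    intro p
    rw [hK]
    refine max_le ((b1 p).trans (by linarith)) (max_le ((b2 p).trans (by linarith))
      ((b3 p).trans (by linarith)))
  have hl : LipschitzWith K f := by
    apply LipschitzWith.of_dist_le_mul
    intro p q
    rw [hK]
    have hd := dist_nonneg (x := p) (y := q)
    refine max_le ((l1 p q).trans (mul_le_mul_of_nonneg_right (by linarith) hd))
      (max_le ((l2 p q).trans (mul_le_mul_of_nonneg_right (by linarith) hd))
      ((l3 p q).trans (mul_le_mul_of_nonneg_right (by linarith) hd)))
  have hex : ∀ p, ∃ α : ℝ → ℝ × ℝ × ℝ, α 0 = p ∧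
      ∀ t ∈ Ioo (-1) (T + 1), HasDerivAt α (f (α t)) t := by
    intro p
    have h0 : (0 : ℝ) ∈ Icc (-1) (T + 1) := ⟨by norm_num, by linarith⟩
    obtain ⟨A, hA⟩ : ∃ A : NNReal, (A : ℝ) = T + 1 := ⟨⟨T + 1, by linarith⟩, rfl⟩
    have hP : IsPicardLindelof (fun _ => f) (⟨0, h0⟩ : Icc (-1) (T + 1)) p
        (K * A) 0 K K := by
      apply IsPicardLindelof.of_time_independent
      · exact fun x _ => hb x
      · exact hl.lipschitzOnWith
      · have e : max (T + 1 - (0 : ℝ)) (0 - -1) = T + 1 := by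
          rw [max_eq_left (by linarith), sub_zero]
        change (K : ℝ) * max (T + 1 - (0 : ℝ)) (0 - -1) ≤ _
        rw [e]
        push_cast
        rw [hA, sub_zero]
    obtain ⟨α, hα0, hα⟩ := hP.exists_eq_forall_mem_Icc_hasDerivWithinAt₀
    exact ⟨α, hα0, fun t ht => (hα t (Ioo_subset_Icc_self ht)).hasDerivAt (Icc_mem_nhds ht.1 ht.2)⟩
  choose Φ hΦ0 hΦ using hex
  have hΦ' : ∀ p, ∀ t ∈ Icc 0 T, HasDerivAt (Φ p) (f (Φ p t)) t := fun p t ht =>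
    hΦ p t ⟨by linarith [ht.1], by linarith [ht.2]⟩
  refine ⟨Φ, hΦ0, fun p t ht => ?_, ?_⟩
  · have h := hΦ' p t ht
    exact ⟨h.fst, h.snd.fst, h.snd.snd⟩
  · obtain ⟨A, hA⟩ : ∃ A : NNReal, (A : ℝ) = Real.exp (K * T) :=
      ⟨⟨Real.exp (K * T), (Real.exp_pos _).le⟩, rfl⟩
    have hLip : LipschitzOnWith (K + A)
        (fun q : (ℝ × ℝ × ℝ) × ℝ => Φ q.1 q.2) (univ ×ˢ Icc 0 T) := by
      apply LipschitzOnWith.of_dist_le_mul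
      rintro ⟨p, t⟩ ⟨-, ht⟩ ⟨p', t'⟩ ⟨-, ht'⟩
      simp only at ht ht'
      have e1 : dist (Φ p t) (Φ p t') ≤ K * dist t t' := by
        rw [dist_eq_norm, dist_eq_norm]
        exact Convex.norm_image_sub_le_of_norm_hasDerivWithin_le (s := Icc 0 T)
          (fun u hu => (hΦ' p u hu).hasDerivWithinAt) (fun u _ => hb _) (convex_Icc 0 T) ht' ht
      have e2 : dist (Φ p t') (Φ p' t') ≤ dist p p' * Real.exp (K * (t' - 0)) := by
        apply dist_le_of_trajectories_ODE (v := fun _ => f) (fun _ => hl)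
          (fun u hu => (hΦ' p u hu).continuousAt.continuousWithinAt)
          (fun u hu => (hΦ' p u ⟨hu.1, hu.2.le⟩).hasDerivWithinAt)
          (fun u hu => (hΦ' p' u hu).continuousAt.continuousWithinAt)
          (fun u hu => (hΦ' p' u ⟨hu.1, hu.2.le⟩).hasDerivWithinAt) (by rw [hΦ0, hΦ0]) t' ht'
      have e3 : Real.exp (K * (t' - 0)) ≤ Real.exp (K * T) :=
        Real.exp_le_exp.mpr (mul_le_mul_of_nonneg_left (by linarith [ht'.2]) K.coe_nonneg)
      have d1 : dist p p' ≤ dist (p, t) (p', t') := le_max_left _ _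
      have d2 : dist t t' ≤ dist (p, t) (p', t') := le_max_right _ _
      have e4 := mul_le_mul d1 e3 (Real.exp_pos _).le dist_nonneg
      have e5 := mul_le_mul_of_nonneg_left d2 K.coe_nonneg
      have e6 := dist_triangle (Φ p t) (Φ p t') (Φ p' t')
      change dist (Φ p t) (Φ p' t') ≤ _
      rw [NNReal.coe_add, hA, add_mul]
      linarith
    exact hLip.continuousOn


/-- Concatenation of two functions at `a`. -/
noncomputable def glueFun (f g : ℝ → ℝ) (a s : ℝ) : ℝ := if s ≤ a then f s else g (s - a)

lemma glueFun_le {f g : ℝ → ℝ} {a s : ℝ} (h : s ≤ a) : glueFun f g a s = f s := if_pos h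

lemma glueFun_ge {f g : ℝ → ℝ} {a s : ℝ} (hfg : f a = g 0) (h : a ≤ s) :
    glueFun f g a s = g (s - a) := by
  rcases h.lt_or_eq with h1 | h1
  · exact if_neg (not_le.mpr h1)
  · subst h1
    rw [glueFun_le le_rfl, hfg, sub_self]

lemma glueFun_add {f g : ℝ → ℝ} {a t : ℝ} (hfg : f a = g 0) (h : 0 ≤ t) :
    glueFun f g a (a + t) = g t := by
  rw [glueFun_ge hfg (by linarith), add_sub_cancel_left]

lemma glueFun_deriv {f g : ℝ → ℝ} {a s d : ℝ} (hfg : f a = g 0)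
    (hf : s ≤ a → HasDerivAt f d s) (hg : a ≤ s → HasDerivAt g d (s - a)) :
    HasDerivAt (glueFun f g a) d s := by
  rcases lt_trichotomy s a with h | h | h
  · apply (hf h.le).congr_of_eventuallyEq
    filter_upwards [gt_mem_nhds h] with t ht
    exact glueFun_le ht.le
  · subst h
    have h1 : HasDerivWithinAt (glueFun f g s) d (Iic s) s :=
      (hf le_rfl).hasDerivWithinAt.congr (fun t ht => glueFun_le ht) (glueFun_le le_rfl)
    have h3 : HasDerivAt (fun t => g (t - s)) d s := HasDerivAt.comp_sub_const s s (hg le_rfl)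
    have h2 : HasDerivWithinAt (glueFun f g s) d (Ici s) s :=
      h3.hasDerivWithinAt.congr (fun t ht => glueFun_ge hfg ht) (glueFun_ge hfg le_rfl)
    have := h1.union h2
    rwa [Iic_union_Ici, hasDerivWithinAt_univ] at this
  · have h3 : HasDerivAt (fun t => g (t - a)) d s := HasDerivAt.comp_sub_const s a (hg h.le)
    apply h3.congr_of_eventuallyEq
    filter_upwards [lt_mem_nhds h] with t ht
    exact glueFun_ge hfg (le_of_lt ht)

lemma lip_one {f f' : ℝ → ℝ} {T : ℝ} (h : ∀ t ∈ Icc 0 T, HasDerivAt f (f' t) t)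
    (hb : ∀ t ∈ Icc 0 T, |f' t| ≤ 1) : ∀ t ∈ Icc 0 T, |f t - f 0| ≤ t := by
  intro t ht
  have := Convex.norm_image_sub_le_of_norm_hasDerivWithin_le (s := Icc 0 T) (C := 1)
    (fun u hu => (h u hu).hasDerivWithinAt) (fun u hu => hb u hu) (convex_Icc 0 T)
    ⟨le_rfl, ht.1.trans ht.2⟩ ht
  rw [one_mul, sub_zero, Real.norm_eq_abs, Real.norm_eq_abs, abs_of_nonneg ht.1] at this
  exact this

lemma glue_core (n : ℕ) (hn : 2 ≤ n) (lam m δ Z T s1 : ℝ) (hm : 0 < m) (hδ : 0 < δ)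
    (hs1 : 0 < s1) (x r θ μ X R Θ : ℝ → ℝ) (cμ : Continuous μ)
    (x0 : x 0 = n * m - lam) (r0 : r 0 = 0) (θ0 : θ 0 = π / 2) (μ0 : μ 0 = m)
    (rs1 : r s1 = δ)
    (hloc : ∀ s ∈ Icc 0 s1, HasDerivAt x (Real.cos (θ s)) s ∧
        HasDerivAt r (Real.sin (θ s)) s ∧
        HasDerivAt θ (x s * Real.sin (θ s) + r s * (-Real.cos (θ s)) + lam
          - ((n : ℝ) - 1) * μ s) s ∧ -Real.cos (θ s) = r s * μ s ∧ θ s < π)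
    (hr : ∀ s ∈ Ioc 0 s1, 0 < r s)
    (X0 : x s1 = X 0) (R0 : r s1 = R 0) (Θ0 : θ s1 = Θ 0)
    (hflow : ∀ t ∈ Icc 0 T, HasDerivAt X (Real.cos (Θ t)) t ∧ HasDerivAt R (Real.sin (Θ t)) t ∧
      HasDerivAt Θ ((((n : ℝ) - 1) * (max (δ / 2) (min Z (R t)))⁻¹ - max (δ / 2) (min Z (R t)))
        * Real.cos (Θ t) + max (-Z) (min Z (X t)) * Real.sin (Θ t) + lam) t)
    (hZ1 : |X 0| + T ≤ Z) (hZ2 : δ + T ≤ Z) :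
    ∃ (x' r' θ' μ' κ' : ℝ → ℝ),
      (∀ t, 0 ≤ t → x' (s1 + t) = X t ∧ θ' (s1 + t) = Θ t ∧ r' (s1 + t) = R t) ∧
      ∀ t ∈ Icc 0 T, (∀ u ∈ Icc 0 t, Θ u ≤ π) →
        PreCore n lam m (s1 + t) x' r' θ' (fun s => -Real.cos (θ' s)) (fun s => Real.sin (θ' s))
          μ' κ' ∧
        ∀ s ∈ Icc 0 (s1 + t), HasDerivAt x' (Real.cos (θ' s)) s ∧
          HasDerivAt r' (Real.sin (θ' s)) s ∧ HasDerivAt θ' (κ' s) s := by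
  let x' := glueFun x X s1
  let r' := glueFun r R s1
  let θ' := glueFun θ Θ s1
  let μ' : ℝ → ℝ := glueFun μ (fun t => -Real.cos (Θ t) / R t) s1
  let κ' : ℝ → ℝ := fun s => x' s * Real.sin (θ' s) + r' s * (-Real.cos (θ' s)) + lam
    - ((n : ℝ) - 1) * μ' s
  have hs11 : s1 ∈ Icc 0 s1 := ⟨hs1.le, le_rfl⟩
  have M0 : μ s1 = (fun t => -Real.cos (Θ t) / R t) 0 := by
    have := (hloc s1 hs11).2.2.2.1
    simp only
    rw [← Θ0, this, ← R0, mul_div_cancel_left₀ _ (by rw [rs1]; exact hδ.ne')]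
  have hμge : ∀ s, s1 ≤ s → μ' s = -Real.cos (Θ (s - s1)) / R (s - s1) := fun s h =>
    glueFun_ge (f := μ) (g := fun t => -Real.cos (Θ t) / R t) M0 h
  have hXT : ∀ t ∈ Icc 0 T, |X t - X 0| ≤ t :=
    lip_one (fun t ht => (hflow t ht).1) fun t _ => Real.abs_cos_le_one _
  have hRT : ∀ t ∈ Icc 0 T, |R t - R 0| ≤ t :=
    lip_one (fun t ht => (hflow t ht).2.1) fun t _ => Real.abs_sin_le_one _
  have key : ∀ t ∈ Icc 0 T, (∀ u ∈ Icc 0 t, Θ u ≤ π) → (∀ u ∈ Icc 0 t, δ / 2 ≤ R u) →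
        PreCore n lam m (s1 + t) x' r' θ' (fun s => -Real.cos (θ' s)) (fun s => Real.sin (θ' s))
          μ' κ' ∧
        ∀ s ∈ Icc 0 (s1 + t), HasDerivAt x' (Real.cos (θ' s)) s ∧
          HasDerivAt r' (Real.sin (θ' s)) s ∧ HasDerivAt θ' (κ' s) s := by
    intro t ht hΘ hR
    have hsub : ∀ s ∈ Icc 0 (s1 + t), s1 ≤ s → s - s1 ∈ Icc 0 t := fun s hs h =>
      ⟨by linarith, by linarith [hs.2]⟩
    have hsubT : ∀ s ∈ Icc 0 t, s ∈ Icc 0 T := fun s hs => ⟨hs.1, hs.2.trans ht.2⟩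
    have hder : ∀ s ∈ Icc 0 (s1 + t), HasDerivAt x' (Real.cos (θ' s)) s ∧
          HasDerivAt r' (Real.sin (θ' s)) s ∧ HasDerivAt θ' (κ' s) s := by
      intro s hs
      refine ⟨glueFun_deriv X0 ?_ ?_, glueFun_deriv R0 ?_ ?_, glueFun_deriv Θ0 ?_ ?_⟩
      · intro h
        simp only [θ', glueFun_le h]
        exact (hloc s ⟨hs.1, h⟩).1
      · intro h
        simp only [θ', glueFun_ge Θ0 h]
        exact (hflow _ (hsubT _ (hsub s hs h))).1
      · intro h
        simp only [θ', glueFun_le h]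
        exact (hloc s ⟨hs.1, h⟩).2.1
      · intro h
        simp only [θ', glueFun_ge Θ0 h]
        exact (hflow _ (hsubT _ (hsub s hs h))).2.1
      · intro h
        simp only [θ', κ', x', r', μ', glueFun_le h]
        exact (hloc s ⟨hs.1, h⟩).2.2.1
      · intro h
        have h1 := hsub s hs h
        have h2 := hsubT _ h1
        refine (hflow _ h2).2.2.congr_deriv ?_
        simp only [κ', hμge s h, θ', x', r', glueFun_ge Θ0 h, glueFun_ge X0 h, glueFun_ge R0 h]
        have a1 := abs_le.mp (hXT _ h2)
        have a2 := abs_le.mp (hRT _ h2)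
        have a3 := hR _ h1
        have a4 := abs_le.mp (le_refl |X 0|)
        rw [clamp_eq a3 (by linarith [h2.2]), clamp_eq (by linarith [h2.2]) (by linarith [h2.2])]
        have : 0 < R (s - s1) := by linarith
        field_simp
        ring
    refine ⟨?_, hder⟩
    have hsplit : Icc 0 (s1 + t) = Icc 0 s1 ∪ Icc s1 (s1 + t) :=
      (Icc_union_Icc_eq_Icc hs1.le (by linarith [ht.1])).symm
    have cθ' : ContinuousOn θ' (Icc 0 (s1 + t)) :=
      fun s hs => (hder s hs).2.2.continuousAt.continuousWithinAt
    have cr' : ContinuousOn r' (Icc 0 (s1 + t)) :=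
      fun s hs => (hder s hs).2.1.continuousAt.continuousWithinAt
    have hrpos : ∀ s ∈ Ioc 0 (s1 + t), 0 < r' s := by
      intro s hs
      rcases le_total s s1 with h | h
      · simp only [r', glueFun_le h]
        exact hr s ⟨hs.1, h⟩
      · simp only [r', glueFun_ge R0 h]
        linarith [hR _ (hsub s ⟨hs.1.le, hs.2⟩ h)]
    have hM : ∀ s ∈ Icc s1 (s1 + t), μ' s = -Real.cos (θ' s) / r' s := by
      intro s hs
      simp only [hμge s hs.1, θ', r', glueFun_ge Θ0 hs.1, glueFun_ge R0 hs.1]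
    exact
    { hS := by linarith [ht.1]
      cx := fun s hs => (hder s hs).1.continuousAt.continuousWithinAt
      cr := cr'
      cθ := cθ'
      cμ := by
        rw [hsplit]
        apply ContinuousOn.union_of_isClosed _ _ isClosed_Icc isClosed_Icc
        · exact cμ.continuousOn.congr fun s hs => glueFun_le hs.2
        · have hss : Icc s1 (s1 + t) ⊆ Icc 0 (s1 + t) := Icc_subset_Icc_left hs1.le
          refine ContinuousOn.congr (f := fun s => -Real.cos (θ' s) / r' s) ?_ hM
          apply ContinuousOn.div
          · exact (Real.continuous_cos.comp_continuousOn (cθ'.mono hss)).neg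
          · exact cr'.mono hss
          · exact fun s hs => (hrpos s ⟨by linarith [hs.1], hs.2⟩).ne'
      dx := fun s hs => (hder s ⟨hs.1.le, hs.2.le⟩).1.congr_deriv (neg_neg _).symm
      dr := fun s hs => (hder s ⟨hs.1.le, hs.2.le⟩).2.1
      dθ := fun s hs => (hder s ⟨hs.1.le, hs.2.le⟩).2.2
      hc := fun s => rfl
      hσ := fun s => rfl
      hμ := by
        intro s hs
        rcases le_total s s1 with h | h
        · simp only [r', μ', θ', glueFun_le h]
          exact (hloc s ⟨hs.1, h⟩).2.2.2.1
        · rw [hM s ⟨h, hs.2⟩, mul_div_cancel₀]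
          exact (hrpos s ⟨by linarith, hs.2⟩).ne'
      hκ := fun s => rfl
      x0 := by simp only [x', glueFun_le hs1.le, x0]
      r0 := by simp only [r', glueFun_le hs1.le, r0]
      θ0 := by simp only [θ', glueFun_le hs1.le, θ0]
      μ0 := by simp only [μ', glueFun_le hs1.le, μ0]
      rpos := hrpos
      θle := by
        intro s hs
        rcases le_total s s1 with h | h
        · simp only [θ', glueFun_le h]
          exact (hloc s ⟨hs.1, h⟩).2.2.2.2.le
        · simp only [θ', glueFun_ge Θ0 h]
          exact hΘ _ (hsub s hs h) }
  refine ⟨x', r', θ', μ', κ', fun t ht => ⟨glueFun_add X0 ht, glueFun_add Θ0 ht,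
    glueFun_add R0 ht⟩, fun t ht hΘ => key t ht hΘ ?_⟩
  have hfin : ∀ s ∈ Icc 0 t, 0 < R s - δ / 2 := by
    apply pos_of_first
    · exact ContinuousOn.sub (fun s hs =>
        (hflow s ⟨hs.1, hs.2.trans ht.2⟩).2.1.continuousAt.continuousWithinAt) continuousOn_const
    · rw [← R0, rs1]; linarith
    · intro u hu0 hut hpos
      have cR : ContinuousOn R (Icc 0 u) := fun s hs =>
        (hflow s ⟨hs.1, (hs.2.trans hut).trans ht.2⟩).2.1.continuousAt.continuousWithinAt
      have hge : ∀ v ∈ Icc 0 u, δ / 2 ≤ R v := by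
        have hcl : closure (Ico 0 u) = Icc 0 u := closure_Ico hu0.ne
        intro v hv
        rw [← hcl] at hv cR
        exact ContinuousWithinAt.closure_le hv continuousWithinAt_const
          ((cR v hv).mono subset_closure) fun w hw => by linarith [hpos w hw.1 hw.2]
      obtain ⟨hP, -⟩ := key u ⟨hu0.le, hut.trans ht.2⟩
        (fun v hv => hΘ v ⟨hv.1, hv.2.trans hut⟩) hge
      have := hP.rmono hn hm ⟨hs1.le, by linarith⟩ ⟨by linarith, le_rfl⟩
        (by linarith : s1 ≤ s1 + u)
      simp only [r', glueFun_le le_rfl, glueFun_add R0 hu0.le, rs1] at this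
      linarith
  exact fun u hu => by linarith [hfin u hu]


lemma local_core (n : ℕ) (lam m s1 : ℝ)
    (hs1 : 0 < s1) (x r θ μ : ℝ → ℝ) (cμ : Continuous μ)
    (x0 : x 0 = n * m - lam) (r0 : r 0 = 0) (θ0 : θ 0 = π / 2) (μ0 : μ 0 = m)
    (hloc : ∀ s ∈ Icc 0 s1, HasDerivAt x (Real.cos (θ s)) s ∧
        HasDerivAt r (Real.sin (θ s)) s ∧
        HasDerivAt θ (x s * Real.sin (θ s) + r s * (-Real.cos (θ s)) + lam
          - ((n : ℝ) - 1) * μ s) s ∧ -Real.cos (θ s) = r s * μ s ∧ θ s < π)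
    (hr : ∀ s ∈ Ioc 0 s1, 0 < r s) :
    PreCore n lam m s1 x r θ (fun s => -Real.cos (θ s)) (fun s => Real.sin (θ s)) μ
      (fun s => x s * Real.sin (θ s) + r s * (-Real.cos (θ s)) + lam - ((n : ℝ) - 1) * μ s) :=
  { hS := hs1
    cx := fun s hs => (hloc s hs).1.continuousAt.continuousWithinAt
    cr := fun s hs => (hloc s hs).2.1.continuousAt.continuousWithinAt
    cθ := fun s hs => (hloc s hs).2.2.1.continuousAt.continuousWithinAt
    cμ := cμ.continuousOn
    dx := fun s hs => (hloc s ⟨hs.1.le, hs.2.le⟩).1.congr_deriv (neg_neg _).symm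
    dr := fun s hs => (hloc s ⟨hs.1.le, hs.2.le⟩).2.1
    dθ := fun s hs => (hloc s ⟨hs.1.le, hs.2.le⟩).2.2.1
    hc := fun _ => rfl
    hσ := fun _ => rfl
    hμ := fun s hs => (hloc s hs).2.2.2.1
    hκ := fun _ => rfl
    x0 := x0
    r0 := r0
    θ0 := θ0
    μ0 := μ0
    rpos := hr
    θle := fun s hs => (hloc s hs).2.2.2.2.le }

/-- The one-parameter family of profile curves. -/
lemma family (n : ℕ) (hn : 2 ≤ n) (lam : ℝ) (hlam : lam < 0) (mA mB : ℝ) (hA : 0 < mA)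
    (hAB : mA ≤ mB) :
    ∃ (T : ℝ) (s1 : ℝ → ℝ) (Xf Θf x r θ μ κ : ℝ → ℝ → ℝ), 0 < T ∧
      ContinuousOn (fun q : ℝ × ℝ => Xf q.1 q.2) (Icc mA mB ×ˢ Icc 0 T) ∧
      ContinuousOn (fun q : ℝ × ℝ => Θf q.1 q.2) (Icc mA mB ×ˢ Icc 0 T) ∧
      ∀ m ∈ Icc mA mB, 0 < s1 m ∧ 0 < Xf m 0 ∧ Θf m 0 < π ∧
        (∀ t, 0 ≤ t → x m (s1 m + t) = Xf m t ∧ θ m (s1 m + t) = Θf m t) ∧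
        ∀ t ∈ Icc 0 T, (∀ u ∈ Icc 0 t, Θf m u ≤ π) →
          PreCore n lam m (s1 m + t) (x m) (r m) (θ m) (fun s => -Real.cos (θ m s))
            (fun s => Real.sin (θ m s)) (μ m) (κ m) ∧
          (∀ s ∈ Icc 0 (s1 m + t), HasDerivAt (x m) (Real.cos (θ m s)) s ∧
            HasDerivAt (r m) (Real.sin (θ m s)) s ∧ HasDerivAt (θ m) (κ m s) s) ∧
          (0 ≤ Xf m t → t < T) := by
  obtain ⟨j, rfl⟩ : ∃ j, n = j + 2 := ⟨n - 2, by omega⟩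
  have hnc : (((j + 2 : ℕ) : ℝ)) = (j : ℝ) + 2 := by push_cast; ring
  have hj : (0 : ℝ) ≤ j := Nat.cast_nonneg j
  obtain ⟨Y, hY⟩ : ∃ Y, Y = ((j : ℝ) + 2) * mB - lam := ⟨_, rfl⟩
  let yy : ℝ → ℝ := fun m => ((j : ℝ) + 2) * m - lam
  have cyy : Continuous yy := by fun_prop
  have hyy : ∀ m ∈ Icc mA mB, yy m ∈ Icc 0 Y ∧ -lam < yy m := by
    intro m hm
    have h1 : 0 < ((j : ℝ) + 2) * m := mul_pos (by linarith) (by linarith [hm.1])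
    have h2 : ((j : ℝ) + 2) * m ≤ ((j : ℝ) + 2) * mB := mul_le_mul_of_nonneg_left hm.2 (by linarith)
    simp only [yy, hY]
    exact ⟨⟨by linarith, by linarith⟩, by linarith⟩
  have hmaps : MapsTo yy (Icc mA mB) (Icc 0 Y) := fun m hm => (hyy m hm).1
  obtain ⟨δ, hδ, s1, x, r, θ, μ, cX, cΘ, hh⟩ := arc_local j lam Y (-lam / 2) (by linarith)
  have hcast : ((j + 2 : ℕ) : ℝ) - 1 = (j : ℝ) + 1 := by rw [hnc]; ring
  have hcore : ∀ m ∈ Icc mA mB, PreCore (j + 2) lam m (s1 (yy m)) (x (yy m)) (r (yy m)) (θ (yy m))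
      (fun s => -Real.cos (θ (yy m) s)) (fun s => Real.sin (θ (yy m) s)) (μ (yy m))
      (fun s => x (yy m) s * Real.sin (θ (yy m) s) + r (yy m) s * (-Real.cos (θ (yy m) s)) + lam
        - (((j + 2 : ℕ) : ℝ) - 1) * μ (yy m) s) := by
    intro m hm
    obtain ⟨a1, a2, a3, a4, a5, a6, a7, a8, a9, a10⟩ := hh (yy m) (hyy m hm).1
    refine local_core (j + 2) lam m _ a1 _ _ _ _ a2 (by rw [a3, hnc]) a4 a5 ?_ ?_ a10
    · rw [a6]
      simp only [yy]
      field_simp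
      ring
    · rw [hcast]
      exact a9
  have cX' : ContinuousOn (fun m => x (yy m) (s1 (yy m))) (Icc mA mB) :=
    cX.comp cyy.continuousOn hmaps
  have cΘ' : ContinuousOn (fun m => θ (yy m) (s1 (yy m))) (Icc mA mB) :=
    cΘ.comp cyy.continuousOn hmaps
  obtain ⟨c1, hc1, hc1'⟩ : ∃ c1, 0 < c1 ∧ ∀ m ∈ Icc mA mB, c1 ≤ -Real.cos (θ (yy m) (s1 (yy m))) := by
    obtain ⟨m₀, hm₀, hmin⟩ := isCompact_Icc.exists_isMinOn (nonempty_Icc.mpr hAB)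
      ((Real.continuous_cos.comp_continuousOn cΘ').neg)
    refine ⟨-Real.cos (θ (yy m₀) (s1 (yy m₀))), ?_, fun m hm => hmin hm⟩
    have h := hcore m₀ hm₀
    exact h.cpos hn (by linarith [hm₀.1]) _ ⟨h.hS, le_rfl⟩
  have hYpos : 0 < Y := by
    have := hyy mA ⟨le_rfl, hAB⟩
    linarith [this.1.2, this.2]
  obtain ⟨T, hT⟩ : ∃ T, T = Y / c1 + 1 := ⟨_, rfl⟩
  have hTpos : 0 < T := by rw [hT]; positivity
  obtain ⟨Z, hZ⟩ : ∃ Z, Z = Y - lam + T + δ := ⟨_, rfl⟩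
  have hb1 : BL (fun u : ℝ × ℝ × ℝ => max (-Z) (min Z u.1)) := BL.clamp _ _ fun u v => by
    rw [← Real.dist_eq]; exact le_max_left _ _
  have hb2 : BL (fun u : ℝ × ℝ × ℝ => max (δ / 2) (min Z u.2.1)) := BL.clamp _ _ fun u v => by
    rw [← Real.dist_eq]; exact (le_max_left _ _).trans (le_max_right _ _)
  have hl3 : ∀ u v : ℝ × ℝ × ℝ, |u.2.2 - v.2.2| ≤ dist u v := fun u v => by
    rw [← Real.dist_eq]; exact (le_max_right _ _).trans (le_max_right _ _)
  have hbc : BL (fun u : ℝ × ℝ × ℝ => Real.cos u.2.2) := BL.cos hl3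
  have hbs : BL (fun u : ℝ × ℝ × ℝ => Real.sin u.2.2) := BL.sin hl3
  obtain ⟨Φ, hΦ0, hΦ, cΦ⟩ := flow_exists _ _
    (fun u : ℝ × ℝ × ℝ => ((((j + 2 : ℕ) : ℝ) - 1) * (max (δ / 2) (min Z u.2.1))⁻¹
      - max (δ / 2) (min Z u.2.1)) * Real.cos u.2.2 + max (-Z) (min Z u.1) * Real.sin u.2.2 + lam)
    hbc hbs
    ((((((BL.const (((j + 2 : ℕ) : ℝ) - 1)).mul (hb2.inv (ε := δ / 2) (by linarith)
      (fun u => le_max_left _ _))).sub hb2).mul hbc).add (hb1.mul hbs)).add (BL.const lam)) T hTpos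
  let p : ℝ → ℝ × ℝ × ℝ := fun m => (x (yy m) (s1 (yy m)), δ, θ (yy m) (s1 (yy m)))
  have cp : ContinuousOn p (Icc mA mB) := cX'.prodMk (continuousOn_const.prodMk cΘ')
  have cF : ContinuousOn (fun q : ℝ × ℝ => Φ (p q.1) q.2) (Icc mA mB ×ˢ Icc 0 T) := by
    have h1 : ContinuousOn (fun q : ℝ × ℝ => (p q.1, q.2)) (Icc mA mB ×ˢ Icc 0 T) :=
      (cp.comp continuousOn_fst fun q hq => hq.1).prodMk continuousOn_snd
    exact cΦ.comp h1 fun q hq => ⟨mem_univ _, hq.2⟩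
  have hglue : ∀ m, ∃ (x' r' θ' μ' κ' : ℝ → ℝ), m ∈ Icc mA mB →
      ((∀ t, 0 ≤ t → x' (s1 (yy m) + t) = (Φ (p m) t).1 ∧ θ' (s1 (yy m) + t) = (Φ (p m) t).2.2
        ∧ r' (s1 (yy m) + t) = (Φ (p m) t).2.1) ∧
      ∀ t ∈ Icc 0 T, (∀ u ∈ Icc 0 t, (Φ (p m) u).2.2 ≤ π) →
        PreCore (j + 2) lam m (s1 (yy m) + t) x' r' θ' (fun s => -Real.cos (θ' s))
          (fun s => Real.sin (θ' s)) μ' κ' ∧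
        ∀ s ∈ Icc 0 (s1 (yy m) + t), HasDerivAt x' (Real.cos (θ' s)) s ∧
          HasDerivAt r' (Real.sin (θ' s)) s ∧ HasDerivAt θ' (κ' s) s) := by
    intro m
    by_cases hm : m ∈ Icc mA mB
    · obtain ⟨a1, a2, a3, a4, a5, a6, a7, a8, a9, a10⟩ := hh (yy m) (hyy m hm).1
      have hc := hcore m hm
      obtain ⟨x', r', θ', μ', κ', h⟩ := glue_core (j + 2) hn lam m δ Z T (s1 (yy m))
        (by linarith [hm.1]) hδ a1 (x (yy m)) (r (yy m)) (θ (yy m)) (μ (yy m))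
        (fun t => (Φ (p m) t).1) (fun t => (Φ (p m) t).2.1) (fun t => (Φ (p m) t).2.2)
        a2 hc.x0 a4 a5 hc.μ0 a7 (by rw [hcast]; exact a9) a10
        (by simp only [hΦ0, p]) (by simp only [hΦ0, p, a7]) (by simp only [hΦ0, p])
        (hΦ (p m)) (by
          simp only [hΦ0, p]
          have h1 := abs_le.mp a8
          have h2 := hyy m hm
          have : |x (yy m) (s1 (yy m))| ≤ Y - lam :=
            abs_le.mpr ⟨by linarith [h2.1.1, h1.1], by linarith [h2.1.2, h1.2]⟩
          linarith) (by linarith)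
      exact ⟨x', r', θ', μ', κ', fun _ => h⟩
    · exact ⟨id, id, id, id, id, fun h => absurd h hm⟩
  choose x' r' θ' μ' κ' hG using hglue
  refine ⟨T, fun m => s1 (yy m), fun m t => (Φ (p m) t).1, fun m t => (Φ (p m) t).2.2,
    x', r', θ', μ', κ', hTpos, continuous_fst.comp_continuousOn cF,
    (continuous_snd.comp continuous_snd).comp_continuousOn cF, fun m hm => ?_⟩
  obtain ⟨a1, a2, a3, a4, a5, a6, a7, a8, a9, a10⟩ := hh (yy m) (hyy m hm).1
  obtain ⟨g1, g2⟩ := hG m hm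
  have hm0 : 0 < m := by linarith [hm.1]
  refine ⟨a1, ?_, ?_, fun t ht => ⟨(g1 t ht).1, (g1 t ht).2.1⟩, fun t ht hΘ => ?_⟩
  · simp only [hΦ0, p]
    have := abs_le.mp a8
    linarith [(hyy m hm).2, this.1]
  · simp only [hΦ0, p]
    exact (a9 _ ⟨a1.le, le_rfl⟩).2.2.2.2
  obtain ⟨hP, hD⟩ := g2 t ht hΘ
  refine ⟨hP, hD, fun hx => ?_⟩
  have e0 := g1 0 le_rfl
  have et := g1 t ht.1
  rw [add_zero, hΦ0] at e0
  have hmono := mono_tool (f := fun s => -(x' m s) - c1 * s) (f' := fun s => -Real.cos (θ' m s) - c1)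
    (a := s1 (yy m)) (b := s1 (yy m) + t)
    ((hP.cx.mono (Icc_subset_Icc_left a1.le)).neg.sub (by fun_prop))
    (fun s hs => ((hD s ⟨by linarith [hs.1], hs.2.le⟩).1.neg.sub
      ((hasDerivAt_id s).const_mul c1)).congr_deriv (by ring))
    (fun s hs => by
      have h1 := hP.cmono hn hm0 ⟨a1.le, by linarith [ht.1]⟩ ⟨by linarith [hs.1], hs.2.le⟩ hs.1.le
      simp only [e0.2.1] at h1
      have h2 := hc1' m hm
      simp only [p] at h1
      linarith)
  have h3 := hmono ⟨le_rfl, by linarith [ht.1]⟩ ⟨by linarith [ht.1], le_rfl⟩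
    (by linarith [ht.1] : s1 (yy m) ≤ s1 (yy m) + t)
  have h4 := hP.xanti hn hm0 ⟨le_rfl, by linarith [ht.1]⟩ ⟨a1.le, by linarith [ht.1]⟩ a1
  have h5 : x' m 0 = yy m := by rw [hP.x0, hnc]
  have h6 := (hyy m hm).1.2
  simp only [et.1] at h3
  have h7 : t * c1 ≤ Y := by nlinarith
  have := (le_div_iff₀ hc1).mpr h7
  linarith


lemma contDiffOn_tool {f g : ℝ → ℝ} {S : ℝ} (hS : 0 < S)
    (h : ∀ s ∈ Icc 0 S, HasDerivAt f (g s) s) (hg : ContinuousOn g (Icc 0 S)) :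
    ContDiffOn ℝ 1 f (Icc 0 S) := by
  rw [contDiffOn_one_iff_derivWithin (uniqueDiffOn_Icc hS)]
  refine ⟨fun s hs => (h s hs).differentiableAt.differentiableWithinAt, hg.congr fun s hs => ?_⟩
  exact (h s hs).hasDerivWithinAt.derivWithin (uniqueDiffOn_Icc hS s hs)

lemma nonneg_of_pos {f : ℝ → ℝ} {t : ℝ} (ht : 0 < t) (hc : ContinuousOn f (Icc 0 t))
    (h : ∀ s, 0 ≤ s → s < t → 0 < f s) : ∀ s ∈ Icc 0 t, 0 ≤ f s := by
  intro v hv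
  have hcl : closure (Ico 0 t) = Icc 0 t := closure_Ico ht.ne
  rw [← hcl] at hv hc
  exact ContinuousWithinAt.closure_le hv continuousWithinAt_const
    ((hc v hv).mono subset_closure) fun w hw => (h w hw.1 hw.2).le

/-- Existence of the critical shooting parameter. -/
lemma shooting (n : ℕ) (hn : 2 ≤ n) (lam : ℝ)
    (hlam₁ : -2 / Real.sqrt ((n : ℝ) + 2) < lam) (hlam₂ : lam < 0) :
    ∃ (m S : ℝ) (x r θ μ κ : ℝ → ℝ), 0 < m ∧ m * (n * m - lam) < 1 ∧
      PreCore n lam m S x r θ (fun s => -Real.cos (θ s)) (fun s => Real.sin (θ s)) μ κ ∧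
      (∀ s ∈ Icc 0 S, HasDerivAt x (Real.cos (θ s)) s ∧
            HasDerivAt r (Real.sin (θ s)) s ∧ HasDerivAt θ (κ s) s) ∧
      x S = 0 ∧ θ S = π := by
  obtain ⟨mB, hB0, hB1, hB2⟩ := B_exists n hn lam hlam₁ hlam₂
  obtain ⟨mA, hA0, hAB, hA⟩ := A_exists n hn lam hlam₂ mB hB0
  obtain ⟨T, s1, X, Θ, x, r, θ, μ, κ, hT, cX, cΘ, hF⟩ := family n hn lam hlam₂ mA mB hA0 hAB.le
  have hK : IsCompact (Icc mA mB ×ˢ Icc 0 T) := isCompact_Icc.prod isCompact_Icc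
  have cXm : ∀ m ∈ Icc mA mB, ContinuousOn (X m) (Icc 0 T) := fun m hm =>
    cX.comp (f := fun t => (m, t)) (by fun_prop) fun t ht => ⟨hm, ht⟩
  have cΘm : ∀ m ∈ Icc mA mB, ContinuousOn (Θ m) (Icc 0 T) := fun m hm =>
    cΘ.comp (f := fun t => (m, t)) (by fun_prop) fun t ht => ⟨hm, ht⟩
  let C : Set (ℝ × ℝ) := ((Icc mA mB ×ˢ Icc 0 T) ∩ (fun q : ℝ × ℝ => X q.1 q.2) ⁻¹' {0}) ∩
    ⋂ u ∈ Icc (0 : ℝ) 1, ((Icc mA mB ×ˢ Icc 0 T) ∩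
      (fun q : ℝ × ℝ => Θ q.1 (u * q.2)) ⁻¹' (Iic π))
  have hCmem : ∀ m s, (m, s) ∈ C ↔ m ∈ Icc mA mB ∧ s ∈ Icc 0 T ∧ X m s = 0 ∧
      ∀ u ∈ Icc 0 s, Θ m u ≤ π := by
    intro m s
    simp only [C, mem_inter_iff, mem_iInter, mem_prod, mem_preimage, mem_singleton_iff, mem_Iic]
    constructor
    · rintro ⟨⟨⟨h1, h2⟩, h3⟩, h4⟩
      refine ⟨h1, h2, h3, fun u hu => ?_⟩
      rcases h2.1.lt_or_eq with h0 | h0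
      · have := (h4 (u / s) ⟨div_nonneg hu.1 h0.le, (div_le_one h0).mpr hu.2⟩).2
        rwa [div_mul_cancel₀ _ h0.ne'] at this
      · have hu0 : u = 0 := le_antisymm (by rw [h0]; exact hu.2) hu.1
        have := (h4 0 ⟨le_rfl, zero_le_one⟩).2
        rw [hu0]
        rwa [zero_mul] at this
    · rintro ⟨h1, h2, h3, h4⟩
      refine ⟨⟨⟨h1, h2⟩, h3⟩, fun u hu => ⟨⟨h1, h2⟩, h4 _ ⟨mul_nonneg hu.1 h2.1, ?_⟩⟩⟩
      exact mul_le_of_le_one_left h2.1 hu.2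
  have hCc : IsCompact C := by
    apply IsCompact.inter_right
    · exact hK.of_isClosed_subset
        (cX.preimage_isClosed_of_isClosed hK.isClosed isClosed_singleton) inter_subset_left
    · apply isClosed_biInter
      intro u hu
      have : ContinuousOn (fun q : ℝ × ℝ => Θ q.1 (u * q.2)) (Icc mA mB ×ˢ Icc 0 T) :=
        cΘ.comp (f := fun q : ℝ × ℝ => (q.1, u * q.2)) (by fun_prop) fun q hq =>
          ⟨hq.1, mul_nonneg hu.1 hq.2.1, (mul_le_of_le_one_left hq.2.1 hu.2).trans hq.2.2⟩
      exact this.preimage_isClosed_of_isClosed hK.isClosed isClosed_Iic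
  have xnn : ∀ m ∈ Icc mA mB, ∀ t ∈ Icc 0 T, (∀ u ∈ Icc 0 t, Θ m u ≤ π) → 0 ≤ X m t →
      ∀ s ∈ Icc 0 (s1 m + t), 0 ≤ x m s := by
    intro m hm t ht hΘ hX s hs
    obtain ⟨a1, a2, a3, a4, a5⟩ := hF m hm
    obtain ⟨hP, hD, -⟩ := a5 t ht hΘ
    have := (hP.xanti hn (by linarith [hm.1])).antitoneOn hs ⟨by linarith [hP.hS], le_rfl⟩ hs.2
    rw [(a4 t ht.1).1] at this
    linarith
  have Θmono : ∀ m ∈ Icc mA mB, ∀ t ∈ Icc 0 T, (∀ u ∈ Icc 0 t, Θ m u ≤ π) →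
      ∀ u ∈ Icc 0 t, Θ m u ≤ Θ m t := by
    intro m hm t ht hΘ u hu
    obtain ⟨a1, a2, a3, a4, a5⟩ := hF m hm
    obtain ⟨hP, hD, -⟩ := a5 t ht hΘ
    have := (hP.θsmono hn (by linarith [hm.1])).monotoneOn (a := s1 m + u) (b := s1 m + t)
      ⟨by linarith [hu.1], by linarith [hu.2]⟩ ⟨by linarith [hP.hS], le_rfl⟩ (by linarith [hu.2])
    rwa [(a4 t ht.1).2, (a4 u hu.1).2] at this
  have hCne : C.Nonempty := by
    by_contra hne
    have hmB : mB ∈ Icc mA mB := ⟨hAB.le, le_rfl⟩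
    obtain ⟨a1, a2, a3, a4, a5⟩ := hF mB hmB
    have hpos : ∀ s ∈ Icc 0 T, 0 < min (X mB s) (π - Θ mB s) := by
      have cf : ContinuousOn (fun s => min (X mB s) (π - Θ mB s)) (Icc 0 T) :=
        ContinuousOn.inf (cXm mB hmB) (continuousOn_const.sub (cΘm mB hmB))
      apply pos_of_first cf
      · exact lt_min a2 (by linarith)
      · intro t ht0 htT hpos
        have hnn := nonneg_of_pos ht0 (cf.mono (Icc_subset_Icc_right htT)) hpos
        have hXn : 0 ≤ X mB t := (hnn t ⟨ht0.le, le_rfl⟩).trans (min_le_left _ _)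
        have hΘn : ∀ u ∈ Icc 0 t, Θ mB u ≤ π := fun u hu => by
          have := (hnn u hu).trans (min_le_right _ _)
          linarith
        have htm : t ∈ Icc 0 T := ⟨ht0.le, htT⟩
        obtain ⟨hP, hD, -⟩ := a5 t htm hΘn
        have hend : s1 mB + t ∈ Icc 0 (s1 mB + t) := ⟨hP.hS.le, le_rfl⟩
        have hq := hP.q_pos hn hB0 (xnn mB hmB t htm hΘn hXn) hB1 hB2 _ hend
        have hμ := hP.μpos hn hB0 _ hend
        simp only [(a4 t ht0.le).1, (a4 t ht0.le).2] at hq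
        have hX0 : X mB t ≠ 0 := fun h0 => hne ⟨(mB, t), (hCmem _ _).mpr ⟨hmB, htm, h0, hΘn⟩⟩
        have hXp : 0 < X mB t := lt_of_le_of_ne hXn hX0.symm
        refine lt_min hXp ?_
        have h1 : Θ mB t ≠ π := by
          intro h
          rw [h, Real.sin_pi] at hq
          nlinarith [mul_pos hXp hμ]
        have := lt_of_le_of_ne (hΘn t ⟨ht0.le, le_rfl⟩) h1
        linarith
    have hTT : T ∈ Icc 0 T := ⟨hT.le, le_rfl⟩
    obtain ⟨-, -, h⟩ := a5 T hTT fun u hu => by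
      have := (hpos u hu).trans_le (min_le_right _ _)
      linarith
    exact lt_irrefl T (h ((hpos T hTT).trans_le (min_le_left _ _)).le)
  obtain ⟨⟨m, s⟩, hms, hmin⟩ := hCc.exists_isMinOn hCne continuous_fst.continuousOn
  obtain ⟨hm, hs, hXs, hΘs⟩ := (hCmem m s).mp hms
  have hm0 : 0 < m := by linarith [hm.1]
  obtain ⟨a1, a2, a3, a4, a5⟩ := hF m hm
  obtain ⟨hP, hD, hsT⟩ := a5 s hs hΘs
  have hsT := hsT hXs.ge
  have hmA : mA < m := by
    rcases hm.1.lt_or_eq with h | h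
    · exact h
    · exfalso
      subst h
      have := hA _ _ _ _ _ _ _ _ hP (xnn _ hm s hs hΘs hXs.ge)
      rw [(a4 s hs.1).1, hXs] at this
      exact lt_irrefl _ this
  have hs0 : 0 < s := by
    rcases hs.1.lt_or_eq with h | h
    · exact h
    · rw [← h] at hXs
      linarith
  have huX := Metric.uniformContinuousOn_iff.mp (hK.uniformContinuousOn_of_continuous cX)
  have huΘ := Metric.uniformContinuousOn_iff.mp (hK.uniformContinuousOn_of_continuous cΘ)
  refine ⟨m, s1 m + s, x m, r m, θ m, μ m, κ m, hm0, ?_, hP, hD, by rw [(a4 s hs.1).1, hXs], ?_⟩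
  · have hn0 : (0 : ℝ) ≤ n := Nat.cast_nonneg n
    have h1 : (n : ℝ) * m ≤ n * mB := mul_le_mul_of_nonneg_left hm.2 hn0
    have h2 : 0 ≤ (n : ℝ) * m := mul_nonneg hn0 hm0.le
    calc m * (n * m - lam) ≤ mB * (n * mB - lam) :=
          mul_le_mul hm.2 (by linarith) (by linarith) hB0.le
      _ < 1 := hB1
  rw [(a4 s hs.1).2]
  by_contra hne
  have hlt : Θ m s < π := lt_of_le_of_ne (hΘs s ⟨hs.1, le_rfl⟩) hne
  obtain ⟨d, hd, hdΘ⟩ := huΘ (π - Θ m s) (by linarith)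
  obtain ⟨s2, hs2⟩ : ∃ s2, s2 = min (s + d / 2) T := ⟨_, rfl⟩
  have h21 : s < s2 := by rw [hs2]; exact lt_min (by linarith) hsT
  have h22 : s2 ≤ T := by rw [hs2]; exact min_le_right _ _
  have h23 : s2 ≤ s + d / 2 := by rw [hs2]; exact min_le_left _ _
  have h2m : s2 ∈ Icc 0 T := ⟨by linarith, h22⟩
  have hlt2 : ∀ u ∈ Icc s s2, Θ m u < π := by
    intro u hu
    have := hdΘ (m, u) ⟨hm, by linarith [hu.1], by linarith [hu.2]⟩ (m, s) ⟨hm, hs⟩ (by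
      rw [Prod.dist_eq, dist_self, max_eq_right dist_nonneg, Real.dist_eq,
        abs_of_nonneg (by linarith [hu.1])]
      linarith [hu.2])
    rw [Real.dist_eq] at this
    have := (abs_lt.mp this).2
    linarith
  have hΘ2 : ∀ u ∈ Icc 0 s2, Θ m u ≤ π := by
    intro u hu
    rcases le_total u s with h | h
    · exact hΘs u ⟨hu.1, h⟩
    · exact (hlt2 u ⟨h, hu.2⟩).le
  have hΘ3 := Θmono m hm s2 h2m hΘ2
  have hΘ4 := hlt2 s2 ⟨h21.le, le_rfl⟩
  obtain ⟨hP2, -, -⟩ := a5 s2 h2m hΘ2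
  have hX2 : X m s2 < 0 := by
    have := hP2.xanti hn hm0 (a := s1 m + s) (b := s1 m + s2)
      ⟨by linarith, by linarith⟩ ⟨by linarith, le_rfl⟩ (by linarith)
    rwa [(a4 s hs.1).1, (a4 s2 h2m.1).1, hXs] at this
  obtain ⟨d1, hd1, hd1Θ⟩ := huΘ (π - Θ m s2) (by linarith)
  obtain ⟨d2, hd2, hd2X⟩ := huX (-X m s2) (by linarith)
  obtain ⟨m', hm'⟩ : ∃ m', m' = max mA (m - min d1 d2 / 2) := ⟨_, rfl⟩
  have hdd : 0 < min d1 d2 := lt_min hd1 hd2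
  have e1 : m' < m := by rw [hm']; exact max_lt hmA (by linarith)
  have e2 : mA ≤ m' := by rw [hm']; exact le_max_left _ _
  have e3 : m - min d1 d2 / 2 ≤ m' := by rw [hm']; exact le_max_right _ _
  have e4 : m' ∈ Icc mA mB := ⟨e2, by linarith [hm.2]⟩
  have e5 : ∀ u, dist ((m', u) : ℝ × ℝ) (m, u) < min d1 d2 := by
    intro u
    rw [Prod.dist_eq, dist_self, max_eq_left dist_nonneg, Real.dist_eq, abs_sub_comm,
      abs_of_nonneg (by linarith)]
    linarith
  have f1 : ∀ u ∈ Icc 0 s2, Θ m' u ≤ π := by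
    intro u hu
    have hu' : u ∈ Icc 0 T := ⟨hu.1, hu.2.trans h22⟩
    have := hd1Θ (m', u) ⟨e4, hu'⟩ (m, u) ⟨hm, hu'⟩ ((e5 u).trans_le (min_le_left _ _))
    rw [Real.dist_eq] at this
    have := (abs_lt.mp this).2
    have := hΘ3 u hu
    linarith
  have f2 : X m' s2 < 0 := by
    have := hd2X (m', s2) ⟨e4, h2m⟩ (m, s2) ⟨hm, h2m⟩ ((e5 s2).trans_le (min_le_right _ _))
    rw [Real.dist_eq] at this
    have := (abs_lt.mp this).2
    linarith
  obtain ⟨-, f3, -⟩ := hF m' e4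
  obtain ⟨v, hv, hv0⟩ := intermediate_value_Icc' h2m.1
    ((cXm m' e4).mono (Icc_subset_Icc_right h22)) (⟨f2.le, f3.le⟩ : (0 : ℝ) ∈ Icc _ _)
  have hmem : (m', v) ∈ C := (hCmem _ _).mpr ⟨e4, ⟨hv.1, hv.2.trans h22⟩, hv0,
    fun u hu => f1 u ⟨hu.1, hu.2.trans hv.2⟩⟩
  have : m ≤ m' := hmin hmem
  linarith




/-- Theorem 1.1 (ODE reduction): for `n ≥ 2` and `-2/√(n+2) < λ < 0` there is a profile
curve `(x(s), r(s))` with tangent angle `θ(s)` solving the rotational `λ`-hypersurface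
system, starting perpendicularly on the `x`-axis at `x̂ ∈ (-λ, (-λ+√(λ²+4n))/2)` and
ending on the `r`-axis with `θ = π`, with `θ` strictly increasing (convexity). -/
theorem compact_convex_lambda_hypersurface_profile
    (n : ℕ) (hn : 2 ≤ n) (lam : ℝ)
    (hlam₁ : -2 / Real.sqrt ((n : ℝ) + 2) < lam) (hlam₂ : lam < 0) :
    ∃ (xhat shat : ℝ) (x r θ : ℝ → ℝ),
      -lam < xhat ∧ xhat < (-lam + Real.sqrt (lam ^ 2 + 4 * n)) / 2 ∧
      0 < shat ∧
      ContDiffOn ℝ 1 x (Icc 0 shat) ∧ ContDiffOn ℝ 1 r (Icc 0 shat) ∧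
      ContDiffOn ℝ 1 θ (Icc 0 shat) ∧
      (∀ s ∈ Icc (0 : ℝ) shat, deriv x s = Real.cos (θ s) ∧ deriv r s = Real.sin (θ s)) ∧
      (∀ s ∈ Ioc (0 : ℝ) shat,
        deriv θ s = (((n : ℝ) - 1) / r s - r s) * Real.cos (θ s) + x s * Real.sin (θ s) + lam) ∧
      x 0 = xhat ∧ r 0 = 0 ∧ θ 0 = Real.pi / 2 ∧
      x shat = 0 ∧ θ shat = Real.pi ∧
      (∀ s ∈ Ioc (0 : ℝ) shat, 0 < r s) ∧
      (∀ s ∈ Ico (0 : ℝ) shat, 0 < x s) ∧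
      StrictMonoOn θ (Icc 0 shat) ∧
      (∀ s ∈ Icc (0 : ℝ) shat, Real.pi / 2 ≤ θ s ∧ θ s ≤ Real.pi) ∧
      (∀ s ∈ Ioc (0 : ℝ) shat, Real.cos (θ s) < 0) := by
  obtain ⟨m, S, x, r, θ, μ, κ, hm, hm1, hP, hD, hx, hθ⟩ := shooting n hn lam hlam₁ hlam₂
  have hn0 : (0 : ℝ) < n := by exact_mod_cast (by omega : 0 < n)
  have hcosθ : ContinuousOn (fun s => Real.cos (θ s)) (Icc 0 S) :=
    Real.continuous_cos.comp_continuousOn hP.cθ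
  have hS : S ∈ Icc 0 S := ⟨hP.hS.le, le_rfl⟩
  refine ⟨n * m - lam, S, x, r, θ, ?_, ?_, hP.hS,
    contDiffOn_tool hP.hS (fun s hs => (hD s hs).1) hcosθ,
    contDiffOn_tool hP.hS (fun s hs => (hD s hs).2.1) hP.cσ,
    contDiffOn_tool hP.hS (fun s hs => (hD s hs).2.2) hP.cκ,
    fun s hs => ⟨(hD s hs).1.deriv, (hD s hs).2.1.deriv⟩, ?_, hP.x0, hP.r0, hP.θ0, hx, hθ,
    hP.rpos, ?_, hP.θsmono hn hm, ?_, ?_⟩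
  · have := mul_pos hn0 hm
    linarith
  · have h1 : 2 * (n * m - lam) + lam < √(lam ^ 2 + 4 * n) := by
      apply Real.lt_sqrt_of_sq_lt
      nlinarith [mul_lt_mul_of_pos_left hm1 hn0]
    linarith
  · intro s hs
    have hs' : s ∈ Icc 0 S := ⟨hs.1.le, hs.2⟩
    rw [(hD s hs').2.2.deriv, hP.hκ]
    have h1 := hP.hμ s hs'
    have h2 := hP.rpos s hs
    have h3 : μ s = -Real.cos (θ s) / r s := by
      rw [eq_div_iff h2.ne']
      linarith
    rw [h3]
    field_simp
    ring
  · intro s hs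
    rw [← hx]
    exact hP.xanti hn hm ⟨hs.1, hs.2.le⟩ hS hs.2
  · intro s hs
    refine ⟨?_, hP.θle s hs⟩
    rw [← hP.θ0]
    exact (hP.θsmono hn hm).monotoneOn ⟨le_rfl, hP.hS.le⟩ hs hs.1
  · intro s hs
    have := hP.cpos hn hm s hs
    linarith
end

section
/- Let n ≥ 2 be an integer and let v : [0, ∞) → ℝ be a C² function satisfying 4ξ·v''(ξ) = 2(ξ − n)·v'(ξ) − v(ξ) for all ξ ≥ 0, with v(0) = 1 (so that necessarily v'(0) = −1/(2n)). Then v(n) > 0 and v(2n) < 0. -/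
open Real Set

/-- A solution of the Kummer-type equation `4ξ v'' = 2(ξ - n) v' - v` on `[0, ∞)` with
`v(0) = 1` satisfies `v(n) > 0` and `v(2n) < 0`. -/
theorem kummer_sign_change
    (n : ℕ) (hn : 2 ≤ n) (v : ℝ → ℝ)
    (hv : ContDiffOn ℝ 2 v (Ici 0))
    (hode : ∀ ξ : ℝ, 0 ≤ ξ →
      4 * ξ * deriv (deriv v) ξ = 2 * (ξ - (n : ℝ)) * deriv v ξ - v ξ)
    (hv0 : v 0 = 1) :
    0 < v (n : ℝ) ∧ v (2 * (n : ℝ)) < 0 := by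
  have hnpos : (0 : ℝ) < n := by
    have : 0 < n := by omega
    exact_mod_cast this
  -- the derivative, extended continuously to the endpoint
  obtain ⟨w, hwdef⟩ : ∃ w, w = derivWithin v (Ici 0) := ⟨_, rfl⟩
  have hwC : ContDiffOn ℝ 1 w (Ici 0) := by
    rw [hwdef]
    exact hv.derivWithin (uniqueDiffOn_Ici 0) (by norm_num)
  have hvc : ContinuousOn v (Ici 0) := hv.continuousOn
  have hwc : ContinuousOn w (Ici 0) := hwC.continuousOn
  have hd0 : deriv v 0 = -1 / (2 * n) := by
    have h := hode 0 le_rfl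
    rw [hv0] at h
    field_simp
    linarith
  have hw0 : w 0 = -1 / (2 * n) := by
    have hdiff : DifferentiableAt ℝ v 0 := by
      by_contra hc
      rw [deriv_zero_of_not_differentiableAt hc] at hd0
      have : (-1 : ℝ) / (2 * n) < 0 := div_neg_of_neg_of_pos (by norm_num) (by positivity)
      linarith
    rw [hwdef, hdiff.derivWithin (uniqueDiffOn_Ici (0 : ℝ) 0 (by simp)), hd0]
  have hweq : ∀ x : ℝ, 0 < x → w x = deriv v x := fun x hx => by
    rw [hwdef, derivWithin_of_mem_nhds (Ici_mem_nhds hx)]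
  have hvd : ∀ x : ℝ, 0 < x → HasDerivAt v (w x) x := fun x hx => by
    rw [hweq x hx]
    exact ((hv.differentiableOn (by norm_num)).differentiableAt (Ici_mem_nhds hx)).hasDerivAt
  have hwd : ∀ x : ℝ, 0 < x → HasDerivAt w (deriv w x) x := fun x hx =>
    ((hwC.differentiableOn (by norm_num)).differentiableAt (Ici_mem_nhds hx)).hasDerivAt
  have hE : ∀ x : ℝ, 0 < x → 4 * x * deriv w x = 2 * (x - n) * w x - v x := fun x hx => by
    have h1 : deriv w x = deriv (deriv v) x := by
      apply Filter.EventuallyEq.deriv_eq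
      filter_upwards [Ioi_mem_nhds hx] with y hy using hweq y hy
    rw [h1, hweq x hx]
    exact hode x hx.le
  -- weight
  obtain ⟨s, hs⟩ : ∃ s : ℝ → ℝ, s = fun x => x ^ ((n : ℝ) / 2) * exp (-x / 2) := ⟨_, rfl⟩
  have hs0 : s 0 = 0 := by
    rw [hs]
    simp only
    rw [Real.zero_rpow (by positivity), zero_mul]
  have hspos : ∀ x : ℝ, 0 < x → 0 < s x := fun x hx => by
    rw [hs]; simp only; positivity
  have hsc : Continuous s := by
    rw [hs]
    exact (Real.continuous_rpow_const (by positivity)).mul (by fun_prop)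
  have hsd : ∀ x : ℝ, 0 < x → HasDerivAt s (s x * (n / (2 * x) - 1 / 2)) x := fun x hx => by
    have h1 := Real.hasDerivAt_rpow_const (x := x) (p := (n : ℝ) / 2) (Or.inl hx.ne')
    have h2 : HasDerivAt (fun x : ℝ => exp (-x / 2)) (exp (-x / 2) * (-1 / 2)) x :=
      (((hasDerivAt_id x).neg).div_const 2).exp
    rw [hs]
    refine (h1.mul h2).congr_deriv ?_
    rw [Real.rpow_sub hx, Real.rpow_one]
    field_simp
    ring
  obtain ⟨q, hq⟩ : ∃ q : ℝ → ℝ, q = fun x => s x * (2 * (x - n) * w x - v x) := ⟨_, rfl⟩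
  have hqc : ContinuousOn q (Ici 0) := by
    rw [hq]
    exact hsc.continuousOn.mul
      ((ContinuousOn.mul (by fun_prop) hwc).sub hvc)
  have hq0 : q 0 = 0 := by rw [hq]; simp [hs0]
  have hqe : ∀ x : ℝ, 0 < x → q x = s x * (4 * x * deriv w x) := fun x hx => by
    rw [hE x hx, hq]
  have hqd : ∀ x : ℝ, 0 < x → HasDerivAt q (s x * w x) x := fun x hx => by
    have h1 : HasDerivAt (fun x : ℝ => 2 * (x - n)) 2 x := by
      simpa using ((hasDerivAt_id x).sub_const (n : ℝ)).const_mul 2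
    rw [hq]
    refine ((hsd x hx).mul ((h1.mul (hwd x hx)).sub (hvd x hx))).congr_deriv ?_
    simp only [Pi.mul_apply, Pi.sub_apply]
    rw [← hE x hx]
    field_simp
    ring
  -- energy
  have hG : MonotoneOn (fun x => q x * w x) (Ici 0) := by
    refine monotoneOn_of_hasDerivWithinAt_nonneg (convex_Ici 0) (hqc.mul hwc)
      (f' := fun x => s x * w x * w x + q x * deriv w x) ?_ ?_
    · intro x hx
      rw [interior_Ici] at hx
      exact ((hqd x hx).mul (hwd x hx)).hasDerivWithinAt
    · intro x hx
      rw [interior_Ici] at hx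
      have hx' : 0 < x := hx
      rw [hqe x hx']
      have := hspos x hx'
      have e : s x * w x * w x + s x * (4 * x * deriv w x) * deriv w x
        = s x * (w x ^ 2 + 4 * x * deriv w x ^ 2) := by ring
      rw [e]
      positivity
  have hww : ∀ x : ℝ, 0 < x → 0 ≤ w x * deriv w x := fun x hx => by
    have h := hG (mem_Ici.2 le_rfl) (mem_Ici.2 hx.le) hx.le
    simp only [hq0, zero_mul] at h
    rw [hqe x hx] at h
    have hp : 0 < s x * (4 * x) := mul_pos (hspos x hx) (by positivity)
    have e : s x * (4 * x * deriv w x) * w x = s x * (4 * x) * (w x * deriv w x) := by ring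
    rw [e] at h
    exact nonneg_of_mul_nonneg_right h hp
  have hW : MonotoneOn (fun x => w x * w x) (Ici 0) := by
    refine monotoneOn_of_hasDerivWithinAt_nonneg (convex_Ici 0) (hwc.mul hwc)
      (f' := fun x => deriv w x * w x + w x * deriv w x) ?_ ?_
    · intro x hx
      rw [interior_Ici] at hx
      exact ((hwd x hx).mul (hwd x hx)).hasDerivWithinAt
    · intro x hx
      rw [interior_Ici] at hx
      have := hww x hx
      linarith
  have hw0neg : w 0 < 0 := by
    rw [hw0]
    exact div_neg_of_neg_of_pos (by norm_num) (by positivity)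
  have hwneg : ∀ x : ℝ, 0 ≤ x → w x < 0 := fun x hx => by
    by_contra hc
    push Not at hc
    obtain ⟨y, hy, hy0⟩ := intermediate_value_Icc hx
      (hwc.mono Icc_subset_Ici_self) (show (0 : ℝ) ∈ Icc (w 0) (w x) from ⟨hw0neg.le, hc⟩)
    have h := hW (mem_Ici.2 le_rfl) (mem_Ici.2 hy.1) hy.1
    simp only [hy0] at h
    nlinarith
  have hqanti : StrictAntiOn q (Ici 0) := by
    refine strictAntiOn_of_hasDerivWithinAt_neg (convex_Ici 0) hqc
      (f' := fun x => s x * w x) ?_ ?_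
    · intro x hx
      rw [interior_Ici] at hx
      exact (hqd x hx).hasDerivWithinAt
    · intro x hx
      rw [interior_Ici] at hx
      exact mul_neg_of_pos_of_neg (hspos x hx) (hwneg x (le_of_lt hx))
  have hw2 : ∀ x : ℝ, 0 < x → deriv w x < 0 := fun x hx => by
    have h := hqanti (mem_Ici.2 le_rfl) (mem_Ici.2 hx.le) hx
    rw [hq0, hqe x hx] at h
    have hp : 0 < s x * (4 * x) := mul_pos (hspos x hx) (by positivity)
    by_contra hc
    push Not at hc
    nlinarith [mul_nonneg hp.le hc]
  have hwanti : StrictAntiOn w (Ici 0) := by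
    refine strictAntiOn_of_hasDerivWithinAt_neg (convex_Ici 0) hwc
      (f' := deriv w) ?_ ?_
    · intro x hx
      rw [interior_Ici] at hx
      exact (hwd x hx).hasDerivWithinAt
    · intro x hx
      rw [interior_Ici] at hx
      exact hw2 x hx
  constructor
  · have h1 := hE n hnpos
    have h2 := hw2 n hnpos
    nlinarith [mul_pos hnpos (neg_pos.2 h2)]
  · have hl : StrictAntiOn (fun x => v x - w 0 * x) (Ici 0) := by
      refine strictAntiOn_of_hasDerivWithinAt_neg (convex_Ici 0) (hvc.sub (by fun_prop))
        (f' := fun x => w x - w 0 * 1) ?_ ?_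
      · intro x hx
        rw [interior_Ici] at hx
        exact ((hvd x hx).sub ((hasDerivAt_id x).const_mul (w 0))).hasDerivWithinAt
      · intro x hx
        rw [interior_Ici] at hx
        have := hwanti (mem_Ici.2 le_rfl) (mem_Ici.2 (le_of_lt hx)) hx
        linarith
    have h2n : (0 : ℝ) < 2 * n := by positivity
    have h := hl (mem_Ici.2 le_rfl) (mem_Ici.2 h2n.le) h2n
    simp only [hv0, hw0] at h
    have e : (-1 : ℝ) / (2 * n) * (2 * n) = -1 := by field_simp
    rw [e] at h
    linarith
end

section
/- Let n ≥ 2 be an integer and λ a real with −(25n − 6)/(30√n) ≤ λ < 0. Let f be the maximal solution of the profile ODE f''(r)/(1 + f'(r)²) = (r − (n−1)/r)·f'(r) − f(r) − λ·√(1 + f'(r)²) on [0, r_*) with f(0) > −λ and f'(0) = 0, so that f'' < 0 and f' < 0 on (0, r_*). Set h(r) = f(r) + λ. If there exists r₀ ∈ [√n, r_*) with h(r₀) = 0, then h(r) > (30n/r)·h'(r) for all r ∈ [r₀, r_*). -/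
open Real Set

/-- The profile ODE (2.7): `f''/(1+f'²) = (r - (n-1)/r) f' - f - λ √(1+f'²)` at the point `r`. -/
def ProfileEq (n : ℕ) (lam : ℝ) (f : ℝ → ℝ) (r : ℝ) : Prop :=
  deriv (deriv f) r / (1 + (deriv f r) ^ 2) =
    (r - ((n : ℝ) - 1) / r) * deriv f r - f r - lam * Real.sqrt (1 + (deriv f r) ^ 2)

/-- Pure algebra: sign of the derivative of the comparison function at a first zero. -/
lemma alg_key (s r p h d lam q : ℝ) (hs : 0 < s) (hs2 : 2 ≤ s ^ 2) (hr : 6 * s < r)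
    (hp : p < 0) (hlam : -(25 * s ^ 2 - 6) ≤ lam * (30 * s)) (hlam2 : lam < 0)
    (hz : r * h = 30 * s ^ 2 * p) (hq : q ≤ 1 - p)
    (hd : d / (1 + p ^ 2) = (r - (s ^ 2 - 1) / r) * p - h + lam * (1 - q)) :
    0 < h + r * p - 30 * s ^ 2 * d := by
  have hr0 : 0 < r := by linarith
  have hP : 0 < 1 + p ^ 2 := by positivity
  have hpoly : 0 < 30 * s ^ 2 * (r ^ 2 - (31 * s ^ 2 - 1)) + 30 * s ^ 2 * lam * r
      - 30 * s ^ 2 - r ^ 2 := by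
    have h1 : -(25 * s ^ 2 - 6) * (s * r) ≤ lam * (30 * s) * (s * r) :=
      mul_le_mul_of_nonneg_right hlam (by positivity)
    obtain ⟨t, rfl⟩ : ∃ t, r = 6 * s + t := ⟨r - 6 * s, by ring⟩
    have ht : 0 < t := by linarith
    have h2 : 0 < t * s * (335 * s ^ 2 - 6) := by
      apply mul_pos (mul_pos ht hs); linarith
    have h3 : 0 < t ^ 2 * (30 * s ^ 2 - 1) := by
      apply mul_pos (by positivity); linarith
    nlinarith
  set K := r ^ 2 - (31 * s ^ 2 - 1) + lam * r with hK
  have hKpos : 30 * s ^ 2 * K > 30 * s ^ 2 + r ^ 2 := by rw [hK]; nlinarith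
  have hK0 : 0 < K := by
    by_contra hc
    push Not at hc
    nlinarith [mul_nonneg (sq_nonneg s) (neg_nonneg.2 hc)]
  set B := d / (1 + p ^ 2) with hB
  have hdB : d = B * (1 + p ^ 2) := by rw [hB]; field_simp
  have hrB : r * B ≤ p * K := by
    have e : r * B = (r ^ 2 - (s ^ 2 - 1)) * p - r * h + r * lam * (1 - q) := by
      rw [hd]; field_simp
    have h4 : r * (-lam) * (q - 1) ≤ r * (-lam) * (-p) :=
      mul_le_mul_of_nonneg_left (by linarith) (mul_nonneg hr0.le (by linarith))
    rw [e, hz, hK]; nlinarith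
  have hpK : p * K < 0 := mul_neg_of_neg_of_pos hp hK0
  have hB0 : B < 0 := by
    by_contra hc
    push Not at hc
    nlinarith [mul_nonneg hr0.le hc]
  have hdle : d ≤ B := by rw [hdB]; nlinarith [mul_nonneg (neg_nonneg.2 hB0.le) (sq_nonneg p)]
  have hrd : r * d ≤ p * K := (mul_le_mul_of_nonneg_left hdle hr0.le).trans hrB
  have hfin : 0 < r * (h + r * p - 30 * s ^ 2 * d) := by
    have h5 : 30 * s ^ 2 * (r * d) ≤ 30 * s ^ 2 * (p * K) :=
      mul_le_mul_of_nonneg_left hrd (by positivity)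
    have h6 : 0 < (-p) * (30 * s ^ 2 * K - (30 * s ^ 2 + r ^ 2)) :=
      mul_pos (by linarith) (by linarith)
    nlinarith
  exact (mul_pos_iff_of_pos_left hr0).1 hfin

/-- Lemma 3.3: for `-(25n-6)/(30√n) ≤ λ < 0`, if the solution of the profile ODE
(with `f(0) > -λ`, `f'(0) = 0`, strictly concave and decreasing on `(0, r_*)`)
has `h(r₀) = 0` for some `r₀ ∈ [√n, r_*)`, where `h = f + λ`, then
`h(r) > (30n/r) h'(r)` on `[r₀, r_*)`. -/
theorem h_lower_bound
    (n : ℕ) (hn : 2 ≤ n) (lam : ℝ)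
    (hlam₁ : -(25 * (n : ℝ) - 6) / (30 * Real.sqrt n) ≤ lam) (hlam₂ : lam < 0)
    (f : ℝ → ℝ) (rstar : ℝ) (hrstar : 0 < rstar)
    (hC1 : ContDiffOn ℝ 1 f (Ico 0 rstar))
    (hC2 : ContDiffOn ℝ 2 f (Ioo 0 rstar))
    (hode : ∀ r ∈ Ioo (0 : ℝ) rstar, ProfileEq n lam f r)
    (hf0 : f 0 > -lam) (hf0' : deriv f 0 = 0)
    (hconc : ∀ r ∈ Ioo (0 : ℝ) rstar, deriv (deriv f) r < 0 ∧ deriv f r < 0)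
    (r₀ : ℝ) (hr₀ : r₀ ∈ Ico (Real.sqrt n) rstar) (hh₀ : f r₀ + lam = 0) :
    ∀ r ∈ Ico r₀ rstar, f r + lam > (30 * (n : ℝ) / r) * deriv f r := by
  intro r hr
  have hn' : (2 : ℝ) ≤ n := by exact_mod_cast hn
  obtain ⟨s, hs⟩ : ∃ s, s = Real.sqrt n := ⟨_, rfl⟩
  have hspos : 0 < s := by rw [hs]; apply Real.sqrt_pos.2; linarith
  have hsn : (n : ℝ) = s ^ 2 := by rw [hs, Real.sq_sqrt (by linarith)]
  rw [← hs] at hlam₁ hr₀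
  rw [hsn] at hlam₁ hn' ⊢
  rw [div_le_iff₀ (by positivity)] at hlam₁
  have hr₀pos : 0 < r₀ := hspos.trans_le hr₀.1
  have hdf : ∀ x ∈ Ioo (0 : ℝ) rstar, HasDerivAt f (deriv f x) x := fun x hx =>
    (differentiableAt_of_deriv_ne_zero (hconc x hx).2.ne).hasDerivAt
  have hddf : ∀ x ∈ Ioo (0 : ℝ) rstar, HasDerivAt (deriv f) (deriv (deriv f) x) x := fun x hx =>
    (differentiableAt_of_deriv_ne_zero (hconc x hx).1.ne).hasDerivAt
  have hmem : ∀ x ∈ Ico r₀ rstar, x ∈ Ioo (0 : ℝ) rstar := fun x hx =>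
    ⟨hr₀pos.trans_le hx.1, hx.2⟩
  have hanti : StrictAntiOn (deriv f) (Ioo 0 rstar) := by
    apply strictAntiOn_of_deriv_neg (convex_Ioo _ _)
    · exact fun x hx => (hddf x hx).continuousAt.continuousWithinAt
    · intro x hx
      rw [interior_Ioo] at hx
      exact (hconc x hx).1
  set φ : ℝ → ℝ := fun x => x * (f x + lam) - 30 * s ^ 2 * deriv f x with hφ
  have hφd : ∀ x ∈ Ioo (0 : ℝ) rstar, HasDerivAt φ
      ((f x + lam) + x * deriv f x - 30 * s ^ 2 * deriv (deriv f) x) x := by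
    intro x hx
    have := ((hasDerivAt_id x).mul ((hdf x hx).add_const lam)).sub
      ((hddf x hx).const_mul (30 * s ^ 2))
    have e : (f x + lam) + x * deriv f x - 30 * s ^ 2 * deriv (deriv f) x =
        1 * (f x + lam) + id x * deriv f x - 30 * s ^ 2 * deriv (deriv f) x := by
      simp only [id, one_mul]
    rw [e]
    exact this
  have hrpos : 0 < r := hr₀pos.trans_le hr.1
  suffices hmain : 0 < φ r by
    have : f r + lam - 30 * s ^ 2 / r * deriv f r = φ r / r := by
      rw [hφ]; field_simp
    have h2 := div_pos hmain hrpos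
    linarith
  by_contra hneg
  push Not at hneg
  have hcont : ContinuousOn φ (Icc r₀ r) := fun x hx =>
    (hφd x (hmem x ⟨hx.1, hx.2.trans_lt hr.2⟩)).continuousAt.continuousWithinAt
  have hScl : IsCompact (Icc r₀ r ∩ φ ⁻¹' Iic 0) :=
    isCompact_Icc.of_isClosed_subset (hcont.preimage_isClosed_of_isClosed isClosed_Icc isClosed_Iic)
      inter_subset_left
  obtain ⟨r₁, ⟨hr₁, hφ₁⟩, hleast⟩ := hScl.exists_isLeast ⟨r, ⟨hr.1, le_rfl⟩, hneg⟩
  have hφ₁' : φ r₁ ≤ 0 := hφ₁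
  have hpos : ∀ x, r₀ ≤ x → x < r₁ → 0 < φ x := by
    intro x hx hx1
    by_contra hc
    push Not at hc
    exact absurd (hleast ⟨⟨hx, hx1.le.trans hr₁.2⟩, hc⟩) (not_le.2 hx1)
  have hr₁m : r₁ ∈ Ioo (0 : ℝ) rstar := hmem r₁ ⟨hr₁.1, hr₁.2.trans_lt hr.2⟩
  have hr₀m : r₀ ∈ Ioo (0 : ℝ) rstar := hmem r₀ ⟨le_rfl, hr₀.2⟩
  have h01 : r₀ < r₁ := by
    rcases hr₁.1.lt_or_eq with h | h
    · exact h
    · exfalso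
      rw [← h] at hφ₁'
      have e : φ r₀ = - (30 * s ^ 2 * deriv f r₀) := by
        simp only [hφ, hh₀]; ring
      have := mul_neg_of_pos_of_neg (show 0 < 30 * s ^ 2 by positivity) (hconc r₀ hr₀m).2
      linarith
  have hev : ∀ᶠ x in nhdsWithin r₁ (Iio r₁), 0 < φ x := by
    filter_upwards [Ioo_mem_nhdsLT h01] with x hx
    exact hpos x hx.1.le hx.2
  have hzero : φ r₁ = 0 := by
    apply le_antisymm hφ₁'
    exact ge_of_tendsto ((hφd r₁ hr₁m).continuousAt.tendsto.mono_left nhdsWithin_le_nhds)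
      (hev.mono fun x hx => hx.le)
  obtain ⟨c, hc, hce⟩ := exists_hasDerivAt_eq_slope f (deriv f) h01
    (fun x hx => (hdf x (hmem x ⟨hx.1, hx.2.trans_lt hr₁m.2⟩)).continuousAt.continuousWithinAt)
    (fun x hx => hdf x (hmem x ⟨hx.1.le, hx.2.trans hr₁m.2⟩))
  have hcl : deriv f r₁ < deriv f c :=
    hanti (hmem c ⟨hc.1.le, hc.2.trans hr₁m.2⟩) hr₁m hc.2
  have hp := (hconc r₁ hr₁m).2
  have hz : r₁ * (f r₁ + lam) = 30 * s ^ 2 * deriv f r₁ := by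
    have : φ r₁ = r₁ * (f r₁ + lam) - 30 * s ^ 2 * deriv f r₁ := rfl
    linarith
  have hsr : s ≤ r₀ := hr₀.1
  have h6 : 6 * s < r₁ := by
    rw [eq_div_iff (by linarith)] at hce
    have e1 : deriv f r₁ * (r₁ - r₀) < f r₁ + lam := by nlinarith
    have e2 : deriv f r₁ * (r₁ - s) < f r₁ + lam := by nlinarith
    have e3 : r₁ * (deriv f r₁ * (r₁ - s)) < 30 * s ^ 2 * deriv f r₁ := by
      rw [← hz]; exact mul_lt_mul_of_pos_left e2 hr₁m.1
    have e4 : 30 * s ^ 2 < r₁ * (r₁ - s) := by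
      by_contra hcc
      push Not at hcc
      nlinarith
    nlinarith [hr₁m.1]
  have hq : Real.sqrt (1 + (deriv f r₁) ^ 2) ≤ 1 - deriv f r₁ := by
    apply Real.sqrt_le_iff.2
    constructor <;> nlinarith
  have hD := alg_key s r₁ (deriv f r₁) (f r₁ + lam) (deriv (deriv f) r₁) lam
    (Real.sqrt (1 + (deriv f r₁) ^ 2)) hspos hn' h6 hp hlam₁ hlam₂ hz hq (by
      have := hode r₁ hr₁m
      unfold ProfileEq at this
      rw [this, hsn]; ring)
  have hsl := (hasDerivAt_iff_tendsto_slope.1 (hφd r₁ hr₁m)).mono_left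
    (nhdsWithin_mono r₁ (show Iio r₁ ⊆ {r₁}ᶜ from fun x (hx : x < r₁) => hx.ne))
  obtain ⟨x, ⟨hx1, hx2⟩, hx3⟩ :=
    ((hsl.eventually (lt_mem_nhds hD)).and hev |>.and self_mem_nhdsWithin).exists
  have hx3' : x < r₁ := hx3
  rw [slope_def_field, hzero, sub_zero] at hx1
  exact absurd hx1 (not_lt.2 (div_nonpos_of_nonneg_of_nonpos hx2.le (by linarith)))
end

section
/- Let n ≥ 2 be an integer and λ a real with −(23n + 4)/(28√n) ≤ λ < 0. Let r ≥ 7√n and suppose h is a real-valued function twice differentiable at r satisfying, at the point r: the equation h''/(1 + h'²) = (r − (n−1)/r)·h' − h + λ·(1 − √(1 + h'²)), together with h''(r) < 0, h'(r) ≤ −1, and h(r) > (30n/r)·h'(r). Then h''(r) < (1/4)·r·h'(r)³. -/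
open Real Set

/-- A pointwise differential inequality from the proof of Proposition 3.1: for
`-(23n+4)/(28√n) ≤ λ < 0` and `r ≥ 7√n`, if `h` satisfies the shifted profile equation
`h''/(1+h'²) = (r - (n-1)/r) h' - h + λ(1 - √(1+h'²))` at `r` with `h''(r) < 0`,
`h'(r) ≤ -1` and `h(r) > (30n/r) h'(r)`, then `h''(r) < (1/4) r h'(r)³`. -/
theorem pointwise_second_derivative_bound
    (n : ℕ) (hn : 2 ≤ n) (lam : ℝ)
    (hlam₁ : -(23 * (n : ℝ) + 4) / (28 * Real.sqrt n) ≤ lam) (hlam₂ : lam < 0)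
    (r : ℝ) (hr : 7 * Real.sqrt n ≤ r)
    (h : ℝ → ℝ)
    (hd1 : DifferentiableAt ℝ h r) (hd2 : DifferentiableAt ℝ (deriv h) r)
    (heq : deriv (deriv h) r / (1 + (deriv h r) ^ 2) =
      (r - ((n : ℝ) - 1) / r) * deriv h r - h r
        + lam * (1 - Real.sqrt (1 + (deriv h r) ^ 2)))
    (hconc : deriv (deriv h) r < 0)
    (hslope : deriv h r ≤ -1)
    (hbound : h r > (30 * (n : ℝ) / r) * deriv h r) :
    deriv (deriv h) r < (1 / 4) * r * (deriv h r) ^ 3 := by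
  generalize deriv (deriv h) r = q at *
  generalize deriv h r = d at *
  generalize h r = y at *
  have hn' : (2 : ℝ) ≤ n := by exact_mod_cast hn
  have hs : 0 < Real.sqrt n := Real.sqrt_pos.mpr (by linarith)
  have hss : Real.sqrt n * Real.sqrt n = n := Real.mul_self_sqrt (by linarith)
  generalize Real.sqrt (n : ℝ) = s at *
  generalize (n : ℝ) = N at *
  have hr0 : 0 < r := by linarith
  have hr2 : 49 * N ≤ r * r := by nlinarith
  have hN : 0 < N := by linarith
  have hS1 : Real.sqrt (1 + d ^ 2) ≤ 1 - d := by
    rw [Real.sqrt_le_left (by linarith)]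
    nlinarith
  have hL : -lam ≤ r * (23 * N + 4) / (196 * N) := by
    have h1 : (23 * N + 4) / (28 * s) ≤ r * (23 * N + 4) / (196 * N) := by
      rw [div_le_div_iff₀ (by positivity) (by positivity)]
      have h2 : 196 * N ≤ r * (28 * s) := by nlinarith
      have h3 : 0 ≤ 23 * N + 4 := by linarith
      nlinarith [mul_le_mul_of_nonneg_left h2 h3]
    rw [neg_div] at hlam₁
    linarith
  have hM : (31 * N - 1) / r ≤ r * (31 * N - 1) / (49 * N) := by
    rw [div_le_div_iff₀ (by positivity) (by positivity)]
    have h3 : 0 ≤ 31 * N - 1 := by linarith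
    nlinarith [mul_le_mul_of_nonneg_left hr2 h3]
  have hsum : r * (23 * N + 4) / (196 * N) + r * (31 * N - 1) / (49 * N) = 3 / 4 * r := by
    field_simp
    ring
  have hsplit : (N - 1) / r + 30 * N / r = (31 * N - 1) / r := by
    rw [← add_div]
    ring
  have hl : lam * (1 - Real.sqrt (1 + d ^ 2)) ≤ lam * d :=
    mul_le_mul_of_nonpos_left (by linarith) hlam₂.le
  have hA : r / 4 ≤ r - (N - 1) / r - 30 * N / r + lam := by linarith
  have hB : (r - (N - 1) / r - 30 * N / r + lam) * d ≤ r / 4 * d :=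
    mul_le_mul_of_nonpos_right hA (by linarith)
  have hC : q / (1 + d ^ 2) < r / 4 * d := by
    rw [heq]
    linarith
  rw [div_lt_iff₀ (by positivity)] at hC
  nlinarith [mul_pos hr0 (by linarith : 0 < -d)]
end

section
/- Let 0 < a < b < ∞ and let g : [a, b) → ℝ be differentiable with g(r) < 0 and g'(r) ≤ (1/4)·r·g(r)³ for all r ∈ [a, b), and suppose g(r) → −∞ as r → b⁻. Then g(r)² ≤ 4/(b² − r²) for all r ∈ [a, b); in particular g(r) ≥ −2/√(b² − r²) on [a, b). -/
open Real Set Filter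

/-- A calculus lemma from the proof of Proposition 3.1: if `g < 0` is differentiable
on `[a, b)`, satisfies `g' ≤ (1/4) r g³`, and `g(r) → -∞` as `r → b⁻`, then
`g(r)² ≤ 4/(b² - r²)`, hence `g(r) ≥ -2/√(b² - r²)`, on `[a, b)`. -/
theorem gradient_bound_before_blow_up
    (a b : ℝ) (ha : 0 < a) (hab : a < b)
    (g : ℝ → ℝ)
    (hdiff : ∀ r ∈ Ico a b, DifferentiableAt ℝ g r)
    (hneg : ∀ r ∈ Ico a b, g r < 0)
    (hineq : ∀ r ∈ Ico a b, deriv g r ≤ (1 / 4) * r * (g r) ^ 3)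
    (hblow : Tendsto g (nhdsWithin b (Iio b)) atBot) :
    ∀ r ∈ Ico a b, (g r) ^ 2 ≤ 4 / (b ^ 2 - r ^ 2) ∧
      g r ≥ -2 / Real.sqrt (b ^ 2 - r ^ 2) := by
  have hd : ∀ r ∈ Ico a b, HasDerivAt (fun r => (g r ^ 2)⁻¹ + r ^ 2 / 4)
      (-(2 * g r * deriv g r) / (g r ^ 2) ^ 2 + r / 2) r := by
    intro r hr
    have h0 : g r ^ 2 ≠ 0 := pow_ne_zero _ (hneg r hr).ne
    have h1 := (((hdiff r hr).hasDerivAt.pow 2).inv h0).add (((hasDerivAt_id r).pow 2).div_const 4)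
    refine h1.congr_deriv ?_
    simp
    ring
  have hanti : AntitoneOn (fun r => (g r ^ 2)⁻¹ + r ^ 2 / 4) (Ico a b) := by
    apply antitoneOn_of_deriv_nonpos (convex_Ico a b)
    · exact fun r hr => (hd r hr).continuousAt.continuousWithinAt
    · exact fun r hr => (hd r (interior_subset hr)).differentiableAt.differentiableWithinAt
    · intro r hr
      have hr' := interior_subset hr
      rw [(hd r hr').deriv]
      have hg := hneg r hr'
      have h4 : 0 < (g r ^ 2) ^ 2 := by have := hg.ne; positivity
      have h2 := mul_le_mul_of_nonpos_left (hineq r hr') (by linarith : 2 * g r ≤ 0)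
      have h3 : -(2 * g r * deriv g r) / (g r ^ 2) ^ 2 ≤ -(r / 2) := by
        rw [div_le_iff₀ h4]
        nlinarith
      linarith
  intro r hr
  have hlim : Tendsto (fun r => (g r ^ 2)⁻¹ + r ^ 2 / 4) (nhdsWithin b (Iio b))
      (nhds (0 + b ^ 2 / 4)) := by
    apply Tendsto.add
    · have h1 := (tendsto_inv_atBot_zero.comp hblow).pow 2
      simpa [Function.comp_def] using h1
    · exact ((by fun_prop : Continuous fun r : ℝ => r ^ 2 / 4).tendsto b).mono_left
        nhdsWithin_le_nhds
  have hle : 0 + b ^ 2 / 4 ≤ (g r ^ 2)⁻¹ + r ^ 2 / 4 := by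
    apply le_of_tendsto hlim
    filter_upwards [Ioo_mem_nhdsLT hr.2] with x hx
    exact hanti hr ⟨hr.1.trans hx.1.le, hx.2⟩ hx.1.le
  have hg := hneg r hr
  have hg2 : 0 < g r ^ 2 := by have := hg.ne; positivity
  have hpos : 0 < b ^ 2 - r ^ 2 := by nlinarith [hr.1, hr.2]
  have hmain : (g r) ^ 2 * (b ^ 2 - r ^ 2) ≤ 4 := by
    have h := mul_le_mul_of_nonneg_left hle hg2.le
    rw [mul_add, mul_add, mul_inv_cancel₀ hg2.ne'] at h
    linarith
  refine ⟨(le_div_iff₀ hpos).2 hmain, ?_⟩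
  have hs := Real.sqrt_pos.2 hpos
  rw [ge_iff_le, div_le_iff₀ hs]
  refine (abs_le_of_sq_le_sq' ?_ (by norm_num)).1
  rw [mul_pow, Real.sq_sqrt hpos.le]
  linarith
end

section
/- Let n ≥ 2 be an integer, let λ be a real with −2/√(n+2) < λ ≤ 0, and set A = ((−λ + √(λ² + 4n))/2)·√(λ² + 4n). Let w : [0, π/2] → ℝ be continuous, C² on (0, π/2], satisfy w''(φ) = −(n−1)·cot(φ)·w'(φ) − A·w(φ) for all φ ∈ (0, π/2], with w(0) = 1 and lim_{φ → 0⁺} w'(φ) = 0. Then w(π/2) < 0 and w'(π/2) < 0. -/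
open Real Set Filter

/-- a function vanishing at `0` with negative derivative is negative at the right end point -/
lemma neg_of_deriv_neg_aux (f f' : ℝ → ℝ) (c : ℝ) (hc : 0 < c)
    (hf : ContinuousOn f (Icc 0 c)) (h0 : f 0 = 0)
    (hd : ∀ x ∈ Ioo 0 c, HasDerivAt f (f' x) x) (hneg : ∀ x ∈ Ioo 0 c, f' x < 0) :
    f c < 0 := by
  have h := strictAntiOn_of_deriv_neg (convex_Icc 0 c) hf (by
    intro x hx
    rw [interior_Icc] at hx
    rw [(hd x hx).deriv]
    exact hneg x hx)
  have := h (left_mem_Icc.2 hc.le) (right_mem_Icc.2 hc.le) hc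
  rwa [h0] at this

lemma core_aux (k : ℕ) (A : ℝ) (hA1 : (k : ℝ) + 2 < A) (hA2 : A < 2 * ((k : ℝ) + 3))
    (w H d : ℝ → ℝ)
    (hw : ContinuousOn w (Icc 0 (π / 2))) (hH : ContinuousOn H (Icc 0 (π / 2)))
    (hw0 : w 0 = 1) (hH0 : H 0 = 0)
    (hdw : ∀ x ∈ Ioo 0 (π / 2), HasDerivAt w (H x) x)
    (hdH : ∀ x ∈ Ioo 0 (π / 2), HasDerivAt H (d x) x)
    (hd : ∀ x ∈ Ioo 0 (π / 2), sin x * d x = -((k : ℝ) + 1) * cos x * H x - A * w x * sin x) :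
    w (π / 2) < 0 ∧ H (π / 2) < 0 := by
  have hpi : 0 < π / 2 := by positivity
  have hk : (0 : ℝ) ≤ k := Nat.cast_nonneg k
  have hs : ∀ x ∈ Ioc 0 (π / 2), 0 < sin x := fun x hx =>
    sin_pos_of_pos_of_lt_pi hx.1 (by linarith [hx.2])
  have hcos : ∀ x ∈ Ioo 0 (π / 2), 0 < cos x := fun x hx =>
    cos_pos_of_mem_Ioo ⟨by linarith [hx.1], hx.2⟩
  have hsub : ∀ c ≤ π / 2, Icc 0 c ⊆ Icc 0 (π / 2) := fun c hc => Icc_subset_Icc_right hc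
  -- first quantity
  have hP : ∀ c ∈ Ioc 0 (π / 2), (∀ x ∈ Ioo 0 c, 0 < w x) → H c < 0 := by
    intro c hc hpos
    have := neg_of_deriv_neg_aux (fun x => sin x ^ (k + 1) * H x)
      (fun x => - (A * sin x ^ (k + 1) * w x)) c hc.1
      (by
        have := hH.mono (hsub c hc.2)
        fun_prop) (by simp)
      (by
        intro x hx
        have hx' : x ∈ Ioo 0 (π / 2) := ⟨hx.1, hx.2.trans_le hc.2⟩
        have h1 := ((hasDerivAt_sin x).pow (k + 1)).mul (hdH x hx')
        refine h1.congr_deriv ?_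
        simp only [Pi.pow_apply, Nat.add_sub_cancel]
        push_cast
        linear_combination (sin x) ^ k * hd x hx')
      (by
        intro x hx
        have h1 := hs x ⟨hx.1, hx.2.le.trans hc.2⟩
        have h2 := hpos x hx
        have : 0 < A := by linarith
        have : 0 < A * sin x ^ (k + 1) * w x := by positivity
        linarith)
    have h1 := pow_pos (hs c hc) (k + 1)
    by_contra hcon
    push Not at hcon
    have := mul_nonneg h1.le hcon
    linarith
  -- second quantity
  have hG : ∀ c ∈ Ioc 0 (π / 2), (∀ x ∈ Ioo 0 c, H x < 0) →
      0 < A * w c * sin c * cos c + H c * (((k : ℝ) + 2) * cos c ^ 2 - sin c ^ 2) := by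
    intro c hc hneg
    have := neg_of_deriv_neg_aux (fun x => -(sin x ^ (k + 1)) *
        (A * w x * sin x * cos x + H x * (((k : ℝ) + 2) * cos x ^ 2 - sin x ^ 2)))
      (fun x => (2 * ((k : ℝ) + 3) - A) * sin x ^ (k + 1) * H x * sin x * cos x) c hc.1
      (by
        have := hH.mono (hsub c hc.2)
        have := hw.mono (hsub c hc.2)
        fun_prop) (by simp)
      (by
        intro x hx
        have hx' : x ∈ Ioo 0 (π / 2) := ⟨hx.1, hx.2.trans_le hc.2⟩
        have hS := hasDerivAt_sin x
        have hC := hasDerivAt_cos x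
        have h1 := ((hS.pow (k + 1)).neg).mul
          (((((hdw x hx').const_mul A).mul hS).mul hC).add
          ((hdH x hx').mul (((hC.pow 2).const_mul ((k : ℝ) + 2)).sub (hS.pow 2))))
        refine h1.congr_deriv ?_
        simp only [Pi.pow_apply, Nat.add_sub_cancel, Pi.add_apply, Pi.mul_apply, Pi.neg_apply,
          Pi.sub_apply]
        push_cast
        linear_combination -(sin x) ^ k * (((k : ℝ) + 2) * cos x ^ 2 - sin x ^ 2) * hd x hx')
      (by
        intro x hx
        have h1 := hs x ⟨hx.1, hx.2.le.trans hc.2⟩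
        have h3 := hcos x ⟨hx.1, hx.2.trans_le hc.2⟩
        have h2 : 0 < - H x := by linarith [hneg x hx]
        have : 0 < 2 * ((k : ℝ) + 3) - A := by linarith
        have : 0 < (2 * ((k : ℝ) + 3) - A) * sin x ^ (k + 1) * (- H x) * sin x * cos x := by
          positivity
        linarith)
    have h1 := pow_pos (hs c hc) (k + 1)
    by_contra hcon
    push Not at hcon
    have := mul_nonneg_of_nonpos_of_nonpos (neg_nonpos.2 h1.le) hcon
    linarith
  -- negativity near zero
  have hstep : ∀ c ∈ Ioc 0 (π / 2), (∀ x ∈ Ioo 0 c, H x < 0) → H c < 0 := by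
    intro c hc hneg
    by_contra hcon
    push Not at hcon
    have hg := hG c hc hneg
    rcases hc.2.lt_or_eq with hlt | heq
    · -- interior: by continuity `H c ≤ 0`
      have hHc : H c = 0 := by
        refine le_antisymm ?_ hcon
        have hct : Tendsto H (nhdsWithin c (Iio c)) (nhds (H c)) :=
          (hdH c ⟨hc.1, hlt⟩).continuousAt.tendsto.mono_left nhdsWithin_le_nhds
        refine le_of_tendsto hct ?_
        filter_upwards [Ioo_mem_nhdsLT hc.1] with x hx using (hneg x hx).le
      rw [hHc] at hg
      have h1 := hs c hc
      have h3 := hcos c ⟨hc.1, hlt⟩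
      have hA : 0 < A := by linarith
      have hwc : 0 < w c := by
        by_contra hw'
        push Not at hw'
        have : 0 ≤ A * (-w c) * sin c * cos c := by
          have : 0 ≤ - w c := by linarith
          positivity
        linarith
      have hanti : StrictAntiOn w (Icc 0 c) :=
        strictAntiOn_of_deriv_neg (convex_Icc 0 c) (hw.mono (hsub c hc.2)) (by
          intro x hx
          rw [interior_Icc] at hx
          rw [(hdw x ⟨hx.1, hx.2.trans_le hc.2⟩).deriv]
          exact hneg x hx)
      have := hP c hc (fun x hx => hwc.trans
        (hanti ⟨hx.1.le, hx.2.le⟩ (right_mem_Icc.2 hc.1.le) hx.2))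
      linarith
    · subst heq
      simp at hg
      linarith
  have hnear : ∃ δ ∈ Ioc 0 (π / 2), ∀ x ∈ Ioc 0 δ, H x < 0 := by
    have h1 : ∀ᶠ x in nhdsWithin 0 (Icc 0 (π / 2)), 0 < w x :=
      (hw 0 (left_mem_Icc.2 hpi.le)).eventually (lt_mem_nhds (by rw [hw0]; norm_num))
    rw [eventually_nhdsWithin_iff, Metric.eventually_nhds_iff] at h1
    obtain ⟨e, he, h⟩ := h1
    refine ⟨min (e / 2) (π / 2), ⟨by positivity, min_le_right _ _⟩, ?_⟩
    intro x hx
    have hx1 : x ≤ e / 2 := hx.2.trans (min_le_left _ _)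
    have hx2 : x ≤ π / 2 := hx.2.trans (min_le_right _ _)
    refine hP x ⟨hx.1, hx2⟩ fun y hy => h ?_ ⟨hy.1.le, hy.2.le.trans hx2⟩
    rw [Real.dist_eq, sub_zero, abs_of_pos hy.1]
    linarith [hy.2]
  have hHneg : ∀ x ∈ Ioc 0 (π / 2), H x < 0 := by
    obtain ⟨δ, hδ, hδn⟩ := hnear
    by_contra hcon
    push Not at hcon
    obtain ⟨b, hb, hHb⟩ := hcon
    have hδb : δ < b := by
      by_contra hh
      push Not at hh
      linarith [hδn b ⟨hb.1, hh⟩]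
    -- first point where `H ≥ 0`
    have hcl : IsCompact (Icc δ b ∩ H ⁻¹' (Ici 0)) := by
      refine isCompact_Icc.of_isClosed_subset ?_ inter_subset_left
      exact (hH.mono (Icc_subset_Icc hδ.1.le hb.2)).preimage_isClosed_of_isClosed
        isClosed_Icc isClosed_Ici
    obtain ⟨c, hc⟩ := hcl.exists_isLeast ⟨b, ⟨hδb.le, le_rfl⟩, hHb⟩
    have hc0 : c ∈ Ioc 0 (π / 2) := ⟨hδ.1.trans_le hc.1.1.1, hc.1.1.2.trans hb.2⟩
    have := hstep c hc0 (by
      intro x hx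
      by_contra hh
      push Not at hh
      rcases le_or_gt x δ with h1 | h1
      · linarith [hδn x ⟨hx.1, h1⟩]
      · have := hc.2 ⟨⟨h1.le, hx.2.le.trans hc.1.1.2⟩, hh⟩
        linarith [hx.2])
    have h2 : 0 ≤ H c := hc.1.2
    linarith
  refine ⟨?_, hHneg _ (right_mem_Ioc.2 hpi)⟩
  have hE := neg_of_deriv_neg_aux (fun x => ((k : ℝ) + 2) * (sin x ^ (k + 1) *
        (H x * cos x + w x * sin x)) + (A - ((k : ℝ) + 2)) * (sin x ^ (k + 2) * w x))
      (fun x => (A - ((k : ℝ) + 2)) * sin x ^ (k + 2) * H x) (π / 2) hpi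
      (by fun_prop) (by simp)
      (by
        intro x hx
        have hS := hasDerivAt_sin x
        have hC := hasDerivAt_cos x
        have h1 := (((hS.pow (k + 1)).mul
          (((hdH x hx).mul hC).add ((hdw x hx).mul hS))).const_mul ((k : ℝ) + 2)).add
          (((hS.pow (k + 2)).mul (hdw x hx)).const_mul (A - ((k : ℝ) + 2)))
        refine h1.congr_deriv ?_
        have e : k + 2 - 1 = k + 1 := by omega
        simp only [Pi.pow_apply, Nat.add_sub_cancel, Pi.add_apply, Pi.mul_apply, e]
        push_cast
        linear_combination ((k : ℝ) + 2) * (sin x) ^ k * cos x * hd x hx)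
      (by
        intro x hx
        have h1 := hs x ⟨hx.1, hx.2.le⟩
        have h2 : 0 < - H x := by linarith [hHneg x ⟨hx.1, hx.2.le⟩]
        have : 0 < A - ((k : ℝ) + 2) := by linarith
        have : 0 < (A - ((k : ℝ) + 2)) * sin x ^ (k + 2) * (- H x) := by
          positivity
        linarith)
  simp at hE
  by_contra hcon
  push Not at hcon
  have : 0 ≤ A * w (π / 2) := mul_nonneg (by linarith) hcon
  linarith

lemma A_bounds_aux (x lam A : ℝ) (hx : 2 ≤ x) (h1 : -2 / √(x + 2) < lam) (h2 : lam ≤ 0)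
    (hA : A = ((-lam + √(lam ^ 2 + 4 * x)) / 2) * √(lam ^ 2 + 4 * x)) :
    x < A ∧ A < 2 * (x + 1) := by
  have hs2 : √(lam ^ 2 + 4 * x) ^ 2 = lam ^ 2 + 4 * x := sq_sqrt (by positivity)
  have hs0 : 0 ≤ √(lam ^ 2 + 4 * x) := sqrt_nonneg _
  have ht2 : √(x + 2) ^ 2 = x + 2 := sq_sqrt (by positivity)
  have ht0 : 0 < √(x + 2) := sqrt_pos.2 (by positivity)
  set s := √(lam ^ 2 + 4 * x)
  set t := √(x + 2)
  rw [div_lt_iff₀ ht0] at h1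
  have hm : (-lam * t) ^ 2 < 4 := by
    have : 0 ≤ -lam * t := mul_nonneg (by linarith) ht0.le
    nlinarith
  have hl : lam ^ 2 * (x + 2) < 4 := by rw [← ht2]; nlinarith
  have hst : s * t < 2 * (x + 1) := by
    refine lt_of_pow_lt_pow_left₀ 2 (by linarith) ?_
    rw [mul_pow, hs2, ht2]
    nlinarith
  constructor
  · nlinarith [mul_nonneg (neg_nonneg.2 h2) hs0, sq_nonneg lam]
  · have hlt : -lam * t < 2 := by linarith
    have h3 : (-lam * t) * (s * t) < 4 * (x + 1) := by
      have : 0 ≤ -lam * t := mul_nonneg (by linarith) ht0.le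
      have : 0 ≤ s * t := by positivity
      nlinarith
    have h4 : (s * t) ^ 2 < (2 * (x + 1)) ^ 2 := by
      have : 0 ≤ s * t := by positivity
      nlinarith
    have h5 : A * t ^ 2 = ((-lam * t) * (s * t) + (s * t) ^ 2) / 2 := by rw [hA]; ring
    rw [ht2] at h5
    nlinarith

/-- Lemma 3.4: for `-2/√(n+2) < λ ≤ 0` and `A = ((-λ+√(λ²+4n))/2)·√(λ²+4n)`, the solution
of the linearized equation `w'' = -(n-1) cot(φ) w' - A w` on `(0, π/2]` with `w(0) = 1`
and `w'(φ) → 0` as `φ → 0⁺` satisfies `w(π/2) < 0` and `w'(π/2) < 0`. -/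
theorem linearization_near_sphere
    (n : ℕ) (hn : 2 ≤ n) (lam : ℝ)
    (hlam₁ : -2 / Real.sqrt ((n : ℝ) + 2) < lam) (hlam₂ : lam ≤ 0)
    (A : ℝ)
    (hA : A = ((-lam + Real.sqrt (lam ^ 2 + 4 * n)) / 2) * Real.sqrt (lam ^ 2 + 4 * n))
    (w : ℝ → ℝ)
    (hcont : ContinuousOn w (Icc 0 (Real.pi / 2)))
    (hC2 : ContDiffOn ℝ 2 w (Ioc 0 (Real.pi / 2)))
    (hode : ∀ φ ∈ Ioc (0 : ℝ) (Real.pi / 2),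
      deriv (deriv w) φ =
        -((n : ℝ) - 1) * (Real.cos φ / Real.sin φ) * deriv w φ - A * w φ)
    (hw0 : w 0 = 1)
    (hw0' : Tendsto (deriv w) (nhdsWithin 0 (Ioi 0)) (nhds 0)) :
    w (Real.pi / 2) < 0 ∧ deriv w (Real.pi / 2) < 0 := by
  have hpi : 0 < π / 2 := by positivity
  obtain ⟨k, rfl⟩ : ∃ k, n = k + 2 := ⟨n - 2, by omega⟩
  have hkk : (2 : ℝ) ≤ ((k + 2 : ℕ) : ℝ) := by exact_mod_cast hn
  obtain ⟨hA1, hA2⟩ := A_bounds_aux _ lam A hkk hlam₁ hlam₂ hA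
  push_cast at hA1 hA2
  have hk : (0 : ℝ) ≤ k := Nat.cast_nonneg k
  set D := derivWithin w (Ioc 0 (π / 2)) with hD
  set H : ℝ → ℝ := fun x => if x ≤ 0 then 0 else D x with hHdef
  have hHpos : ∀ x, 0 < x → H x = D x := fun x hx => by simp [hHdef, not_le.2 hx]
  have hDc : ContinuousOn D (Ioc 0 (π / 2)) :=
    hC2.continuousOn_derivWithin (uniqueDiffOn_Ioc _ _) (by norm_num)
  have hIoc : ∀ x ∈ Ioo 0 (π / 2), Ioc 0 (π / 2) ∈ nhds x := fun x hx =>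
    Ioc_mem_nhds hx.1 hx.2
  have hHd : ∀ x ∈ Ioo 0 (π / 2), H x = deriv w x := fun x hx => by
    rw [hHpos x hx.1, hD, derivWithin_of_mem_nhds (hIoc x hx)]
  have hev : ∀ x ∈ Ioo 0 (π / 2), H =ᶠ[nhds x] deriv w := fun x hx => by
    filter_upwards [Ioo_mem_nhds hx.1 hx.2] with y hy using hHd y hy
  have hHc : ContinuousOn H (Icc 0 (π / 2)) := by
    intro x hx
    rcases hx.1.eq_or_lt with h0 | h0
    · subst h0
      have hH0 : H 0 = 0 := by simp [hHdef]
      have h1 : Tendsto H (nhdsWithin 0 (Ioi 0)) (nhds (H 0)) := by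
        rw [hH0]
        refine hw0'.congr' ?_
        filter_upwards [Ioo_mem_nhdsGT hpi] with y hy using (hHd y hy).symm
      have h2 : ContinuousWithinAt H (Ioi 0) 0 := h1
      exact (continuousWithinAt_Ioi_iff_Ici.1 h2).mono Icc_subset_Ici_self
    · have h1 : ContinuousWithinAt D (Icc 0 (π / 2)) x := by
        refine (hDc x ⟨h0, hx.2⟩).mono_of_mem_nhdsWithin ?_
        filter_upwards [self_mem_nhdsWithin, mem_nhdsWithin_of_mem_nhds (Ioi_mem_nhds h0)]
          with y hy hy' using ⟨hy', hy.2⟩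
      refine h1.congr_of_eventuallyEq ?_ (hHpos x h0)
      filter_upwards [mem_nhdsWithin_of_mem_nhds (Ioi_mem_nhds h0)] with y hy using hHpos y hy
  have hdw : ∀ x ∈ Ioo 0 (π / 2), HasDerivAt w (H x) x := by
    intro x hx
    rw [hHd x hx]
    exact ((hC2.contDiffAt (hIoc x hx)).differentiableAt (by norm_num)).hasDerivAt
  have hdH : ∀ x ∈ Ioo 0 (π / 2), HasDerivAt H (deriv (deriv w) x) x := by
    intro x hx
    have h1 : ContDiffOn ℝ 1 (deriv w) (Ioo 0 (π / 2)) :=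
      ((contDiffOn_succ_iff_deriv_of_isOpen (n := 1) isOpen_Ioo).1
        (hC2.mono Ioo_subset_Ioc_self)).2.2
    have h2 : DifferentiableAt ℝ (deriv w) x :=
      (h1.contDiffAt (Ioo_mem_nhds hx.1 hx.2)).differentiableAt (by norm_num)
    exact h2.hasDerivAt.congr_of_eventuallyEq (hev x hx)
  have hcore := core_aux k A hA1 (by linarith) w H (deriv (deriv w)) hcont hHc hw0
    (by simp [hHdef]) hdw hdH (by
      intro x hx
      have hs : sin x ≠ 0 := (sin_pos_of_pos_of_lt_pi hx.1 (by linarith [hx.2])).ne'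
      rw [hode x ⟨hx.1, hx.2.le⟩, hHd x hx]
      push_cast
      field_simp
      ring)
  refine ⟨hcore.1, ?_⟩
  have hne : deriv (deriv w) (π / 2) ≠ 0 := by
    rw [hode _ (right_mem_Ioc.2 hpi)]
    simp only [cos_pi_div_two, zero_div, mul_zero, zero_mul, zero_sub]
    have : A ≠ 0 := by linarith
    exact neg_ne_zero.2 (mul_ne_zero this hcore.1.ne)
  have hca : ContinuousAt (deriv w) (π / 2) :=
    (differentiableAt_of_deriv_ne_zero hne).continuousAt
  have t1 : Tendsto (deriv w) (nhdsWithin (π / 2) (Iio (π / 2))) (nhds (deriv w (π / 2))) :=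
    hca.tendsto.mono_left nhdsWithin_le_nhds
  have t2 : Tendsto (deriv w) (nhdsWithin (π / 2) (Iio (π / 2))) (nhds (H (π / 2))) := by
    have h1 : Tendsto H (nhdsWithin (π / 2) (Iio (π / 2))) (nhds (H (π / 2))) := by
      refine (hHc _ (right_mem_Icc.2 hpi.le)).mono_left ?_
      rw [nhdsWithin_le_iff]
      filter_upwards [Ioo_mem_nhdsLT hpi] with y hy using ⟨hy.1.le, hy.2.le⟩
    refine h1.congr' ?_
    filter_upwards [Ioo_mem_nhdsLT hpi] with y hy using hHd y hy
  rw [tendsto_nhds_unique t1 t2]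
  exact hcore.2
end

section
/- Let n ≥ 2 be an integer, let λ be a real with −2/√(n+2) < λ ≤ 0, and set A = ((−λ + √(λ² + 4n))/2)·√(λ² + 4n). Let w : [0, 1] → ℝ be C² and satisfy the Legendre-type equation (1 − ξ²)·w''(ξ) = n·ξ·w'(ξ) − A·w(ξ) for all ξ ∈ [0, 1], with w(1) = 1 and w'(1) = A/n. Then w(0) < 0 and w'(0) > 0. -/
open Real Set

lemma A_bounds_aux_s11 (n : ℕ) (hn : 2 ≤ n) (lam : ℝ)
    (hlam₁ : -2 / Real.sqrt ((n : ℝ) + 2) < lam) (hlam₂ : lam ≤ 0)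
    (A : ℝ)
    (hA : A = ((-lam + Real.sqrt (lam ^ 2 + 4 * n)) / 2) * Real.sqrt (lam ^ 2 + 4 * n)) :
    (n : ℝ) < A ∧ A < 2 * n + 2 := by
  have hn' : (2 : ℝ) ≤ n := by exact_mod_cast hn
  set s := Real.sqrt (lam ^ 2 + 4 * n) with hs
  have hs0 : 0 ≤ s := Real.sqrt_nonneg _
  have hs2 : s ^ 2 = lam ^ 2 + 4 * n := Real.sq_sqrt (by positivity)
  set t := Real.sqrt ((n : ℝ) + 2) with ht
  have ht0 : 0 < t := Real.sqrt_pos.2 (by positivity)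
  have ht2 : t ^ 2 = n + 2 := Real.sq_sqrt (by positivity)
  rw [div_lt_iff₀ ht0] at hlam₁
  obtain ⟨m, rfl⟩ : ∃ m, lam = -m := ⟨-lam, by ring⟩
  have hm : 0 ≤ m := by linarith
  have hmt : m * t < 2 := by linarith
  have hmt2 : (m * t) ^ 2 < 2 ^ 2 := pow_lt_pow_left₀ hmt (by positivity) (by norm_num)
  have hm2 : m ^ 2 * (n + 2) < 4 := by rw [← ht2]; nlinarith
  have hms : 0 ≤ m * s := by positivity
  constructor
  · rw [hA]; nlinarith [sq_nonneg m]
  · have h4 : 0 < 4 - m ^ 2 := by nlinarith [sq_nonneg m]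
    have : m * s < 4 - m ^ 2 := by
      apply lt_of_pow_lt_pow_left₀ 2 h4.le
      rw [mul_pow, hs2]; nlinarith
    rw [hA]; nlinarith

theorem legendre_sign_at_zero
    (n : ℕ) (hn : 2 ≤ n) (lam : ℝ)
    (hlam₁ : -2 / Real.sqrt ((n : ℝ) + 2) < lam) (hlam₂ : lam ≤ 0)
    (A : ℝ)
    (hA : A = ((-lam + Real.sqrt (lam ^ 2 + 4 * n)) / 2) * Real.sqrt (lam ^ 2 + 4 * n))
    (w : ℝ → ℝ)
    (hC2 : ContDiffOn ℝ 2 w (Icc 0 1))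
    (hode : ∀ ξ ∈ Icc (0 : ℝ) 1,
      (1 - ξ ^ 2) * deriv (deriv w) ξ = (n : ℝ) * ξ * deriv w ξ - A * w ξ)
    (hw1 : w 1 = 1) (hw1' : deriv w 1 = A / n) :
    w 0 < 0 ∧ deriv w 0 > 0 := by
  obtain ⟨hA1, hA2⟩ := A_bounds_aux_s11 n hn lam hlam₁ hlam₂ A hA
  clear hA hlam₁ hlam₂
  have hn' : (2 : ℝ) ≤ n := by exact_mod_cast hn
  have hud : UniqueDiffOn ℝ (Icc (0 : ℝ) 1) := uniqueDiffOn_Icc zero_lt_one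
  set z := derivWithin w (Icc 0 1) with hz
  have hzC : ContDiffOn ℝ 1 z (Icc 0 1) := hC2.derivWithin hud (by norm_num)
  have hzc : ContinuousOn z (Icc 0 1) := hzC.continuousOn
  have hwc : ContinuousOn w (Icc 0 1) := hC2.continuousOn
  have hnhds : ∀ x ∈ Ioo (0 : ℝ) 1, Icc (0 : ℝ) 1 ∈ nhds x := fun x hx => Icc_mem_nhds hx.1 hx.2
  have hzeq : ∀ x ∈ Ioo (0 : ℝ) 1, z x = deriv w x := fun x hx =>
    derivWithin_of_mem_nhds (hnhds x hx)
  have hwd : ∀ x ∈ Ioo (0 : ℝ) 1, HasDerivAt w (z x) x := by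
    intro x hx
    rw [hzeq x hx]
    exact ((hC2.contDiffAt (hnhds x hx)).differentiableAt (by norm_num)).hasDerivAt
  have hzd : ∀ x ∈ Ioo (0 : ℝ) 1, HasDerivAt z ((n * x * z x - A * w x) / (1 - x ^ 2)) x := by
    intro x hx
    have h1 := ((hzC.contDiffAt (hnhds x hx)).differentiableAt (by norm_num)).hasDerivAt
    have h2 : deriv z x = deriv (deriv w) x := by
      apply Filter.EventuallyEq.deriv_eq
      filter_upwards [isOpen_Ioo.mem_nhds hx] with y hy using hzeq y hy
    have h3 := hode x ⟨hx.1.le, hx.2.le⟩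
    have h4 : (1 - x ^ 2) ≠ 0 := by nlinarith [hx.1, hx.2]
    rw [← hzeq x hx, mul_comm] at h3
    rwa [h2, eq_div_of_mul_eq h4 h3] at h1
  have hz1 : z 1 = A / n := by
    rw [← hw1']
    have : DifferentiableAt ℝ w 1 := by
      by_contra h
      rw [deriv_zero_of_not_differentiableAt h] at hw1'
      have : 0 < A / n := by apply div_pos <;> linarith
      linarith
    exact this.derivWithin (hud 1 (by simp))
  -- weight
  set h : ℝ → ℝ := fun x => (1 - x ^ 2) ^ ((n : ℝ) / 2) with hh
  have hhc : Continuous h := by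
    apply Continuous.rpow_const (by fun_prop)
    intro x; right; positivity
  have hh1 : h 1 = 0 := by
    simp only [hh]
    rw [one_pow, sub_self, Real.zero_rpow (by positivity)]
  have hpos : ∀ x ∈ Ico (0 : ℝ) 1, 0 < 1 - x ^ 2 := by
    intro x hx; nlinarith [hx.1, hx.2]
  have hhpos : ∀ x ∈ Ico (0 : ℝ) 1, 0 < h x := fun x hx => Real.rpow_pos_of_pos (hpos x hx) _
  have hhd : ∀ x ∈ Ioo (0 : ℝ) 1, HasDerivAt h (-(n * x / (1 - x ^ 2)) * h x) x := by
    intro x hx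
    have hp := hpos x ⟨hx.1.le, hx.2⟩
    have h1 : HasDerivAt (fun x : ℝ => 1 - x ^ 2) (-(2 * x)) x := by
      simpa using (hasDerivAt_pow 2 x).const_sub 1
    have h2 := h1.rpow_const (p := (n : ℝ) / 2) (Or.inl hp.ne')
    convert h2 using 1
    rw [Real.rpow_sub_one hp.ne']
    simp only [hh]; field_simp
  set g : ℝ → ℝ := fun x => n * x * z x - A * w x with hg
  have hgc : ContinuousOn g (Icc 0 1) := by
    simp only [hg]; fun_prop
  have hgd : ∀ x ∈ Ioo (0 : ℝ) 1,
      HasDerivAt g ((n - A) * z x + n * x * (g x / (1 - x ^ 2))) x := by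
    intro x hx
    have h1 := (((hasDerivAt_id x).const_mul (n : ℝ)).mul (hzd x hx)).sub ((hwd x hx).const_mul A)
    refine HasDerivAt.congr_deriv (f := g) h1 ?_
    simp only [hg, id]; ring
  have hFd : ∀ x ∈ Ioo (0 : ℝ) 1, HasDerivAt (fun x => h x * g x) (h x * ((n - A) * z x)) x := by
    intro x hx
    refine HasDerivAt.congr_deriv (f := fun x => h x * g x) ((hhd x hx).mul (hgd x hx)) ?_
    ring
  have hGd : ∀ x ∈ Ioo (0 : ℝ) 1,
      HasDerivAt (fun x => h x * (x * g x - (1 - x ^ 2) * z x))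
        (h x * (x * z x * (2 * n + 2 - A))) x := by
    intro x hx
    have hp := hpos x ⟨hx.1.le, hx.2⟩
    have h1 : HasDerivAt (fun x : ℝ => 1 - x ^ 2) (-(2 * x)) x := by
      simpa using (hasDerivAt_pow 2 x).const_sub 1
    refine HasDerivAt.congr_deriv (f := fun x => h x * (x * g x - (1 - x ^ 2) * z x))
      ((hhd x hx).mul (((hasDerivAt_id x).mul (hgd x hx)).sub (h1.mul (hzd x hx)))) ?_
    change -(n * x / (1 - x ^ 2)) * h x * (x * g x - (1 - x ^ 2) * z x) +
      h x * (1 * g x + x * ((n - A) * z x + n * x * (g x / (1 - x ^ 2))) -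
        (-(2 * x) * z x + (1 - x ^ 2) * (g x / (1 - x ^ 2)))) = _
    field_simp
    ring
  have key : ∀ η ∈ Ico (0 : ℝ) 1, (∀ x ∈ Ioo η 1, 0 < z x) → 0 < g η ∧ 0 < z η := by
    intro η hη hzp
    have hsub : Icc η 1 ⊆ Icc 0 1 := Icc_subset_Icc_left hη.1
    have hgpos : 0 < g η := by
      have hanti : StrictAntiOn (fun x => h x * g x) (Icc η 1) := by
        apply strictAntiOn_of_deriv_neg (convex_Icc _ _)
        · exact hhc.continuousOn.mul (hgc.mono hsub)
        · intro x hx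
          rw [interior_Icc] at hx
          have hx' : x ∈ Ioo (0 : ℝ) 1 := ⟨hη.1.trans_lt hx.1, hx.2⟩
          rw [(hFd x hx').deriv]
          exact mul_neg_of_pos_of_neg (hhpos x ⟨hx'.1.le, hx'.2⟩)
            (mul_neg_of_neg_of_pos (by linarith) (hzp x hx))
      have := hanti (left_mem_Icc.2 hη.2.le) (right_mem_Icc.2 hη.2.le) hη.2
      simp only [hh1, zero_mul] at this
      exact (pos_iff_pos_of_mul_pos this).1 (hhpos η hη)
    refine ⟨hgpos, ?_⟩
    have hmono : StrictMonoOn (fun x => h x * (x * g x - (1 - x ^ 2) * z x)) (Icc η 1) := by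
      apply strictMonoOn_of_deriv_pos (convex_Icc _ _)
      · have h1 := hgc.mono hsub
        have h2 := hzc.mono hsub
        have h3 := hhc.continuousOn (s := Icc η 1)
        exact h3.mul ((continuousOn_id.mul h1).sub ((by fun_prop : ContinuousOn (fun x : ℝ => 1 - x ^ 2) (Icc η 1)).mul h2))
      · intro x hx
        rw [interior_Icc] at hx
        have hx' : x ∈ Ioo (0 : ℝ) 1 := ⟨hη.1.trans_lt hx.1, hx.2⟩
        rw [(hGd x hx').deriv]
        exact mul_pos (hhpos x ⟨hx'.1.le, hx'.2⟩)
          (mul_pos (mul_pos hx'.1 (hzp x hx)) (by linarith))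
    have := hmono (left_mem_Icc.2 hη.2.le) (right_mem_Icc.2 hη.2.le) hη.2
    simp only [hh1, zero_mul] at this
    have h5 : η * g η - (1 - η ^ 2) * z η < 0 := by
      by_contra hc
      push Not at hc
      exact absurd this (not_lt.2 (mul_nonneg (hhpos η hη).le hc))
    have h6 : 0 ≤ η * g η := mul_nonneg hη.1 hgpos.le
    have h7 : 0 < (1 - η ^ 2) * z η := by linarith
    exact (pos_iff_pos_of_mul_pos h7).1 (hpos η hη)
  have hzpos : ∀ x ∈ Icc (0 : ℝ) 1, 0 < z x := by
    by_contra hc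
    push Not at hc
    obtain ⟨a, ha, hza⟩ := hc
    have hcomp : IsCompact (Icc (0 : ℝ) 1 ∩ z ⁻¹' Iic 0) :=
      isCompact_Icc.of_isClosed_subset
        (hzc.preimage_isClosed_of_isClosed isClosed_Icc isClosed_Iic) inter_subset_left
    obtain ⟨η, ⟨hη, hzη⟩, hmax⟩ := hcomp.exists_isGreatest ⟨a, ha, hza⟩
    have hzη' : z η ≤ 0 := hzη
    have hη1 : η < 1 := by
      rcases hη.2.lt_or_eq with h | h
      · exact h
      · rw [h, hz1] at hzη'
        have : 0 < A / n := by apply div_pos <;> linarith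
        linarith
    have := (key η ⟨hη.1, hη1⟩ (by
      intro x hx
      by_contra hx0
      have := hmax ⟨⟨hη.1.trans hx.1.le, hx.2.le⟩, not_lt.1 hx0⟩
      linarith [hx.1])).2
    linarith
  have hg0 := (key 0 (by simp) (fun x hx => hzpos x ⟨hx.1.le, hx.2.le⟩)).1
  have hz0 : 0 < z 0 := hzpos 0 (by simp)
  have hw0 : w 0 < 0 := by
    simp only [hg] at hg0
    nlinarith
  refine ⟨hw0, ?_⟩
  by_cases hd : DifferentiableAt ℝ w 0
  · rw [← hd.derivWithin (hud 0 (by simp))]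
    exact hz0
  · exfalso
    have hd0 := deriv_zero_of_not_differentiableAt hd
    have h0 := hode 0 (by simp)
    have hdd : DifferentiableAt ℝ (deriv w) 0 := by
      by_contra hdd
      rw [deriv_zero_of_not_differentiableAt hdd] at h0
      nlinarith
    have ht1 : Filter.Tendsto (deriv w) (nhdsWithin 0 (Ioo 0 1)) (nhds 0) := by
      have := hdd.continuousAt.tendsto
      rw [hd0] at this
      exact this.mono_left nhdsWithin_le_nhds
    have ht2 : Filter.Tendsto z (nhdsWithin 0 (Ioo 0 1)) (nhds (z 0)) :=
      (hzc 0 (by simp)).mono_left (nhdsWithin_mono _ Ioo_subset_Icc_self)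
    have ht3 : Filter.Tendsto (deriv w) (nhdsWithin 0 (Ioo 0 1)) (nhds (z 0)) :=
      ht2.congr' (by filter_upwards [self_mem_nhdsWithin] with x hx using hzeq x hx)
    have : (nhdsWithin (0 : ℝ) (Ioo 0 1)).NeBot := by
      rw [nhdsWithin_Ioo_eq_nhdsGT zero_lt_one]; infer_instance
    have := tendsto_nhds_unique ht1 ht3
    linarith
end

section
/- Let n ≥ 2 be an integer and set A(λ) = ((−λ + √(λ² + 4n))/2)·√(λ² + 4n) for λ ∈ ℝ. Then: (i) for every λ ≤ 0 one has A(λ) > n; and (ii) for every λ ≤ 0, A(λ) < 2n + 2 holds if and only if λ > −2/√(n+2). In particular, for −2/√(n+2) < λ ≤ 0 one has n < A(λ) < 2n + 2. -/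
/-- The coefficient `A(λ) = ((-λ+√(λ²+4n))/2)·√(λ²+4n)` of the linearization of the
rotational `λ`-hypersurface equation around the round sphere. -/
noncomputable def Acoef (n : ℕ) (lam : ℝ) : ℝ :=
  ((-lam + Real.sqrt (lam ^ 2 + 4 * n)) / 2) * Real.sqrt (lam ^ 2 + 4 * n)

/-- Sign conditions from the proof of Lemma 3.4: for `λ ≤ 0` one has `A(λ) > n`, and
`A(λ) < 2n+2` iff `λ > -2/√(n+2)`; in particular `n < A(λ) < 2n+2` for
`-2/√(n+2) < λ ≤ 0`. -/
theorem Acoef_bounds (n : ℕ) (hn : 2 ≤ n) :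
    (∀ lam : ℝ, lam ≤ 0 → (n : ℝ) < Acoef n lam) ∧
    (∀ lam : ℝ, lam ≤ 0 →
      (Acoef n lam < 2 * (n : ℝ) + 2 ↔ -2 / Real.sqrt ((n : ℝ) + 2) < lam)) ∧
    (∀ lam : ℝ, -2 / Real.sqrt ((n : ℝ) + 2) < lam → lam ≤ 0 →
      (n : ℝ) < Acoef n lam ∧ Acoef n lam < 2 * (n : ℝ) + 2) := by
  have hn' : (2 : ℝ) ≤ n := by exact_mod_cast hn
  have h1 : ∀ lam : ℝ, lam ≤ 0 → (n : ℝ) < Acoef n lam := by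
    intro lam hl
    unfold Acoef
    have hs := Real.sq_sqrt (show (0 : ℝ) ≤ lam ^ 2 + 4 * n by positivity)
    have hs0 := Real.sqrt_nonneg (lam ^ 2 + 4 * (n : ℝ))
    set s := Real.sqrt (lam ^ 2 + 4 * (n : ℝ))
    have := mul_nonneg (neg_nonneg.2 hl) hs0
    nlinarith [sq_nonneg lam]
  have h2 : ∀ lam : ℝ, lam ≤ 0 →
      (Acoef n lam < 2 * (n : ℝ) + 2 ↔ -2 / Real.sqrt ((n : ℝ) + 2) < lam) := by
    intro lam hl
    unfold Acoef
    have hs := Real.sq_sqrt (show (0 : ℝ) ≤ lam ^ 2 + 4 * n by positivity)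
    have hs0 := Real.sqrt_nonneg (lam ^ 2 + 4 * (n : ℝ))
    have ht := Real.sq_sqrt (show (0 : ℝ) ≤ (n : ℝ) + 2 by positivity)
    have ht0 : 0 < Real.sqrt ((n : ℝ) + 2) := Real.sqrt_pos.2 (by positivity)
    rw [div_lt_iff₀ ht0]
    set s := Real.sqrt (lam ^ 2 + 4 * (n : ℝ))
    set t := Real.sqrt ((n : ℝ) + 2)
    have hms := mul_nonneg (neg_nonneg.2 hl) hs0
    have hmt := mul_nonneg (neg_nonneg.2 hl) ht0.le
    have e1 : (-lam * s) ^ 2 = lam ^ 2 * (lam ^ 2 + 4 * n) := by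
      rw [mul_pow, hs]; ring
    have e2 : (-lam * t) ^ 2 = lam ^ 2 * (n + 2) := by
      rw [mul_pow, ht]; ring
    constructor
    · intro h
      have h3 : -lam * s < 4 - lam ^ 2 := by nlinarith
      have h4 := pow_lt_pow_left₀ h3 hms two_ne_zero
      have h5 : -lam * t < 2 := by
        apply lt_of_pow_lt_pow_left₀ 2 (by norm_num)
        nlinarith
      linarith
    · intro h
      have h3 : -lam * t < 2 := by linarith
      have h4 := pow_lt_pow_left₀ h3 hmt two_ne_zero
      have h6 : lam ^ 2 * 4 ≤ lam ^ 2 * (n + 2) :=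
        mul_le_mul_of_nonneg_left (by linarith) (sq_nonneg lam)
      have h5 : -lam * s < 4 - lam ^ 2 := by
        apply lt_of_pow_lt_pow_left₀ 2 (by nlinarith)
        nlinarith
      nlinarith
  exact ⟨h1, h2, fun lam h hl => ⟨h1 lam hl, (h2 lam hl).2 h⟩⟩
end

section
/- Let n ≥ 2 be an integer, λ ≤ 0, r > 0, and let h be a real-valued function twice differentiable at r satisfying, at the point r: the equation h''/(1 + h'²) = (r − (n−1)/r)·h' − h + λ·(1 − √(1 + h'²)), together with h''(r) ≤ 0 and −1 ≤ h'(r) ≤ 0. Then h''(r) − 2r·h'(r) ≥ −2·h(r); equivalently, (d/dr)(e^{−r²} h'(r)) ≥ −2 e^{−r²} h(r) at r. -/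
open Real Set

/-- A pointwise differential inequality from the proof of Lemma 3.1: for `λ ≤ 0` and
`r > 0`, if `h` satisfies the shifted profile equation
`h''/(1+h'²) = (r - (n-1)/r) h' - h + λ(1 - √(1+h'²))` at `r` with `h''(r) ≤ 0` and
`-1 ≤ h'(r) ≤ 0`, then `h''(r) - 2 r h'(r) ≥ -2 h(r)`. -/
theorem pointwise_exp_derivative_bound
    (n : ℕ) (hn : 2 ≤ n) (lam : ℝ) (hlam : lam ≤ 0)
    (r : ℝ) (hr : 0 < r)
    (h : ℝ → ℝ)
    (hd1 : DifferentiableAt ℝ h r) (hd2 : DifferentiableAt ℝ (deriv h) r)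
    (heq : deriv (deriv h) r / (1 + (deriv h r) ^ 2) =
      (r - ((n : ℝ) - 1) / r) * deriv h r - h r
        + lam * (1 - Real.sqrt (1 + (deriv h r) ^ 2)))
    (hconc : deriv (deriv h) r ≤ 0)
    (hslope₁ : -1 ≤ deriv h r) (hslope₂ : deriv h r ≤ 0) :
    deriv (deriv h) r - 2 * r * deriv h r ≥ -2 * h r := by
  have hn' : (2 : ℝ) ≤ n := by exact_mod_cast hn
  generalize deriv (deriv h) r = q at *
  generalize deriv h r = p at *
  have hs : 1 ≤ Real.sqrt (1 + p ^ 2) := by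
    rw [Real.one_le_sqrt]
    nlinarith [sq_nonneg p]
  have h1 : 0 ≤ lam * (1 - Real.sqrt (1 + p ^ 2)) :=
    mul_nonneg_of_nonpos_of_nonpos hlam (by linarith)
  have h2 : ((n : ℝ) - 1) / r * p ≤ 0 :=
    mul_nonpos_of_nonneg_of_nonpos (div_nonneg (by linarith) hr.le) hslope₂
  have hpos : 0 < 1 + p ^ 2 := by positivity
  have h3 : q / (1 + p ^ 2) ≤ q / 2 := by
    rw [div_le_div_iff₀ hpos two_pos]
    nlinarith [mul_nonneg (neg_nonneg.2 hconc)
      (mul_nonneg (by linarith : 0 ≤ 1 - p) (by linarith : 0 ≤ 1 + p))]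
  rw [heq] at h3
  linarith
end
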